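/- arXiv:1406.7545 — 2 statements merged into one kernel-verified Lean document; each statement's English description precedes it below -/
import Mathlib

section
/- Let N ≥ 2 and δ₀ ∈ (0,1). There exists m̄₀ > 0, depending only on N and δ₀, such that for all s, t with 0 < s < t < 1 and t − s ≥ δ₀ and every m ∈ (0, m̄₀), the minimum problem min{ F_{s,t}(E) : E ⊆ ℝ^N measurable, |E| = m, P_t(E) < ∞ } admits a minimizer; that is, there exists a measurable F ⊆ ℝ^N with |F| = m, P_t(F) < ∞, and F_{s,t}(F) ≤ F_{s,t}(E) for every measurable E ⊆ ℝ^N with |E| = m and P_t(E) < ∞. -/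
open MeasureTheory ENNReal

/-- Interaction energy `∫_A ∫_B |x-y|^{-(N+α)} dy dx` in `[0,∞]`. -/
noncomputable def interEnergy (N : ℕ) (α : ℝ)
    (A B : Set (EuclideanSpace ℝ (Fin N))) : ℝ≥0∞ :=
  ∫⁻ x in A, ∫⁻ y in B, ENNReal.ofReal (‖x - y‖ ^ (-((N : ℝ) + α))) ∂volume ∂volume

/-- The fractional `α`-perimeter `P_α(E) = ∫_E ∫_{Eᶜ} |x-y|^{-(N+α)} dy dx`. -/
noncomputable def fracPer (N : ℕ) (α : ℝ) (E : Set (EuclideanSpace ℝ (Fin N))) : ℝ≥0∞ :=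
  interEnergy N α E Eᶜ

/-- The free energy `F_{s,t}(E) = (1-t) P_t(E) - s P_s(E)`. -/
noncomputable def freeEnergy (N : ℕ) (s t : ℝ) (E : Set (EuclideanSpace ℝ (Fin N))) : ℝ :=
  (1 - t) * (fracPer N t E).toReal - s * (fracPer N s E).toReal

/-- `F` is a minimizer of the free energy `F_{s,t}` among measurable sets of volume `m`
with finite `t`-perimeter. -/
def IsMinimizer (N : ℕ) (s t m : ℝ) (F : Set (EuclideanSpace ℝ (Fin N))) : Prop :=
  MeasurableSet F ∧ volume F = ENNReal.ofReal m ∧ fracPer N t F < ⊤ ∧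
    ∀ E : Set (EuclideanSpace ℝ (Fin N)), MeasurableSet E →
      volume E = ENNReal.ofReal m → fracPer N t E < ⊤ →
      freeEnergy N s t F ≤ freeEnergy N s t E

/-!
Write `P_α(E)` as the integral of `‖z‖ ^ (-(N + α))` against the measure of the part of `E` which a
translation by `z` moves out of `E`. This measure at most doubles when `z` does, so comparing a
kernel with its dilate by `2` bounds the short range part of `s P_s(E)` by a small multiple of
`(1 - t) P_t(E)`, uniformly for `t - s ≥ δ₀`. The long range part is at most a multiple of the
volume, which for small volumes is again a small multiple of `(1 - t) P_t(E)`. Hence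
`F_{s,t}(E) ≥ (1 - t) P_t(E) / 2`: minimizing sequences have bounded `t`-perimeter, and after a
translation they keep a fixed amount of volume in a fixed ball.

Rescaling both pieces of a set cut in two back to volume `m` shows that the energy is strictly
subadditive. Since a suitable ball cuts a set at vanishing cost, no volume escapes to infinity.
The `t`-perimeter bound then gives a subsequence converging almost everywhere. Up to a multiple of
the volume, `F_{s,t}` is a sum of interaction energies with nonnegative kernels, hence lower
semicontinuous along that subsequence, and the limit is a minimizer.
-/

open Filter Module Topology

section KernelEnergy

variable {G : Type*} [AddCommGroup G] [MeasurableSpace G]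

/-- The interaction energy `∫_A ∫_B k(x - y) dy dx` of a general kernel `k`; `interEnergy` is the
case where `k` is a power of the norm. -/
noncomputable def kernelEnergy (μ : Measure G) (k : G → ℝ≥0∞) (A B : Set G) : ℝ≥0∞ :=
  ∫⁻ x in A, ∫⁻ y in B, k (x - y) ∂μ ∂μ

variable {μ : Measure G} {k k' : G → ℝ≥0∞} {A A' B B' E S : Set G}

lemma kernelEnergy_mono (hk : k ≤ k') (hA : A ⊆ A') (hB : B ⊆ B') :
    kernelEnergy μ k A B ≤ kernelEnergy μ k' A' B' :=
  lintegral_mono' (Measure.restrict_mono hA le_rfl) fun _ ↦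
    lintegral_mono' (Measure.restrict_mono hB le_rfl) fun _ ↦ hk _

lemma kernelEnergy_mono_kernel (hk : k ≤ k') : kernelEnergy μ k A B ≤ kernelEnergy μ k' A B :=
  kernelEnergy_mono hk le_rfl le_rfl

lemma kernelEnergy_union_left (hA' : MeasurableSet A') (h : Disjoint A A') :
    kernelEnergy μ k (A ∪ A') B = kernelEnergy μ k A B + kernelEnergy μ k A' B :=
  lintegral_union hA' h

lemma kernelEnergy_inter_add_diff (hE : MeasurableSet E) (hS : MeasurableSet S) :
    kernelEnergy μ k (E ∩ S) B + kernelEnergy μ k (E \ S) B = kernelEnergy μ k E B := by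
  rw [← kernelEnergy_union_left (hE.diff hS) (Set.disjoint_sdiff_right.mono_left
    Set.inter_subset_right), Set.inter_union_sdiff]

section Measurable

variable [MeasurableSub₂ G] [SFinite μ]

lemma measurable_setLIntegral_kernel (hk : Measurable k) (B : Set G) :
    Measurable fun x ↦ ∫⁻ y in B, k (x - y) ∂μ :=
  (hk.comp measurable_sub).lintegral_prod_right'

lemma kernelEnergy_add (hk : Measurable k) :
    kernelEnergy μ (k + k') A B = kernelEnergy μ k A B + kernelEnergy μ k' A B := by
  unfold kernelEnergy
  rw [← lintegral_add_left (measurable_setLIntegral_kernel hk B)]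
  exact lintegral_congr fun x ↦ lintegral_add_left (by fun_prop) _

lemma kernelEnergy_smul (hk : Measurable k) (c : ℝ≥0∞) :
    kernelEnergy μ (c • k) A B = c * kernelEnergy μ k A B := by
  unfold kernelEnergy
  rw [← lintegral_const_mul c (measurable_setLIntegral_kernel hk B)]
  exact lintegral_congr fun x ↦ lintegral_const_mul c (by fun_prop)

lemma kernelEnergy_union_right (hk : Measurable k) (hB' : MeasurableSet B') (h : Disjoint B B') :
    kernelEnergy μ k A (B ∪ B') = kernelEnergy μ k A B + kernelEnergy μ k A B' := by
  unfold kernelEnergy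
  rw [← lintegral_add_left (measurable_setLIntegral_kernel hk B)]
  exact lintegral_congr fun x ↦ lintegral_union hB' h

lemma kernelEnergy_comm (hk : Measurable k) (hk_even : k.Even) :
    kernelEnergy μ k A B = kernelEnergy μ k B A := by
  unfold kernelEnergy
  rw [lintegral_lintegral_swap (by fun_prop)]
  exact lintegral_congr fun y ↦ lintegral_congr fun x ↦ by rw [← hk_even, neg_sub]

lemma kernelEnergy_compl_inter (hk : Measurable k) (hE : MeasurableSet E) (hS : MeasurableSet S) :
    kernelEnergy μ k (E ∩ S) (E ∩ S)ᶜ =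
      kernelEnergy μ k (E ∩ S) Eᶜ + kernelEnergy μ k (E ∩ S) (E \ S) := by
  have hcompl : (E ∩ S)ᶜ = Eᶜ ∪ E \ S := by rw [← Set.sdiff_inter_self_eq_sdiff]; grind
  rw [hcompl, kernelEnergy_union_right hk (hE.diff hS)
    (disjoint_compl_left.mono_right Set.sdiff_subset)]

lemma kernelEnergy_compl_diff (hk : Measurable k) (hk_even : k.Even) (hE : MeasurableSet E)
    (hS : MeasurableSet S) :
    kernelEnergy μ k (E \ S) (E \ S)ᶜ =
      kernelEnergy μ k (E \ S) Eᶜ + kernelEnergy μ k (E ∩ S) (E \ S) := by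
  rw [Set.sdiff_eq, kernelEnergy_compl_inter hk hE hS.compl, Set.sdiff_compl,
    ← Set.sdiff_eq, kernelEnergy_comm hk hk_even (A := E \ S) (B := E ∩ S)]

lemma kernelEnergy_eq_lintegral_prod (hk : Measurable k) (hA : MeasurableSet A)
    (hB : MeasurableSet B) :
    kernelEnergy μ k A B = ∫⁻ p, (A ×ˢ B).indicator (fun p ↦ k (p.1 - p.2)) p ∂(μ.prod μ) := by
  rw [lintegral_indicator (hA.prod hB), ← Measure.prod_restrict, lintegral_prod _ (by fun_prop)]
  rfl

end Measurable

section Invariant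

variable [MeasurableAdd₂ G] [MeasurableNeg G] [μ.IsAddLeftInvariant]

lemma kernelEnergy_preimage_add_right [SFinite μ] (hk : Measurable k) (hA : MeasurableSet A)
    (hB : MeasurableSet B) (v : G) :
    kernelEnergy μ k ((· + v) ⁻¹' A) ((· + v) ⁻¹' B) = kernelEnergy μ k A B := by
  have hv := measurePreserving_add_right μ v
  unfold kernelEnergy
  rw [← hv.setLIntegral_comp_preimage hA (measurable_setLIntegral_kernel hk B)]
  refine lintegral_congr fun x ↦ ?_
  rw [← hv.setLIntegral_comp_preimage hB (by fun_prop)]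
  simp only [add_sub_add_right_eq_sub]

variable [μ.IsNegInvariant]

lemma kernelEnergy_univ_right (k : G → ℝ≥0∞) (A : Set G) :
    kernelEnergy μ k A Set.univ = (∫⁻ z, k z ∂μ) * μ A := by
  simp [kernelEnergy, lintegral_sub_left_eq_self]

lemma kernelEnergy_le_lintegral_mul (k : G → ℝ≥0∞) (A B : Set G) :
    kernelEnergy μ k A B ≤ (∫⁻ z, k z ∂μ) * μ A :=
  (kernelEnergy_mono le_rfl le_rfl (Set.subset_univ B)).trans_eq (kernelEnergy_univ_right k A)

end Invariant

end KernelEnergy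

section TranslationDefect

variable {G : Type*} [AddCommGroup G] [MeasurableSpace G]

/-- The measure of the part of `E` which the translation by `-z` moves out of `E`. Integrated
against a kernel `k` it gives the energy of the interaction of `E` with `Eᶜ`. -/
noncomputable def translationDefect (μ : Measure G) (E : Set G) (z : G) : ℝ≥0∞ :=
  μ (E ∩ (· - z) ⁻¹' Eᶜ)

variable {μ : Measure G} {k : G → ℝ≥0∞} {E : Set G} [MeasurableAdd₂ G]

lemma translationDefect_add_self_le [μ.IsAddLeftInvariant] (E : Set G) (z : G) :
    translationDefect μ E (z + z) ≤ 2 * translationDefect μ E z := by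
  have hsub : E ∩ (· - (z + z)) ⁻¹' Eᶜ ⊆
      (E ∩ (· - z) ⁻¹' Eᶜ) ∪ (· + -z) ⁻¹' (E ∩ (· - z) ⁻¹' Eᶜ) := by
    rintro x ⟨hx, hxz⟩
    by_cases h : x - z ∈ E
    · refine Or.inr ⟨by simpa [← sub_eq_add_neg] using h, ?_⟩
      simpa [← sub_eq_add_neg, sub_sub] using hxz
    · exact Or.inl ⟨hx, h⟩
  calc translationDefect μ E (z + z)
      ≤ translationDefect μ E z + μ ((· + -z) ⁻¹' (E ∩ (· - z) ⁻¹' Eᶜ)) :=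
        (measure_mono hsub).trans (measure_union_le _ _)
    _ = 2 * translationDefect μ E z := by
        rw [measure_preimage_add_right, two_mul, translationDefect]

variable [MeasurableNeg G]

lemma measurable_translationDefect [SFinite μ] (hE : MeasurableSet E) :
    Measurable (translationDefect μ E) :=
  measurable_measure_prodMk_left (s := {p : G × G | p.2 ∈ E ∧ p.2 - p.1 ∈ Eᶜ})
    ((measurable_snd hE).inter ((measurable_snd.sub measurable_fst) hE.compl))

lemma kernelEnergy_compl_eq_lintegral_translationDefect [SFinite μ] [μ.IsAddLeftInvariant]
    [μ.IsNegInvariant] (hk : Measurable k) (hE : MeasurableSet E) :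
    kernelEnergy μ k E Eᶜ = ∫⁻ z, k z * translationDefect μ E z ∂μ := by
  have hind : Measurable (Eᶜ.indicator (1 : G → ℝ≥0∞)) := measurable_one.indicator hE.compl
  calc kernelEnergy μ k E Eᶜ
      = ∫⁻ x in E, ∫⁻ z, k z * Eᶜ.indicator 1 (x - z) ∂μ ∂μ := by
        refine lintegral_congr fun x ↦ ?_
        rw [← lintegral_indicator hE.compl, ← lintegral_sub_left_eq_self _ x]
        refine lintegral_congr fun z ↦ ?_
        by_cases h : x - z ∈ E <;> simp [h]
    _ = ∫⁻ z, ∫⁻ x in E, k z * Eᶜ.indicator 1 (x - z) ∂μ ∂μ :=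
        lintegral_lintegral_swap (by fun_prop)
    _ = ∫⁻ z, k z * translationDefect μ E z ∂μ := by
        refine lintegral_congr fun z ↦ ?_
        have hpre : MeasurableSet ((· - z) ⁻¹' Eᶜ) := measurable_sub_const z hE.compl
        rw [lintegral_const_mul _ (by fun_prop), translationDefect, Set.inter_comm,
          ← Measure.restrict_apply hpre, ← lintegral_indicator_one hpre]
        rfl

end TranslationDefect

section Dilation

variable {V : Type*} [NormedAddCommGroup V] [NormedSpace ℝ V] [FiniteDimensional ℝ V]
  [MeasurableSpace V] [BorelSpace V] {μ : Measure V} [μ.IsAddHaarMeasure]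
  {k v w : V → ℝ≥0∞} {E : Set V} {r : ℝ}

lemma setLIntegral_preimage_smul (hr : 0 < r) (f : V → ℝ≥0∞) (A : Set V) :
    ∫⁻ x in (r • ·) ⁻¹' A, f (r • x) ∂μ =
      ENNReal.ofReal (r ^ finrank ℝ V)⁻¹ * ∫⁻ x in A, f x ∂μ := by
  have hemb : MeasurableEmbedding (r • · : V → V) :=
    (Homeomorph.smulOfNeZero r hr.ne').measurableEmbedding
  rw [← hemb.lintegral_map, ← hemb.restrict_map, Measure.map_addHaar_smul μ hr.ne',
    Measure.restrict_smul, lintegral_smul_measure, abs_of_pos (by positivity), smul_eq_mul]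

lemma lintegral_comp_smul (hr : 0 < r) (f : V → ℝ≥0∞) :
    ∫⁻ x, f (r • x) ∂μ = ENNReal.ofReal (r ^ finrank ℝ V)⁻¹ * ∫⁻ x, f x ∂μ := by
  simpa using setLIntegral_preimage_smul hr f Set.univ

lemma kernelEnergy_comp_smul_preimage_smul (hr : 0 < r) (k : V → ℝ≥0∞) (A B : Set V) :
    kernelEnergy μ (fun z ↦ k (r • z)) ((r • ·) ⁻¹' A) ((r • ·) ⁻¹' B) =
      ENNReal.ofReal (r ^ finrank ℝ V)⁻¹ ^ 2 * kernelEnergy μ k A B := by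
  have hinner (x : V) : ∫⁻ y in (r • ·) ⁻¹' B, k (r • (x - y)) ∂μ =
      ENNReal.ofReal (r ^ finrank ℝ V)⁻¹ * ∫⁻ y in B, k (r • x - y) ∂μ := by
    simp_rw [smul_sub]
    exact setLIntegral_preimage_smul hr (fun y ↦ k (r • x - y)) B
  unfold kernelEnergy
  simp_rw [hinner]
  rw [lintegral_const_mul' _ _ ENNReal.ofReal_ne_top,
    setLIntegral_preimage_smul hr (fun x ↦ ∫⁻ y in B, k (x - y) ∂μ), sq, mul_assoc]

/-- Since `translationDefect μ E (2z) ≤ 2 * translationDefect μ E z`, the substitution `z ↦ 2z`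
bounds the `k`-energy by that of the kernel `2 ^ finrank ℝ V * 2 * k (2z)`. -/
lemma kernelEnergy_compl_le_of_dilation_le (hk : Measurable k) (hw : Measurable w)
    (hv : Measurable v) (hE : MeasurableSet E) (hfin : kernelEnergy μ k E Eᶜ ≠ ⊤)
    (h : ∀ z, ENNReal.ofReal (2 ^ finrank ℝ V) * 2 * k ((2 : ℝ) • z) + w z ≤ k z + v z) :
    kernelEnergy μ w E Eᶜ ≤ kernelEnergy μ v E Eᶜ := by
  have htwo_pow : ENNReal.ofReal (2 ^ finrank ℝ V) ≠ 0 := by simp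
  have hdil : kernelEnergy μ k E Eᶜ = ENNReal.ofReal (2 ^ finrank ℝ V) *
      ∫⁻ z, k ((2 : ℝ) • z) * translationDefect μ E ((2 : ℝ) • z) ∂μ := by
    rw [lintegral_comp_smul two_pos (fun z ↦ k z * translationDefect μ E z),
      ENNReal.ofReal_inv_of_pos (by positivity), ← mul_assoc,
      ENNReal.mul_inv_cancel htwo_pow ENNReal.ofReal_ne_top, one_mul,
      kernelEnergy_compl_eq_lintegral_translationDefect hk hE]
  refine (ENNReal.add_le_add_iff_left hfin).1 ?_
  calc kernelEnergy μ k E Eᶜ + kernelEnergy μ w E Eᶜ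
      ≤ ∫⁻ z, ENNReal.ofReal (2 ^ finrank ℝ V) * 2 * k ((2 : ℝ) • z) * translationDefect μ E z ∂μ
          + ∫⁻ z, w z * translationDefect μ E z ∂μ := by
        rw [hdil, ← lintegral_const_mul' _ _ ENNReal.ofReal_ne_top,
          kernelEnergy_compl_eq_lintegral_translationDefect hw hE]
        refine add_le_add (lintegral_mono fun z ↦ ?_) le_rfl
        rw [mul_assoc, mul_assoc, mul_left_comm 2]
        gcongr
        rw [two_smul]
        exact translationDefect_add_self_le E z
    _ ≤ ∫⁻ z, (k z + v z) * translationDefect μ E z ∂μ := by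
        rw [← lintegral_add_right _ (by exact hw.mul (measurable_translationDefect hE))]
        gcongr with z
        rw [← add_mul]
        exact mul_le_mul_left (h z) _
    _ = kernelEnergy μ k E Eᶜ + kernelEnergy μ v E Eᶜ := by
        rw [← kernelEnergy_add hk,
          kernelEnergy_compl_eq_lintegral_translationDefect (hk.add hv) hE]
        rfl

end Dilation

lemma pow_sub_one_mul_rpow {n : ℕ} (hn : 0 < n) {y : ℝ} (hy : 0 < y) (α : ℝ) :
    y ^ (n - 1) * y ^ (-(n + α)) = y ^ (-1 - α) := by
  rw [← Real.rpow_natCast, ← Real.rpow_add hy, Nat.cast_sub hn]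
  congr 1
  push_cast
  ring

section FracKernel

variable {V : Type*} [NormedAddCommGroup V] [NormedSpace ℝ V] {α s t r : ℝ}

/-- The kernel `|z| ^ (-(n + α))` of the fractional `α`-perimeter, where `n` is the dimension.
By the conventions for real powers it vanishes, rather than being infinite, at `z = 0`. -/
noncomputable def fracKernel (α : ℝ) (z : V) : ℝ≥0∞ :=
  ENNReal.ofReal (‖z‖ ^ (-(finrank ℝ V + α)))

lemma even_fracKernel (α : ℝ) : (fracKernel α : V → ℝ≥0∞).Even := fun z ↦ by
  simp [fracKernel]

lemma fracKernel_smul (hr : 0 < r) (α : ℝ) (z : V) :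
    fracKernel α (r • z) = ENNReal.ofReal (r ^ (-(finrank ℝ V + α))) * fracKernel α z := by
  rw [fracKernel, norm_smul, Real.norm_of_nonneg hr.le, Real.mul_rpow hr.le (norm_nonneg z),
    ENNReal.ofReal_mul (by positivity), fracKernel]

lemma fracKernel_sub_mul {A : ℝ} (hA : 0 ≤ A) (s t : ℝ) (z : V) :
    fracKernel t z - ENNReal.ofReal A * fracKernel s z =
      ENNReal.ofReal (‖z‖ ^ (-(finrank ℝ V + t)) - A * ‖z‖ ^ (-(finrank ℝ V + s))) := by
  rw [ENNReal.ofReal_sub _ (by positivity), ENNReal.ofReal_mul hA]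
  rfl

lemma indicator_ball_one_fracKernel_le (hs : 0 < s) (hst : s ≤ t) :
    (Metric.ball 0 1).indicator (fracKernel s : V → ℝ≥0∞) ≤ fracKernel t :=
  Set.indicator_le fun z hz ↦ ENNReal.ofReal_le_ofReal <| by
    have : (0 : ℝ) ≤ finrank ℝ V := Nat.cast_nonneg _
    rcases (norm_nonneg z).eq_or_lt with hz0 | hz0
    · rw [← hz0, Real.zero_rpow (by linarith), Real.zero_rpow (by linarith)]
    · exact Real.rpow_le_rpow_of_exponent_ge hz0 (mem_ball_zero_iff.1 hz).le (by linarith)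

variable [MeasurableSpace V] [BorelSpace V]

@[fun_prop]
lemma measurable_fracKernel (α : ℝ) : Measurable (fracKernel α : V → ℝ≥0∞) := by
  unfold fracKernel
  fun_prop

lemma measurable_indicator_ball_fracKernel (α r : ℝ) :
    Measurable ((Metric.ball 0 r).indicator (fracKernel α : V → ℝ≥0∞)) :=
  (measurable_fracKernel α).indicator measurableSet_ball

section Nontrivial

variable [FiniteDimensional ℝ V] [Nontrivial V] {μ : Measure V} [μ.IsAddHaarMeasure]
  {E : Set V}

lemma lintegral_fracKernel_compl_ball (hα : 0 < α) (hr : 0 < r) :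
    ∫⁻ z in (Metric.ball (0 : V) r)ᶜ, fracKernel α z ∂μ =
      ENNReal.ofReal (finrank ℝ V * μ.real (Metric.ball 0 1) * (r ^ (-α) / α)) := by
  set f : ℝ → ℝ := (Set.Ici r).indicator fun y ↦ y ^ (-(finrank ℝ V + α))
  have hf_nonneg (y : ℝ) : 0 ≤ f y :=
    Set.indicator_nonneg (fun y hy ↦ Real.rpow_nonneg (hr.le.trans hy) _) y
  have hind (z : V) :
      (Metric.ball 0 r)ᶜ.indicator (fracKernel α) z = ENNReal.ofReal (f ‖z‖) := by
    by_cases h : ‖z‖ < r <;> simp [f, h, fracKernel, not_le.2, not_lt.1]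
  have hradial : Set.EqOn (fun y ↦ y ^ (finrank ℝ V - 1) • f y)
      ((Set.Ici r).indicator fun y ↦ y ^ (-1 - α)) (Set.Ioi 0) := fun y hy ↦ by
    by_cases h : y ∈ Set.Ici r
    · simp only [f, Set.indicator_of_mem h, smul_eq_mul]
      exact pow_sub_one_mul_rpow finrank_pos hy α
    · simp only [f, Set.indicator_of_notMem h, smul_zero]
  have hint : Integrable (fun z : V ↦ f ‖z‖) μ := by
    rw [integrable_fun_norm_addHaar, integrableOn_congr_fun hradial measurableSet_Ioi]
    refine IntegrableOn.integrable_indicator ?_ measurableSet_Ici |>.integrableOn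
    rw [integrableOn_Ici_iff_integrableOn_Ioi]
    exact integrableOn_Ioi_rpow_of_lt (by linarith) hr
  rw [← lintegral_indicator measurableSet_ball.compl]
  simp_rw [hind]
  rw [← ofReal_integral_eq_lintegral_ofReal hint (.of_forall fun z ↦ hf_nonneg _),
    integral_fun_norm_addHaar, setIntegral_congr_fun measurableSet_Ioi hradial,
    setIntegral_indicator measurableSet_Ici, Set.inter_eq_right.2 (Set.Ici_subset_Ioi.2 hr),
    integral_Ici_eq_integral_Ioi, integral_Ioi_rpow_of_lt (by linarith) hr,
    show -1 - α + 1 = -α by ring, neg_div_neg_eq, nsmul_eq_mul, smul_eq_mul, mul_assoc]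

lemma lintegral_norm_mul_fracKernel_ball_lt_top (hα : α < 1) (r : ℝ) :
    ∫⁻ z in Metric.ball (0 : V) r, ENNReal.ofReal ‖z‖ * fracKernel α z ∂μ < ⊤ := by
  have hradial : Set.EqOn (fun y ↦ y ^ (finrank ℝ V - 1) • (y * y ^ (-(finrank ℝ V + α))))
      (fun y ↦ y ^ (-α)) (Set.Ioo 0 r) := fun y hy ↦ by
    dsimp only
    rw [smul_eq_mul, mul_left_comm, pow_sub_one_mul_rpow finrank_pos hy.1, sub_eq_add_neg,
      Real.rpow_add hy.1, Real.rpow_neg_one, mul_inv_cancel_left₀ hy.1.ne']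
  have hint : IntegrableOn (fun z : V ↦ ‖z‖ * ‖z‖ ^ (-(finrank ℝ V + α))) (Metric.ball 0 r) μ := by
    rw [integrableOn_fun_norm_addHaar μ (f := fun y ↦ y * y ^ (-(finrank ℝ V + α))),
      integrableOn_congr_fun hradial measurableSet_Ioo]
    rcases lt_or_ge 0 r with hr | hr
    · exact (intervalIntegral.integrableOn_Ioo_rpow_iff hr).2 (by linarith)
    · rw [Set.Ioo_eq_empty hr.not_gt]
      exact integrableOn_empty
  refine lt_of_eq_of_lt (lintegral_congr fun z ↦ ?_) hint.lintegral_lt_top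
  rw [fracKernel, ENNReal.ofReal_mul (norm_nonneg z)]

lemma kernelEnergy_fracKernel_le (hα : 0 < α) (hr : 0 < r) (A B : Set V) :
    kernelEnergy μ (fracKernel α) A B ≤
      kernelEnergy μ ((Metric.ball 0 r).indicator (fracKernel α)) A B +
        ENNReal.ofReal (finrank ℝ V * μ.real (Metric.ball 0 1) * (r ^ (-α) / α)) * μ A := by
  conv_lhs => rw [← Set.indicator_self_add_compl (Metric.ball 0 r) (fracKernel α)]
  rw [kernelEnergy_add (measurable_indicator_ball_fracKernel α r),
    ← lintegral_fracKernel_compl_ball hα hr, ← lintegral_indicator measurableSet_ball.compl]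
  gcongr
  exact kernelEnergy_le_lintegral_mul _ A B

lemma kernelEnergy_fracKernel_lt_top_of_le (hs : 0 < s) (hst : s ≤ t) (hE : μ E ≠ ⊤)
    (hfin : kernelEnergy μ (fracKernel t) E Eᶜ < ⊤) :
    kernelEnergy μ (fracKernel s) E Eᶜ < ⊤ := by
  refine (kernelEnergy_fracKernel_le hs one_pos E Eᶜ).trans_lt (ENNReal.add_lt_top.2 ⟨?_, ?_⟩)
  · exact (kernelEnergy_mono_kernel (indicator_ball_one_fracKernel_le hs hst)).trans_lt hfin
  · exact ENNReal.mul_lt_top ENNReal.ofReal_lt_top hE.lt_top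

end Nontrivial

section Ball

variable [FiniteDimensional ℝ V] {μ : Measure V} [μ.IsAddHaarMeasure]

lemma translationDefect_ball_one_le {z : V} (hz : ‖z‖ < 1) :
    translationDefect μ (Metric.ball 0 1) z ≤
      ENNReal.ofReal (finrank ℝ V * ‖z‖) * μ (Metric.ball 0 1) := by
  have hsub : Metric.ball 0 1 ∩ (· - z) ⁻¹' (Metric.ball 0 1)ᶜ ⊆
      Metric.ball 0 1 \ Metric.ball 0 (1 - ‖z‖) := fun x ⟨hx, hxz⟩ ↦ by
    simp only [Set.mem_preimage, Set.mem_compl_iff, Set.mem_sdiff, mem_ball_zero_iff,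
      not_lt] at hx hxz ⊢
    exact ⟨hx, by linarith [norm_sub_le x z]⟩
  have hbernoulli : 1 - (1 - ‖z‖) ^ finrank ℝ V ≤ finrank ℝ V * ‖z‖ := by
    have := one_add_mul_le_pow (a := -‖z‖) (by linarith) (finrank ℝ V)
    rw [← sub_eq_add_neg] at this
    linarith
  refine (measure_mono hsub).trans ?_
  rw [measure_sdiff (Metric.ball_subset_ball (by simp)) measurableSet_ball.nullMeasurableSet
    measure_ball_lt_top.ne, Measure.addHaar_ball_of_pos μ 0 (sub_pos.2 hz)]
  calc μ (Metric.ball 0 1) - ENNReal.ofReal ((1 - ‖z‖) ^ finrank ℝ V) * μ (Metric.ball 0 1)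
      = ENNReal.ofReal (1 - (1 - ‖z‖) ^ finrank ℝ V) * μ (Metric.ball 0 1) := by
        rw [ENNReal.ofReal_sub _ (pow_nonneg (sub_nonneg.2 hz.le) _), ENNReal.ofReal_one,
          ENNReal.sub_mul fun _ _ ↦ measure_ball_lt_top.ne, one_mul]
    _ ≤ _ := by gcongr

lemma kernelEnergy_fracKernel_ball_lt_top [Nontrivial V] (hα₀ : 0 < α) (hα₁ : α < 1) :
    kernelEnergy μ (fracKernel α) (Metric.ball 0 1) (Metric.ball 0 1)ᶜ < ⊤ := by
  refine (kernelEnergy_fracKernel_le hα₀ one_pos _ _).trans_lt (ENNReal.add_lt_top.2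
    ⟨?_, ENNReal.mul_lt_top ENNReal.ofReal_lt_top measure_ball_lt_top⟩)
  rw [kernelEnergy_compl_eq_lintegral_translationDefect
    (measurable_indicator_ball_fracKernel α 1) measurableSet_ball]
  calc ∫⁻ z, (Metric.ball 0 1).indicator (fracKernel α) z *
        translationDefect μ (Metric.ball 0 1) z ∂μ
      ≤ ∫⁻ z, ENNReal.ofReal (finrank ℝ V) * μ (Metric.ball 0 1) *
          (Metric.ball 0 1).indicator (fun z ↦ ENNReal.ofReal ‖z‖ * fracKernel α z) z ∂μ := by
        refine lintegral_mono fun z ↦ ?_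
        by_cases hz : z ∈ Metric.ball 0 1
        · simp only [Set.indicator_of_mem hz]
          grw [translationDefect_ball_one_le (mem_ball_zero_iff.1 hz),
            ENNReal.ofReal_mul (Nat.cast_nonneg _)]
          exact le_of_eq (by ring)
        · simp [hz]
    _ < ⊤ := by
        rw [lintegral_const_mul' _ _ (by finiteness), lintegral_indicator measurableSet_ball]
        exact ENNReal.mul_lt_top (by finiteness) (lintegral_norm_mul_fracKernel_ball_lt_top hα₁ 1)

end Ball

end FracKernel

section SmallVolume

lemma two_pow_mul_two_mul_rpow (n : ℕ) (β : ℝ) {x : ℝ} (hx : 0 ≤ x) :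
    2 ^ n * 2 * (2 * x) ^ (-(n + β)) = 2 ^ (1 - β) * x ^ (-(n + β)) := by
  rw [Real.mul_rpow two_pos.le hx, ← mul_assoc, ← pow_succ, ← Real.rpow_natCast,
    ← Real.rpow_add two_pos]
  congr 2
  push_cast
  ring

lemma one_add_half_mul_le_two_rpow {x : ℝ} (hx : 0 ≤ x) : 1 + x / 2 ≤ 2 ^ x := by
  rw [Real.rpow_def_of_pos two_pos]
  nlinarith [Real.add_one_le_exp (Real.log 2 * x), Real.log_two_gt_d9]

lemma mul_rpow_le_rpow_of_lt {n : ℕ} {s t r x : ℝ} (hn : 0 < n) (hs : 0 ≤ s) (hst : s ≤ t)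
    (hx : 0 ≤ x) (hxr : x < r) : r ^ (s - t) * x ^ (-(n + s)) ≤ x ^ (-(n + t)) := by
  have hn' : (0 : ℝ) < n := Nat.cast_pos.2 hn
  rcases hx.eq_or_lt with rfl | hx
  · rw [Real.zero_rpow (by linarith), Real.zero_rpow (by linarith), mul_zero]
  · calc r ^ (s - t) * x ^ (-(n + s)) ≤ x ^ (s - t) * x ^ (-(n + s)) := by
          gcongr ?_ * _
          exact Real.rpow_le_rpow_of_nonpos hx hxr.le (by linarith)
      _ = x ^ (-(n + t)) := by
          rw [← Real.rpow_add hx]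
          congr 1
          ring

lemma rpow_le_mul_rpow_of_le (n : ℕ) {s t r x : ℝ} (hst : s ≤ t) (hr : 0 < r) (hrx : r ≤ x) :
    x ^ (-(n + t)) ≤ r ^ (s - t) * x ^ (-(n + s)) :=
  have hx := hr.trans_le hrx
  calc x ^ (-(n + t)) = x ^ (s - t) * x ^ (-(n + s)) := by
        rw [← Real.rpow_add hx]
        congr 1
        ring
    _ ≤ r ^ (s - t) * x ^ (-(n + s)) := by
        gcongr ?_ * _
        exact Real.rpow_le_rpow_of_nonpos hr hrx (by linarith)

/-- The only loss in dilating `x ^ (-(n + t)) - A * x ^ (-(n + s))` by `2` comes from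
`2 ^ (1 - t) ≤ 1 + (1 - t)`, and the gain from `1 + (1 - s) / 2 ≤ 2 ^ (1 - s)`. -/
lemma two_pow_mul_rpow_sub_add_le (n : ℕ) {s t A x : ℝ} (hs : s ≤ 1) (ht₀ : 0 ≤ t) (ht₁ : t ≤ 1)
    (hA : 0 ≤ A) (hx : 0 ≤ x) :
    2 ^ n * 2 * ((2 * x) ^ (-(n + t)) - A * (2 * x) ^ (-(n + s))) +
        (1 - s) / 2 * A * x ^ (-(n + s)) ≤
      x ^ (-(n + t)) - A * x ^ (-(n + s)) + (1 - t) * x ^ (-(n + t)) := by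
  have hloss : (2 : ℝ) ^ (1 - t) ≤ 1 + (1 - t) := by
    have := rpow_one_add_le_one_add_mul_self (s := 1) (p := 1 - t) (by norm_num)
      (sub_nonneg.2 ht₁) (by linarith)
    norm_num at this
    linarith
  have hgain := one_add_half_mul_le_two_rpow (sub_nonneg.2 hs)
  rw [mul_sub, mul_left_comm _ A, two_pow_mul_two_mul_rpow n t hx, two_pow_mul_two_mul_rpow n s hx]
  have hxt : 0 ≤ x ^ (-(n + t)) := by positivity
  have hxs : 0 ≤ A * x ^ (-(n + s)) := by positivity
  nlinarith [mul_le_mul_of_nonneg_right hloss hxt, mul_le_mul_of_nonneg_right hgain hxs]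

lemma exists_mem_Ioc_le_rpow_neg {δ : ℝ} (hδ : 0 < δ) (M : ℝ) :
    ∃ ρ ∈ Set.Ioc (0 : ℝ) 1, M ≤ ρ ^ (-δ) := by
  have hpow : Tendsto (fun ρ : ℝ ↦ ρ ^ (-δ)) (𝓝[>] 0) atTop :=
    tendsto_rpow_neg_nhdsGT_zero (neg_lt_zero.2 hδ)
  exact (Eventually.and (Ioc_mem_nhdsGT one_pos) (hpow.eventually_ge_atTop M)).exists

variable {V : Type*} [NormedAddCommGroup V] [NormedSpace ℝ V] [FiniteDimensional ℝ V]
  {s t r α : ℝ}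

lemma dilation_fracKernel_sub_le [Nontrivial V] (hs : 0 ≤ s) (hst : s ≤ t) (ht : t ≤ 1)
    (hr : 0 < r) (z : V) :
    ENNReal.ofReal (2 ^ finrank ℝ V) * 2 *
          (fracKernel t ((2 : ℝ) • z) - ENNReal.ofReal (r ^ (s - t)) * fracKernel s ((2 : ℝ) • z)) +
        ENNReal.ofReal ((1 - s) / 2 * r ^ (s - t)) *
          (Metric.ball 0 (r / 2)).indicator (fracKernel s) z ≤
      (fracKernel t z - ENNReal.ofReal (r ^ (s - t)) * fracKernel s z) +
        ENNReal.ofReal (1 - t) * fracKernel t z := by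
  have hnorm : ‖(2 : ℝ) • z‖ = 2 * ‖z‖ := by simp [norm_smul]
  rw [fracKernel_sub_mul (by positivity), fracKernel_sub_mul (by positivity), hnorm]
  have hn : 0 < finrank ℝ V := finrank_pos
  by_cases hz : ‖z‖ < r / 2
  · have hnonneg := mul_rpow_le_rpow_of_lt hn hs hst
      (by positivity : 0 ≤ 2 * ‖z‖) (by linarith : 2 * ‖z‖ < r)
    simp only [Set.indicator_of_mem (mem_ball_zero_iff.2 hz), fracKernel]
    rw [show (2 : ℝ≥0∞) = ENNReal.ofReal 2 by simp,
      ← ENNReal.ofReal_mul (by positivity), ← ENNReal.ofReal_mul (by positivity),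
      ← ENNReal.ofReal_mul (mul_nonneg (by linarith) (by positivity)),
      ← ENNReal.ofReal_mul (by linarith),
      ← ENNReal.ofReal_add (mul_nonneg (by positivity) (sub_nonneg.2 hnonneg))
        (mul_nonneg (mul_nonneg (by linarith) (by positivity)) (by positivity))]
    exact (ENNReal.ofReal_le_ofReal (two_pow_mul_rpow_sub_add_le _ (hst.trans ht) (hs.trans hst)
      ht (by positivity) (norm_nonneg z))).trans ENNReal.ofReal_add_le
  · have hnonpos := rpow_le_mul_rpow_of_le (finrank ℝ V) hst hr
      (by linarith : r ≤ 2 * ‖z‖)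
    rw [ENNReal.ofReal_of_nonpos (sub_nonpos.2 hnonpos)]
    simp [hz]

variable [MeasurableSpace V] [BorelSpace V] {μ : Measure V} [μ.IsAddHaarMeasure] {E : Set V}

lemma mul_measure_le_kernelEnergy_indicator_ball (hE : MeasurableSet E) (hα : 0 ≤ α) (hr : 0 < r)
    (hhalf : ∀ x, μ (E ∩ Metric.ball x r) ≤ μ (Metric.ball 0 r) / 2) :
    ENNReal.ofReal (r ^ (-α)) * (μ (Metric.ball 0 1) / 2) * μ E ≤
      kernelEnergy μ ((Metric.ball 0 r).indicator (fracKernel α)) E Eᶜ := by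
  rw [kernelEnergy, ← setLIntegral_const]
  refine setLIntegral_mono' hE fun x hx ↦ ?_
  have hoverlap : μ (Metric.ball 0 r) / 2 ≤ μ (Metric.ball x r \ E) := by
    refine (ENNReal.add_le_add_iff_left (a := μ (Metric.ball 0 r) / 2)
      (ENNReal.div_ne_top measure_ball_lt_top.ne two_ne_zero)).1 ?_
    calc μ (Metric.ball 0 r) / 2 + μ (Metric.ball 0 r) / 2
        = μ (E ∩ Metric.ball x r) + μ (Metric.ball x r \ E) := by
          rw [ENNReal.add_halves, ← Measure.addHaar_ball_center μ x, Set.inter_comm,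
            measure_inter_add_sdiff _ hE]
      _ ≤ _ := by
          gcongr
          exact hhalf x
  have hkernel : ∀ y ∈ Metric.ball x r \ E, ENNReal.ofReal (r ^ (-(finrank ℝ V + α))) ≤
      (Metric.ball 0 r).indicator (fracKernel α) (x - y) := fun y ⟨hy, hyE⟩ ↦ by
    have hlt : ‖x - y‖ < r := by rwa [mem_ball_iff_norm'] at hy
    have hpos : 0 < ‖x - y‖ := norm_sub_pos_iff.2 fun h ↦ hyE (h ▸ hx)
    rw [Set.indicator_of_mem (by simpa using hlt)]
    exact ENNReal.ofReal_le_ofReal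
      (Real.rpow_le_rpow_of_nonpos hpos hlt.le (neg_nonpos.2 (by positivity)))
  calc ENNReal.ofReal (r ^ (-α)) * (μ (Metric.ball 0 1) / 2)
      = ENNReal.ofReal (r ^ (-(finrank ℝ V + α))) * (μ (Metric.ball 0 r) / 2) := by
        rw [Measure.addHaar_ball_of_pos μ 0 hr, mul_div_assoc, ← mul_assoc,
          ← ENNReal.ofReal_mul (by positivity), ← Real.rpow_natCast, ← Real.rpow_add hr]
        congr 3
        ring
    _ ≤ ∫⁻ _ in Metric.ball x r \ E, ENNReal.ofReal (r ^ (-(finrank ℝ V + α))) ∂μ := by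
        rw [setLIntegral_const]
        gcongr
    _ ≤ ∫⁻ y in Metric.ball x r \ E, (Metric.ball 0 r).indicator (fracKernel α) (x - y) ∂μ :=
        setLIntegral_mono' (measurableSet_ball.diff hE) hkernel
    _ ≤ _ := lintegral_mono_set fun y hy ↦ hy.2

variable [Nontrivial V]

lemma kernelEnergy_indicator_ball_fracKernel_le (hE : MeasurableSet E) (hs : 0 ≤ s) (hst : s ≤ t)
    (ht : t ≤ 1) (hr : 0 < r) (hfin : kernelEnergy μ (fracKernel t) E Eᶜ ≠ ⊤) :
    ENNReal.ofReal ((1 - s) / 4 * r ^ (s - t)) *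
        kernelEnergy μ ((Metric.ball 0 r).indicator (fracKernel s)) E Eᶜ ≤
      ENNReal.ofReal (1 - t) * kernelEnergy μ (fracKernel t) E Eᶜ := by
  have hnear := measurable_indicator_ball_fracKernel (V := V) s r
  have hcoeff : (1 - s) / 4 * r ^ (s - t) ≤ (1 - s) / 2 * (2 * r) ^ (s - t) := by
    have htwo : (2 : ℝ)⁻¹ ≤ 2 ^ (s - t) := by
      rw [← Real.rpow_neg_one]
      exact Real.rpow_le_rpow_of_exponent_le one_le_two (by linarith)
    rw [Real.mul_rpow two_pos.le hr.le]
    calc (1 - s) / 4 * r ^ (s - t) = (1 - s) / 2 * (2⁻¹ * r ^ (s - t)) := by ring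
      _ ≤ (1 - s) / 2 * (2 ^ (s - t) * r ^ (s - t)) := by
        gcongr
        linarith
  grw [hcoeff, ← kernelEnergy_smul hnear, ← kernelEnergy_smul (measurable_fracKernel t)]
  refine kernelEnergy_compl_le_of_dilation_le
    (k := fun z ↦ fracKernel t z - ENNReal.ofReal ((2 * r) ^ (s - t)) * fracKernel s z)
    (by fun_prop)
    (hnear.const_smul _) ((measurable_fracKernel t).const_smul _) hE
    (ne_top_of_le_ne_top hfin (kernelEnergy_mono_kernel fun z ↦ tsub_le_self)) fun z ↦ ?_
  simpa only [mul_div_cancel_left₀ r two_ne_zero, Pi.smul_apply, smul_eq_mul] using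
    dilation_fracKernel_sub_le hs hst ht (mul_pos two_pos hr) z

lemma mul_measure_le_mul_kernelEnergy_fracKernel (hE : MeasurableSet E) (ht₀ : 0 ≤ t)
    (ht₁ : t ≤ 1) (hr : 0 < r) (hfin : kernelEnergy μ (fracKernel t) E Eᶜ ≠ ⊤)
    (hhalf : ∀ x, μ (E ∩ Metric.ball x r) ≤ μ (Metric.ball 0 r) / 2) :
    ENNReal.ofReal (r ^ (-t) / 8 * μ.real (Metric.ball 0 1)) * μ E ≤
      ENNReal.ofReal (1 - t) * kernelEnergy μ (fracKernel t) E Eᶜ := by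
  have hnear := mul_measure_le_kernelEnergy_indicator_ball hE le_rfl hr hhalf
  rw [neg_zero, Real.rpow_zero, ENNReal.ofReal_one, one_mul] at hnear
  refine le_trans ?_ (kernelEnergy_indicator_ball_fracKernel_le hE le_rfl ht₀ ht₁ hr hfin)
  grw [← hnear]
  rw [← mul_assoc, ← ofReal_measureReal measure_ball_lt_top.ne, ENNReal.div_eq_inv_mul,
    show (2⁻¹ : ℝ≥0∞) = ENNReal.ofReal 2⁻¹ by simp, ← ENNReal.ofReal_mul (by norm_num),
    ← ENNReal.ofReal_mul (by positivity)]
  refine le_of_eq ?_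
  congr 2
  rw [sub_zero, zero_sub]
  ring

lemma mul_kernelEnergy_fracKernel_le (hs₀ : 0 < s) (hs₁ : s ≤ 1) (hr : r ∈ Set.Ioc 0 1)
    (A B : Set V) :
    ENNReal.ofReal s * kernelEnergy μ (fracKernel s) A B ≤
      kernelEnergy μ ((Metric.ball 0 r).indicator (fracKernel s)) A B +
        ENNReal.ofReal (finrank ℝ V * μ.real (Metric.ball 0 1) / r) * μ A := by
  have hnear : ENNReal.ofReal s ≤ 1 := by simpa using hs₁
  have hfar : s * (finrank ℝ V * μ.real (Metric.ball 0 1) * (r ^ (-s) / s)) ≤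
      finrank ℝ V * μ.real (Metric.ball 0 1) / r :=
    calc _ = finrank ℝ V * μ.real (Metric.ball 0 1) * r ^ (-s) := by field_simp
      _ ≤ finrank ℝ V * μ.real (Metric.ball 0 1) * r⁻¹ := by
        gcongr
        rw [← Real.rpow_neg_one]
        exact Real.rpow_le_rpow_of_exponent_ge hr.1 hr.2 (by linarith)
  grw [kernelEnergy_fracKernel_le hs₀ hr.1 A B, mul_add, ← mul_assoc, ← ENNReal.ofReal_mul hs₀.le,
    hfar, hnear, one_mul]

variable (μ) in
lemma exists_mul_measure_le_of_measure_le {δ : ℝ} (hδ : 0 < δ) (c : ℝ) :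
    ∃ m₀ > 0, ∀ t ∈ Set.Icc δ 1, ∀ E, MeasurableSet E → μ E ≤ ENNReal.ofReal m₀ →
      kernelEnergy μ (fracKernel t) E Eᶜ < ⊤ →
      ENNReal.ofReal c * μ E ≤ ENNReal.ofReal (1 - t) * kernelEnergy μ (fracKernel t) E Eᶜ := by
  have hball : 0 < μ.real (Metric.ball 0 1) :=
    ENNReal.toReal_pos (Metric.measure_ball_pos μ 0 one_pos).ne' measure_ball_lt_top.ne
  obtain ⟨r, ⟨hr₀, hr₁⟩, hr⟩ := exists_mem_Ioc_le_rpow_neg hδ (8 * c / μ.real (Metric.ball 0 1))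
  refine ⟨μ.real (Metric.ball 0 r) / 2, half_pos (ENNReal.toReal_pos
    (Metric.measure_ball_pos μ 0 hr₀).ne' measure_ball_lt_top.ne), ?_⟩
  intro t ht E hE hvol hfin
  have hhalf (x : V) : μ (E ∩ Metric.ball x r) ≤ μ (Metric.ball 0 r) / 2 := by
    refine (measure_mono Set.inter_subset_left).trans (hvol.trans_eq ?_)
    rw [ENNReal.ofReal_div_of_pos two_pos, ofReal_measureReal measure_ball_lt_top.ne,
      ENNReal.ofReal_ofNat]
  refine le_trans ?_ (mul_measure_le_mul_kernelEnergy_fracKernel hE (hδ.le.trans ht.1) ht.2 hr₀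
    hfin.ne hhalf)
  gcongr
  calc c = 8 * c / μ.real (Metric.ball 0 1) / 8 * μ.real (Metric.ball 0 1) := by field_simp
    _ ≤ r ^ (-t) / 8 * μ.real (Metric.ball 0 1) := by
      gcongr
      exact hr.trans (Real.rpow_le_rpow_of_exponent_ge hr₀ hr₁ (neg_le_neg ht.1))

variable (μ) in
lemma exists_mul_kernelEnergy_fracKernel_le_quarter_add {δ : ℝ} (hδ : 0 < δ) :
    ∃ C > 0, ∀ s t, 0 < s → t ≤ 1 → δ ≤ t - s → ∀ E, MeasurableSet E →
      kernelEnergy μ (fracKernel t) E Eᶜ < ⊤ →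
      4 * (ENNReal.ofReal s * kernelEnergy μ (fracKernel s) E Eᶜ) ≤
        ENNReal.ofReal (1 - t) * kernelEnergy μ (fracKernel t) E Eᶜ + ENNReal.ofReal C * μ E := by
  obtain ⟨ρ, ⟨hρ₀, hρ₁⟩, hρ⟩ := exists_mem_Ioc_le_rpow_neg hδ (16 / δ)
  have hball : 0 < μ.real (Metric.ball 0 1) :=
    ENNReal.toReal_pos (Metric.measure_ball_pos μ 0 one_pos).ne' measure_ball_lt_top.ne
  have hn : 0 < finrank ℝ V := finrank_pos
  refine ⟨4 * (finrank ℝ V * μ.real (Metric.ball 0 1) / ρ), by positivity, ?_⟩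
  intro s t hs ht hst E hE hfin
  have hcoeff : 4 ≤ (1 - s) / 4 * ρ ^ (s - t) :=
    calc (4 : ℝ) = δ / 4 * (16 / δ) := by field_simp; norm_num
      _ ≤ (1 - s) / 4 * ρ ^ (s - t) := by
        gcongr
        · linarith
        · linarith
        · exact hρ.trans (Real.rpow_le_rpow_of_exponent_ge hρ₀ hρ₁ (by linarith))
  grw [mul_kernelEnergy_fracKernel_le hs (by linarith) ⟨hρ₀, hρ₁⟩,
    ← kernelEnergy_indicator_ball_fracKernel_le hE hs.le (by linarith) ht hρ₀ hfin.ne, ← hcoeff]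
  rw [mul_add, ENNReal.ofReal_mul zero_le_four, ENNReal.ofReal_ofNat, mul_assoc]

variable (μ) in
lemma exists_mul_kernelEnergy_fracKernel_le_half {δ : ℝ} (hδ : 0 < δ) :
    ∃ m₀ > 0, ∃ c > 0, ∀ s t, 0 < s → t ≤ 1 → δ ≤ t - s → ∀ E, MeasurableSet E →
      μ E ≤ ENNReal.ofReal m₀ → kernelEnergy μ (fracKernel t) E Eᶜ < ⊤ →
      2 * (ENNReal.ofReal s * kernelEnergy μ (fracKernel s) E Eᶜ) ≤
          ENNReal.ofReal (1 - t) * kernelEnergy μ (fracKernel t) E Eᶜ ∧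
        ENNReal.ofReal c * μ E ≤ ENNReal.ofReal (1 - t) * kernelEnergy μ (fracKernel t) E Eᶜ := by
  obtain ⟨C, hC, hquarter⟩ := exists_mul_kernelEnergy_fracKernel_le_quarter_add μ hδ
  obtain ⟨m₀, hm₀, hvol⟩ := exists_mul_measure_le_of_measure_le μ hδ C
  refine ⟨m₀, hm₀, C, hC, fun s t hs ht hst E hE hE_le hfin ↦ ?_⟩
  have hC_le := hvol t ⟨by linarith, ht⟩ E hE hE_le hfin
  refine ⟨(ENNReal.mul_le_mul_iff_right two_ne_zero ENNReal.ofNat_ne_top).1 ?_, hC_le⟩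
  calc 2 * (2 * (ENNReal.ofReal s * kernelEnergy μ (fracKernel s) E Eᶜ))
      = 4 * (ENNReal.ofReal s * kernelEnergy μ (fracKernel s) E Eᶜ) := by ring
    _ ≤ _ := hquarter s t hs ht hst E hE hfin
    _ ≤ 2 * (ENNReal.ofReal (1 - t) * kernelEnergy μ (fracKernel t) E Eᶜ) := by
      rw [two_mul]
      gcongr

end SmallVolume

lemma liminf_add_liminf_le (u v : ℕ → ℝ≥0∞) :
    liminf u atTop + liminf v atTop ≤ liminf (u + v) atTop := by
  have hmono (w : ℕ → ℝ≥0∞) : Monotone fun n ↦ ⨅ i ≥ n, w i := fun _ _ hmn ↦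
    biInf_mono fun _ hi ↦ hmn.trans hi
  simp only [liminf_eq_iSup_iInf_of_nat]
  rw [ENNReal.iSup_add_iSup_of_monotone (hmono u) (hmono v)]
  exact iSup_mono fun n ↦ le_iInf₂ fun i hi ↦ add_le_add (iInf₂_le i hi) (iInf₂_le i hi)

section RenormEnergy

variable {G : Type*} [AddCommGroup G] [MeasurableSpace G]

/-- The difference `kernelEnergy μ p E Eᶜ - kernelEnergy μ q E Eᶜ` shifted by the volume term
`(∫ (q - p)) * μ E`: this makes it a sum of two integrals of nonnegative functions, to which
Fatou's lemma applies. The differences of kernels are truncated at `0`. -/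
noncomputable def renormEnergy (μ : Measure G) (p q : G → ℝ≥0∞) (E : Set G) : ℝ≥0∞ :=
  kernelEnergy μ (p - q) E Eᶜ + kernelEnergy μ (q - p) E E

variable [MeasurableSub₂ G] {μ : Measure G} [SFinite μ] {k p q : G → ℝ≥0∞} {E S : Set G}

lemma kernelEnergy_add_lintegral_mul_eq [MeasurableAdd₂ G] [MeasurableNeg G]
    [μ.IsAddLeftInvariant] [μ.IsNegInvariant] (hp : Measurable p) (hq : Measurable q)
    (hE : MeasurableSet E) :
    kernelEnergy μ p E Eᶜ + (∫⁻ z, (q - p) z ∂μ) * μ E =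
      kernelEnergy μ q E Eᶜ + renormEnergy μ p q E := by
  have hmax : p + (q - p) = q + (p - q) := by
    ext z
    simp only [Pi.add_apply, Pi.sub_apply, add_tsub_eq_max, max_comm]
  rw [← kernelEnergy_univ_right, ← Set.compl_union_self E,
    kernelEnergy_union_right (hq.sub hp) hE disjoint_compl_left, renormEnergy, ← add_assoc,
    ← add_assoc, ← kernelEnergy_add hp, ← kernelEnergy_add hq, hmax]

lemma toReal_renormEnergy [MeasurableAdd₂ G] [MeasurableNeg G] [μ.IsAddLeftInvariant]
    [μ.IsNegInvariant] (hp : Measurable p) (hq : Measurable q) (hE : MeasurableSet E)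
    (hpE : kernelEnergy μ p E Eᶜ ≠ ⊤) (hqE : kernelEnergy μ q E Eᶜ ≠ ⊤)
    (hint : ∫⁻ z, (q - p) z ∂μ ≠ ⊤) (hμE : μ E ≠ ⊤) :
    renormEnergy μ p q E ≠ ⊤ ∧
      (renormEnergy μ p q E).toReal = (kernelEnergy μ p E Eᶜ).toReal -
        (kernelEnergy μ q E Eᶜ).toReal + (∫⁻ z, (q - p) z ∂μ).toReal * μ.real E := by
  have heq := kernelEnergy_add_lintegral_mul_eq (μ := μ) hp hq hE
  have hvol := ENNReal.mul_ne_top hint hμE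
  have hne : renormEnergy μ p q E ≠ ⊤ :=
    ne_top_of_le_ne_top (ENNReal.add_ne_top.2 ⟨hpE, hvol⟩) (heq ▸ le_add_self)
  have hreal := congrArg ENNReal.toReal heq
  rw [ENNReal.toReal_add hpE hvol, ENNReal.toReal_add hqE hne, ENNReal.toReal_mul] at hreal
  refine ⟨hne, ?_⟩
  rw [Measure.real]
  linarith

lemma renormEnergy_inter_add_diff_le (hp : Measurable p) (hq : Measurable q) (hp_even : p.Even)
    (hq_even : q.Even) (hE : MeasurableSet E) (hS : MeasurableSet S) :
    renormEnergy μ p q (E ∩ S) + renormEnergy μ p q (E \ S) ≤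
      renormEnergy μ p q E + 2 * kernelEnergy μ (p - q) (E ∩ S) (E \ S) := by
  have heven : (p - q).Even := fun z ↦ by rw [Pi.sub_apply, Pi.sub_apply, hp_even, hq_even]
  have hself : kernelEnergy μ (q - p) (E ∩ S) (E ∩ S) + kernelEnergy μ (q - p) (E \ S) (E \ S) ≤
      kernelEnergy μ (q - p) E E := by
    rw [← kernelEnergy_inter_add_diff hE hS]
    exact add_le_add (kernelEnergy_mono le_rfl le_rfl Set.inter_subset_left)
      (kernelEnergy_mono le_rfl le_rfl Set.sdiff_subset)
  unfold renormEnergy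
  rw [kernelEnergy_compl_inter (hp.sub hq) hE hS, kernelEnergy_compl_diff (hp.sub hq) heven hE hS,
    ← kernelEnergy_inter_add_diff hE hS (B := Eᶜ), two_mul]
  grw [← hself]
  exact le_of_eq (by ring)

variable {A B : Set G} {a b e : ℕ → Set G}

lemma kernelEnergy_le_liminf (hk : Measurable k) (hA : MeasurableSet A) (hB : MeasurableSet B)
    (ha : ∀ n, MeasurableSet (a n)) (hb : ∀ n, MeasurableSet (b n))
    (haA : ∀ᵐ x ∂μ, ∀ᶠ n in atTop, x ∈ a n ↔ x ∈ A)
    (hbB : ∀ᵐ x ∂μ, ∀ᶠ n in atTop, x ∈ b n ↔ x ∈ B) :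
    kernelEnergy μ k A B ≤ liminf (fun n ↦ kernelEnergy μ k (a n) (b n)) atTop := by
  simp_rw [kernelEnergy_eq_lintegral_prod hk hA hB,
    fun n ↦ kernelEnergy_eq_lintegral_prod (μ := μ) hk (ha n) (hb n)]
  refine le_trans (lintegral_mono_ae ?_) (lintegral_liminf_le fun n ↦
    (hk.comp measurable_sub).indicator ((ha n).prod (hb n)))
  filter_upwards [Measure.quasiMeasurePreserving_fst.ae haA,
    Measure.quasiMeasurePreserving_snd.ae hbB] with z hzA hzB
  refine le_of_eq (Tendsto.liminf_eq (tendsto_const_nhds.congr' ?_)).symm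
  filter_upwards [hzA, hzB] with n hnA hnB
  classical
  simp only [Set.indicator_apply, Set.mem_prod, hnA, hnB]

lemma renormEnergy_le_liminf (hp : Measurable p) (hq : Measurable q) (hE : MeasurableSet E)
    (he : ∀ n, MeasurableSet (e n)) (h : ∀ᵐ x ∂μ, ∀ᶠ n in atTop, x ∈ e n ↔ x ∈ E) :
    renormEnergy μ p q E ≤ liminf (fun n ↦ renormEnergy μ p q (e n)) atTop := by
  have hcompl : ∀ᵐ x ∂μ, ∀ᶠ n in atTop, x ∈ (e n)ᶜ ↔ x ∈ Eᶜ := by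
    filter_upwards [h] with x hx
    filter_upwards [hx] with n hn using not_congr hn
  calc renormEnergy μ p q E
      ≤ liminf (fun n ↦ kernelEnergy μ (p - q) (e n) (e n)ᶜ) atTop +
          liminf (fun n ↦ kernelEnergy μ (q - p) (e n) (e n)) atTop :=
        add_le_add
          (kernelEnergy_le_liminf (hp.sub hq) hE hE.compl he (fun n ↦ (he n).compl) h hcompl)
          (kernelEnergy_le_liminf (hq.sub hp) hE hE he he h h)
    _ ≤ liminf (fun n ↦ renormEnergy μ p q (e n)) atTop := liminf_add_liminf_le _ _

end RenormEnergy

section Cut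

variable {V : Type*} [NormedAddCommGroup V] [MeasurableSpace V] [BorelSpace V]
  [SecondCountableTopology V] {μ : Measure V} [SFinite μ]
  {k : V → ℝ≥0∞} {E : Set V}

lemma kernelEnergy_inter_ball_diff_ball (hk : Measurable k) (hE : MeasurableSet E) (R : ℝ) :
    kernelEnergy μ k (E ∩ Metric.ball 0 R) (E \ Metric.ball 0 R) =
      ∫⁻ p in E ×ˢ E, (Set.Ioc ‖p.1‖ ‖p.2‖).indicator (fun _ ↦ k (p.1 - p.2)) R ∂(μ.prod μ) := by
  rw [kernelEnergy_eq_lintegral_prod hk (hE.inter measurableSet_ball) (hE.diff measurableSet_ball),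
    ← lintegral_indicator (hE.prod hE)]
  refine lintegral_congr fun p ↦ ?_
  classical
  simp only [Set.indicator_apply, Set.mem_prod, Set.mem_inter_iff, Set.mem_sdiff, mem_ball_zero_iff,
    not_lt, Set.mem_Ioc, ← ite_and]
  congr 1
  grind

lemma measurable_indicator_Ioc_norm_kernel (hk : Measurable k) :
    Measurable fun q : ℝ × V × V ↦
      (Set.Ioc ‖q.2.1‖ ‖q.2.2‖).indicator (fun _ ↦ k (q.2.1 - q.2.2)) q.1 := by
  have hset : MeasurableSet ({q : ℝ × V × V | ‖q.2.1‖ < q.1} ∩ {q | q.1 ≤ ‖q.2.2‖}) :=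
    (measurableSet_lt (by fun_prop) (by fun_prop)).inter
      (measurableSet_le (by fun_prop) (by fun_prop))
  exact (show Measurable fun q : ℝ × V × V ↦ k (q.2.1 - q.2.2) by fun_prop).indicator hset

lemma lintegral_kernelEnergy_inter_ball_diff_ball_le [μ.IsAddLeftInvariant] [μ.IsNegInvariant]
    (hk : Measurable k) (hE : MeasurableSet E) :
    ∫⁻ R : ℝ, kernelEnergy μ k (E ∩ Metric.ball 0 R) (E \ Metric.ball 0 R) ≤
      (∫⁻ z, ENNReal.ofReal ‖z‖ * k z ∂μ) * μ E := by
  simp_rw [kernelEnergy_inter_ball_diff_ball hk hE]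
  rw [lintegral_lintegral_swap (measurable_indicator_Ioc_norm_kernel hk).aemeasurable]
  calc ∫⁻ p in E ×ˢ E,
        (∫⁻ R, (Set.Ioc ‖p.1‖ ‖p.2‖).indicator (fun _ ↦ k (p.1 - p.2)) R) ∂(μ.prod μ)
      ≤ ∫⁻ p in E ×ˢ E, ENNReal.ofReal ‖p.1 - p.2‖ * k (p.1 - p.2) ∂(μ.prod μ) := by
        refine lintegral_mono fun p ↦ ?_
        rw [lintegral_indicator_const measurableSet_Ioc, Real.volume_Ioc, mul_comm, norm_sub_rev]
        gcongr
        exact norm_sub_norm_le _ _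
    _ = kernelEnergy μ (fun z ↦ ENNReal.ofReal ‖z‖ * k z) E E := by
        rw [← Measure.prod_restrict, lintegral_prod _ (by fun_prop)]
        rfl
    _ ≤ (∫⁻ z, ENNReal.ofReal ‖z‖ * k z ∂μ) * μ E := kernelEnergy_le_lintegral_mul _ _ _

lemma exists_mem_Ioo_kernelEnergy_mul_le [μ.IsAddLeftInvariant] [μ.IsNegInvariant]
    (hk : Measurable k) (hE : MeasurableSet E) (R₀ : ℝ) {L : ℝ} (hL : 0 < L) :
    ∃ R ∈ Set.Ioo R₀ (R₀ + L),
      kernelEnergy μ k (E ∩ Metric.ball 0 R) (E \ Metric.ball 0 R) * ENNReal.ofReal L ≤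
        (∫⁻ z, ENNReal.ofReal ‖z‖ * k z ∂μ) * μ E := by
  have hvol : volume (Set.Ioo R₀ (R₀ + L)) = ENNReal.ofReal L := by
    rw [Real.volume_Ioo, add_sub_cancel_left]
  have hL' : ENNReal.ofReal L ≠ 0 := by simpa using hL
  have hmeas : Measurable fun R ↦
      kernelEnergy μ k (E ∩ Metric.ball 0 R) (E \ Metric.ball 0 R) := by
    simp_rw [kernelEnergy_inter_ball_diff_ball hk hE]
    exact (measurable_indicator_Ioc_norm_kernel hk).lintegral_prod_right'
  obtain ⟨R, hR, hle⟩ := exists_le_setLAverage (μ := volume) (s := Set.Ioo R₀ (R₀ + L))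
    (f := fun R ↦ kernelEnergy μ k (E ∩ Metric.ball 0 R) (E \ Metric.ball 0 R))
    (by rwa [hvol]) (by simp [hvol]) hmeas.aemeasurable
  rw [setLAverage_eq, hvol, ENNReal.le_div_iff_mul_le (.inl hL') (by simp)] at hle
  exact ⟨R, hR, hle.trans <| (setLIntegral_le_lintegral _ _).trans <|
    lintegral_kernelEnergy_inter_ball_diff_ball_le hk hE⟩

end Cut

section FracKernel

variable {V : Type*} [NormedAddCommGroup V] [NormedSpace ℝ V] [FiniteDimensional ℝ V]
  {s t r : ℝ}

lemma exists_sub_le_indicator_fracKernel [Nontrivial V] (hs : 0 < s) (hst : s < t) (ht : t < 1) :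
    ∃ r > 0, ENNReal.ofReal (1 - t) • fracKernel t - ENNReal.ofReal s • fracKernel s ≤
        (Metric.ball (0 : V) r).indicator (fracKernel t) ∧
      ENNReal.ofReal s • fracKernel s - ENNReal.ofReal (1 - t) • fracKernel t ≤
        (Metric.ball (0 : V) r)ᶜ.indicator (ENNReal.ofReal s • fracKernel s) := by
  have ht' : 0 < 1 - t := by linarith
  set r := (s / (1 - t)) ^ (s - t)⁻¹ with hr_def
  have hr : 0 < r := by positivity
  have hrpow (x : ℝ) : s * x = (1 - t) * (r ^ (s - t) * x) := by
    rw [hr_def, Real.rpow_inv_rpow (by positivity) (by linarith), ← mul_assoc,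
      mul_div_cancel₀ _ ht'.ne']
  have hsmul {c α : ℝ} (hc : 0 ≤ c) (z : V) : (ENNReal.ofReal c • fracKernel α) z =
      ENNReal.ofReal (c * ‖z‖ ^ (-(finrank ℝ V + α))) := (ENNReal.ofReal_mul hc).symm
  refine ⟨r, hr, fun z ↦ ?_, fun z ↦ ?_⟩ <;>
    rw [Pi.sub_apply, hsmul ht'.le, hsmul hs.le, hrpow] <;> by_cases hz : ‖z‖ < r
  · rw [Set.indicator_of_mem (mem_ball_zero_iff.2 hz)]
    refine tsub_le_self.trans (ENNReal.ofReal_le_ofReal ?_)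
    exact mul_le_of_le_one_left (by positivity) (by linarith)
  · rw [tsub_eq_zero_of_le (ENNReal.ofReal_le_ofReal (mul_le_mul_of_nonneg_left
      (rpow_le_mul_rpow_of_le (finrank ℝ V) hst.le hr (not_lt.1 hz)) ht'.le))]
    exact zero_le
  · rw [tsub_eq_zero_of_le (ENNReal.ofReal_le_ofReal (mul_le_mul_of_nonneg_left
      (mul_rpow_le_rpow_of_lt finrank_pos hs.le hst.le (norm_nonneg z) hz) ht'.le))]
    exact zero_le
  · rw [Set.indicator_of_mem (by simpa using hz), hsmul hs.le, ← hrpow]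
    exact tsub_le_self

variable [MeasurableSpace V] [BorelSpace V] {μ : Measure V} [μ.IsAddHaarMeasure]

lemma lintegral_sub_fracKernel_ne_top [Nontrivial V] (hs : 0 < s) (hst : s < t) (ht : t < 1) :
    ∫⁻ z, (ENNReal.ofReal s • fracKernel s - ENNReal.ofReal (1 - t) • fracKernel t : V → ℝ≥0∞) z ∂μ
      ≠ ⊤ := by
  obtain ⟨r, hr, -, hle⟩ := exists_sub_le_indicator_fracKernel (V := V) hs hst ht
  refine ne_top_of_le_ne_top ?_ (lintegral_mono hle)
  rw [lintegral_indicator measurableSet_ball.compl]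
  simp only [Pi.smul_apply, smul_eq_mul]
  rw [lintegral_const_mul _ (measurable_fracKernel s), lintegral_fracKernel_compl_ball hs hr]
  exact ENNReal.mul_ne_top ENNReal.ofReal_ne_top ENNReal.ofReal_ne_top

lemma kernelEnergy_fracKernel_preimage_smul (hr : 0 < r) (α : ℝ) (A B : Set V) :
    kernelEnergy μ (fracKernel α) ((r • ·) ⁻¹' A) ((r • ·) ⁻¹' B) =
      ENNReal.ofReal (r ^ (α - finrank ℝ V)) * kernelEnergy μ (fracKernel α) A B := by
  have hker : (fun z : V ↦ fracKernel α (r • z)) =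
      ENNReal.ofReal (r ^ (-(finrank ℝ V + α))) • fracKernel α := by
    ext z
    rw [fracKernel_smul hr, Pi.smul_apply, smul_eq_mul]
  have hrpow : r ^ (α - finrank ℝ V) * r ^ (-(finrank ℝ V + α)) = (r ^ finrank ℝ V)⁻¹ ^ 2 := by
    rw [← Real.rpow_add hr, ← Real.rpow_natCast r, ← Real.rpow_neg hr.le, ← Real.rpow_natCast,
      ← Real.rpow_mul hr.le]
    congr 1
    push_cast
    ring
  have hscale := kernelEnergy_comp_smul_preimage_smul (μ := μ) hr (fracKernel α) A B
  rw [hker, kernelEnergy_smul (by fun_prop), ← ENNReal.ofReal_pow (by positivity), ← hrpow,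
    mul_comm (r ^ (α - _)), ENNReal.ofReal_mul (by positivity), mul_assoc] at hscale
  exact (ENNReal.mul_right_inj (ENNReal.ofReal_pos.2 (by positivity)).ne'
    ENNReal.ofReal_ne_top).1 hscale

end FracKernel

section FreeEnergy

variable {N : ℕ} {s t m r : ℝ} {E : Set (EuclideanSpace ℝ (Fin N))}

lemma fracPer_eq_kernelEnergy (α : ℝ) (E : Set (EuclideanSpace ℝ (Fin N))) :
    fracPer N α E = kernelEnergy volume (fracKernel α) E Eᶜ := by
  simp only [fracPer, interEnergy, kernelEnergy, fracKernel, finrank_euclideanSpace_fin]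

lemma fracPer_preimage_add_right (α : ℝ) (hE : MeasurableSet E) (v : EuclideanSpace ℝ (Fin N)) :
    fracPer N α ((· + v) ⁻¹' E) = fracPer N α E := by
  rw [fracPer_eq_kernelEnergy, fracPer_eq_kernelEnergy, ← Set.preimage_compl,
    kernelEnergy_preimage_add_right (measurable_fracKernel α) hE hE.compl]

lemma fracPer_preimage_smul (hr : 0 < r) (α : ℝ) (E : Set (EuclideanSpace ℝ (Fin N))) :
    fracPer N α ((r • ·) ⁻¹' E) = ENNReal.ofReal (r ^ (α - N)) * fracPer N α E := by
  rw [fracPer_eq_kernelEnergy, fracPer_eq_kernelEnergy, ← Set.preimage_compl,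
    kernelEnergy_fracKernel_preimage_smul hr, finrank_euclideanSpace_fin]

/-- The admissible sets of the minimum problem with volume constraint `m`. -/
structure IsCompetitor (N : ℕ) (t m : ℝ) (E : Set (EuclideanSpace ℝ (Fin N))) : Prop where
  measurableSet : MeasurableSet E
  volume_eq : volume E = ENNReal.ofReal m
  fracPer_lt_top : fracPer N t E < ⊤

namespace IsCompetitor

lemma volume_ne_top (hE : IsCompetitor N t m E) : volume E ≠ ⊤ :=
  hE.volume_eq ▸ ENNReal.ofReal_ne_top

lemma volumeReal_eq (hE : IsCompetitor N t m E) (hm : 0 ≤ m) : volume.real E = m := by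
  rw [Measure.real, hE.volume_eq, ENNReal.toReal_ofReal hm]

lemma preimage_add_right (hE : IsCompetitor N t m E) (v : EuclideanSpace ℝ (Fin N)) :
    IsCompetitor N t m ((· + v) ⁻¹' E) where
  measurableSet := measurable_add_const v hE.measurableSet
  volume_eq := (measure_preimage_add_right volume v E).trans hE.volume_eq
  fracPer_lt_top := (fracPer_preimage_add_right t hE.measurableSet v).trans_lt hE.fracPer_lt_top

lemma preimage_smul (hE : IsCompetitor N t m E) (hr : 0 < r) :
    IsCompetitor N t ((r ^ N)⁻¹ * m) ((r • ·) ⁻¹' E) where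
  measurableSet := measurable_const_smul r hE.measurableSet
  volume_eq := by
    rw [Measure.addHaar_preimage_smul volume hr.ne', finrank_euclideanSpace_fin, hE.volume_eq,
      abs_of_pos (by positivity), ENNReal.ofReal_mul (by positivity)]
  fracPer_lt_top := by
    rw [fracPer_preimage_smul hr]
    exact ENNReal.mul_lt_top ENNReal.ofReal_lt_top hE.fracPer_lt_top

end IsCompetitor

lemma freeEnergy_preimage_add_right (hE : MeasurableSet E) (v : EuclideanSpace ℝ (Fin N)) :
    freeEnergy N s t ((· + v) ⁻¹' E) = freeEnergy N s t E := by
  rw [freeEnergy, freeEnergy, fracPer_preimage_add_right t hE, fracPer_preimage_add_right s hE]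

lemma freeEnergy_preimage_smul_le (hs : 0 ≤ s) (hst : s ≤ t) (hr : 0 < r) (hr₁ : r ≤ 1)
    (E : Set (EuclideanSpace ℝ (Fin N))) :
    freeEnergy N s t ((r • ·) ⁻¹' E) ≤ r ^ (t - N) * freeEnergy N s t E := by
  have hrpow : r ^ (t - N) ≤ r ^ (s - N) :=
    Real.rpow_le_rpow_of_exponent_ge hr hr₁ (by linarith)
  have hPs : s * (r ^ (t - N) * (fracPer N s E).toReal) ≤
      s * (r ^ (s - N) * (fracPer N s E).toReal) := by gcongr
  rw [freeEnergy, freeEnergy, fracPer_preimage_smul hr, fracPer_preimage_smul hr,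
    ENNReal.toReal_mul, ENNReal.toReal_mul, ENNReal.toReal_ofReal (by positivity),
    ENNReal.toReal_ofReal (by positivity)]
  linarith

lemma exists_isCompetitor [NeZero N] (ht₀ : 0 < t) (ht₁ : t < 1) (hm : 0 < m) :
    ∃ E, IsCompetitor N t m E := by
  set ω := volume.real (Metric.ball (0 : EuclideanSpace ℝ (Fin N)) 1)
  have hω : 0 < ω :=
    ENNReal.toReal_pos (Metric.measure_ball_pos _ _ one_pos).ne' measure_ball_lt_top.ne
  have hball : IsCompetitor N t ω (Metric.ball 0 1) :=
    ⟨measurableSet_ball, (ofReal_measureReal measure_ball_lt_top.ne).symm,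
      fracPer_eq_kernelEnergy t _ ▸ kernelEnergy_fracKernel_ball_lt_top ht₀ ht₁⟩
  have hdil := hball.preimage_smul (r := (ω / m) ^ (N : ℝ)⁻¹) (by positivity)
  rw [Real.rpow_inv_natCast_pow (by positivity) (NeZero.ne N), inv_div, div_mul_cancel₀ _ hω.ne']
    at hdil
  exact ⟨_, hdil⟩

/-- The renormalised energy associated with the free energy: on sets of prescribed volume the two
differ by a constant. -/
noncomputable def renormFreeEnergy (N : ℕ) (s t : ℝ) (E : Set (EuclideanSpace ℝ (Fin N))) : ℝ≥0∞ :=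
  renormEnergy volume (ENNReal.ofReal (1 - t) • fracKernel t) (ENNReal.ofReal s • fracKernel s) E

lemma renormFreeEnergy_inter_add_diff_le {S : Set (EuclideanSpace ℝ (Fin N))}
    (hE : MeasurableSet E) (hS : MeasurableSet S) :
    renormFreeEnergy N s t (E ∩ S) + renormFreeEnergy N s t (E \ S) ≤ renormFreeEnergy N s t E +
      2 * kernelEnergy volume (ENNReal.ofReal (1 - t) • fracKernel t -
        ENNReal.ofReal s • fracKernel s) (E ∩ S) (E \ S) :=
  renormEnergy_inter_add_diff_le ((measurable_fracKernel t).const_smul _)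
    ((measurable_fracKernel s).const_smul _) ((even_fracKernel t).const_smul _)
    ((even_fracKernel s).const_smul _) hE hS

lemma exists_toReal_renormFreeEnergy_eq (N : ℕ) [NeZero N] (hs : 0 < s) (hst : s < t) (ht : t < 1) :
    ∃ M, ∀ E, MeasurableSet E → volume E ≠ ⊤ → fracPer N t E < ⊤ →
      renormFreeEnergy N s t E ≠ ⊤ ∧
        (renormFreeEnergy N s t E).toReal = freeEnergy N s t E + M * volume.real E := by
  refine ⟨(∫⁻ z, (ENNReal.ofReal s • fracKernel s - ENNReal.ofReal (1 - t) • fracKernel t :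
    EuclideanSpace ℝ (Fin N) → ℝ≥0∞) z).toReal, fun E hE hvol hfin ↦ ?_⟩
  have hfin_s := kernelEnergy_fracKernel_lt_top_of_le hs hst.le hvol
    (fracPer_eq_kernelEnergy t E ▸ hfin)
  rw [← fracPer_eq_kernelEnergy] at hfin_s
  have hsmul (c α : ℝ) : kernelEnergy volume (ENNReal.ofReal c • fracKernel α) E Eᶜ =
      ENNReal.ofReal c * fracPer N α E := by
    rw [kernelEnergy_smul (measurable_fracKernel α), fracPer_eq_kernelEnergy]
  obtain ⟨hne, heq⟩ := toReal_renormEnergy (μ := volume)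
    ((measurable_fracKernel t).const_smul _) ((measurable_fracKernel s).const_smul _) hE
    (hsmul (1 - t) t ▸ ENNReal.mul_ne_top ENNReal.ofReal_ne_top hfin.ne)
    (hsmul s s ▸ ENNReal.mul_ne_top ENNReal.ofReal_ne_top hfin_s.ne)
    (lintegral_sub_fracKernel_ne_top hs hst ht) hvol
  refine ⟨hne, heq.trans ?_⟩
  rw [hsmul, hsmul, ENNReal.toReal_mul, ENNReal.toReal_mul, ENNReal.toReal_ofReal (by linarith),
    ENNReal.toReal_ofReal hs.le, freeEnergy]

lemma fracPer_inter_lt_top_and_diff_lt_top [NeZero N] {S : Set (EuclideanSpace ℝ (Fin N))}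
    (ht : 0 < t) (hr : 0 < r) (hE : MeasurableSet E) (hS : MeasurableSet S) (hvol : volume E ≠ ⊤)
    (hfin : fracPer N t E < ⊤)
    (hcut : kernelEnergy volume ((Metric.ball 0 r).indicator (fracKernel t)) (E ∩ S) (E \ S) < ⊤) :
    fracPer N t (E ∩ S) < ⊤ ∧ fracPer N t (E \ S) < ⊤ := by
  rw [fracPer_eq_kernelEnergy] at hfin ⊢
  have hcross : kernelEnergy volume (fracKernel t) (E ∩ S) (E \ S) < ⊤ :=
    (kernelEnergy_fracKernel_le ht hr _ _).trans_lt <| ENNReal.add_lt_top.2 ⟨hcut,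
      ENNReal.mul_lt_top ENNReal.ofReal_lt_top (measure_inter_lt_top_of_left_ne_top hvol)⟩
  rw [fracPer_eq_kernelEnergy, kernelEnergy_compl_inter (measurable_fracKernel t) hE hS,
    kernelEnergy_compl_diff (measurable_fracKernel t) (even_fracKernel t) hE hS]
  have hsub {A : Set (EuclideanSpace ℝ (Fin N))} (hA : A ⊆ E) :
      kernelEnergy volume (fracKernel t) A Eᶜ < ⊤ :=
    (kernelEnergy_mono le_rfl hA le_rfl).trans_lt hfin
  exact ⟨ENNReal.add_lt_top.2 ⟨hsub Set.inter_subset_left, hcross⟩,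
    ENNReal.add_lt_top.2 ⟨hsub Set.sdiff_subset, hcross⟩⟩

lemma exists_mem_Ioo_kernelEnergy_inter_ball_diff_ball_le (N : ℕ) [NeZero N] (ht : t < 1) (r : ℝ) :
    ∃ C : ℝ, 0 ≤ C ∧ ∀ m E, IsCompetitor N t m E → ∀ R₀ L : ℝ, 0 < L →
      ∃ R ∈ Set.Ioo R₀ (R₀ + L),
        kernelEnergy volume ((Metric.ball 0 r).indicator (fracKernel t)) (E ∩ Metric.ball 0 R)
          (E \ Metric.ball 0 R) ≤ ENNReal.ofReal (C * m / L) := by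
  have hmoment := lintegral_norm_mul_fracKernel_ball_lt_top (V := EuclideanSpace ℝ (Fin N))
    (μ := volume) ht r
  refine ⟨(∫⁻ z in Metric.ball (0 : EuclideanSpace ℝ (Fin N)) r,
    ENNReal.ofReal ‖z‖ * fracKernel t z).toReal, ENNReal.toReal_nonneg, fun m E hE R₀ L hL ↦ ?_⟩
  obtain ⟨R, hR, hcut⟩ := exists_mem_Ioo_kernelEnergy_mul_le (μ := volume)
    (measurable_indicator_ball_fracKernel t r) hE.measurableSet R₀ hL
  refine ⟨R, hR, ?_⟩
  rw [ENNReal.ofReal_div_of_pos hL, ENNReal.le_div_iff_mul_le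
    (.inl (ENNReal.ofReal_pos.2 hL).ne') (.inl ENNReal.ofReal_ne_top)]
  refine hcut.trans_eq ?_
  simp_rw [← Set.indicator_mul_right (Metric.ball 0 r)
    (fun z : EuclideanSpace ℝ (Fin N) ↦ ENNReal.ofReal ‖z‖)]
  rw [lintegral_indicator measurableSet_ball, hE.volume_eq,
    ENNReal.ofReal_mul ENNReal.toReal_nonneg, ENNReal.ofReal_toReal hmoment.ne]

lemma exists_freeEnergy_inter_add_freeEnergy_diff_le (N : ℕ) [NeZero N] (hs : 0 < s) (hst : s < t)
    (ht : t < 1) :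
    ∃ K : ℝ, 0 ≤ K ∧ ∀ m E, 0 ≤ m → IsCompetitor N t m E → ∀ R₀ L : ℝ, 0 < L →
      ∃ R ∈ Set.Ioo R₀ (R₀ + L), fracPer N t (E ∩ Metric.ball 0 R) < ⊤ ∧
        fracPer N t (E \ Metric.ball 0 R) < ⊤ ∧
        freeEnergy N s t (E ∩ Metric.ball 0 R) + freeEnergy N s t (E \ Metric.ball 0 R) ≤
          freeEnergy N s t E + K * m / L := by
  obtain ⟨r, hr, hle, -⟩ := exists_sub_le_indicator_fracKernel (V := EuclideanSpace ℝ (Fin N))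
    hs hst ht
  obtain ⟨M, hM⟩ := exists_toReal_renormFreeEnergy_eq N hs hst ht
  obtain ⟨C, hC, hcut⟩ := exists_mem_Ioo_kernelEnergy_inter_ball_diff_ball_le N ht r
  refine ⟨2 * C, by positivity, fun m E hm hE R₀ L hL ↦ ?_⟩
  obtain ⟨R, hR, hcutR⟩ := hcut m E hE R₀ L hL
  obtain ⟨hfin_inter, hfin_diff⟩ := fracPer_inter_lt_top_and_diff_lt_top (hs.trans hst) hr
    hE.measurableSet measurableSet_ball hE.volume_ne_top hE.fracPer_lt_top
    (hcutR.trans_lt ENNReal.ofReal_lt_top)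
  refine ⟨R, hR, hfin_inter, hfin_diff, ?_⟩
  obtain ⟨hne, heq⟩ := hM E hE.measurableSet hE.volume_ne_top hE.fracPer_lt_top
  obtain ⟨hne_inter, heq_inter⟩ := hM _ (hE.measurableSet.inter measurableSet_ball)
    (measure_inter_lt_top_of_left_ne_top hE.volume_ne_top).ne hfin_inter
  obtain ⟨hne_diff, heq_diff⟩ := hM _ (hE.measurableSet.diff measurableSet_ball)
    (measure_lt_top_of_subset Set.sdiff_subset hE.volume_ne_top).ne hfin_diff
  have hrenorm : renormFreeEnergy N s t (E ∩ Metric.ball 0 R) +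
      renormFreeEnergy N s t (E \ Metric.ball 0 R) ≤
        renormFreeEnergy N s t E + ENNReal.ofReal (2 * (C * m / L)) :=
    (renormFreeEnergy_inter_add_diff_le hE.measurableSet measurableSet_ball).trans <| by
      rw [ENNReal.ofReal_mul zero_le_two, ENNReal.ofReal_ofNat]
      gcongr
      exact (kernelEnergy_mono_kernel hle).trans hcutR
  have hreal := ENNReal.toReal_mono (ENNReal.add_ne_top.2 ⟨hne, ENNReal.ofReal_ne_top⟩) hrenorm
  rw [ENNReal.toReal_add hne_inter hne_diff, ENNReal.toReal_add hne ENNReal.ofReal_ne_top,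
    ENNReal.toReal_ofReal (by positivity), heq, heq_inter, heq_diff] at hreal
  have hvol := measureReal_inter_add_sdiff (μ := volume) (s := E) (t := Metric.ball 0 R)
    measurableSet_ball hE.volume_ne_top
  linear_combination hreal - M * hvol

end FreeEnergy

lemma rpow_neg_le_rpow_add_rpow {a b q θ : ℝ} (hq : 0 ≤ q) (ha : 0 < a) (hb : 0 < b)
    (hab : a + b = 1) (haθ : a ≤ θ) (hbθ : b ≤ θ) :
    θ ^ (-q) ≤ a ^ (1 - q) + b ^ (1 - q) := by
  have hle {x : ℝ} (hx : 0 < x) (hxθ : x ≤ θ) : x * θ ^ (-q) ≤ x ^ (1 - q) := by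
    rw [sub_eq_add_neg, Real.rpow_add hx, Real.rpow_one]
    exact mul_le_mul_of_nonneg_left (Real.rpow_le_rpow_of_nonpos hx hxθ (by linarith)) hx.le
  calc θ ^ (-q) = a * θ ^ (-q) + b * θ ^ (-q) := by rw [← add_mul, hab, one_mul]
    _ ≤ a ^ (1 - q) + b ^ (1 - q) := add_le_add (hle ha haθ) (hle hb hbθ)

section Tightness

variable {N : ℕ} [NeZero N] {s t m e : ℝ}

lemma mul_rpow_le_freeEnergy {m' : ℝ} {E : Set (EuclideanSpace ℝ (Fin N))} (hs : 0 ≤ s)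
    (hst : s ≤ t) (hm' : 0 < m') (hm'm : m' ≤ m)
    (he : ∀ A, IsCompetitor N t m A → e ≤ freeEnergy N s t A) (hE : IsCompetitor N t m' E) :
    e * (m' / m) ^ (1 - t / N) ≤ freeEnergy N s t E := by
  have hm : 0 < m := hm'.trans_le hm'm
  have hN : (N : ℝ) ≠ 0 := NeZero.ne _
  set r := (m' / m) ^ (N : ℝ)⁻¹ with hr_def
  have hr : 0 < r := by positivity
  have hr₁ : r ≤ 1 := Real.rpow_le_one (by positivity) ((div_le_one hm).2 hm'm) (by positivity)
  have hdil := hE.preimage_smul hr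
  rw [Real.rpow_inv_natCast_pow (by positivity) (NeZero.ne N), inv_div,
    div_mul_cancel₀ _ hm'.ne'] at hdil
  have hrpow : (m' / m) ^ (1 - t / N) = (r ^ (t - N))⁻¹ := by
    rw [← Real.rpow_neg hr.le, hr_def, ← Real.rpow_mul (by positivity)]
    congr 1
    field_simp
    ring
  rw [hrpow, ← div_eq_mul_inv, div_le_iff₀' (by positivity)]
  exact (he _ hdil).trans (freeEnergy_preimage_smul_le hs hst hr hr₁ E)

lemma mul_rpow_neg_le_freeEnergy_add_freeEnergy {m₁ m₂ θ : ℝ}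
    {A B : Set (EuclideanSpace ℝ (Fin N))} (hs : 0 ≤ s) (hst : s ≤ t) (he₀ : 0 ≤ e)
    (he : ∀ E, IsCompetitor N t m E → e ≤ freeEnergy N s t E) (hm₁ : 0 < m₁) (hm₂ : 0 < m₂)
    (hsum : m₁ + m₂ = m) (hm₁θ : m₁ ≤ θ * m) (hm₂θ : m₂ ≤ θ * m) (hA : IsCompetitor N t m₁ A)
    (hB : IsCompetitor N t m₂ B) :
    e * θ ^ (-(t / N)) ≤ freeEnergy N s t A + freeEnergy N s t B := by
  have hm : 0 < m := by linarith
  have hq : 0 ≤ t / N := div_nonneg (hs.trans hst) (Nat.cast_nonneg N)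
  calc e * θ ^ (-(t / N)) ≤ e * ((m₁ / m) ^ (1 - t / N) + (m₂ / m) ^ (1 - t / N)) :=
        mul_le_mul_of_nonneg_left (rpow_neg_le_rpow_add_rpow hq (by positivity) (by positivity)
          (by rw [← add_div, hsum, div_self hm.ne']) ((div_le_iff₀ hm).2 hm₁θ)
          ((div_le_iff₀ hm).2 hm₂θ)) he₀
    _ = e * (m₁ / m) ^ (1 - t / N) + e * (m₂ / m) ^ (1 - t / N) := mul_add _ _ _
    _ ≤ freeEnergy N s t A + freeEnergy N s t B :=
        add_le_add (mul_rpow_le_freeEnergy hs hst hm₁ (by linarith) he hA)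
          (mul_rpow_le_freeEnergy hs hst hm₂ (by linarith) he hB)

lemma mul_rpow_neg_le_freeEnergy_inter_add_diff {κ : ℝ} {E S : Set (EuclideanSpace ℝ (Fin N))}
    (hs : 0 ≤ s) (hst : s ≤ t) (hm : 0 < m) (he₀ : 0 ≤ e)
    (he : ∀ E, IsCompetitor N t m E → e ≤ freeEnergy N s t E) (hE : IsCompetitor N t m E)
    (hS : MeasurableSet S) (hfin_inter : fracPer N t (E ∩ S) < ⊤)
    (hfin_diff : fracPer N t (E \ S) < ⊤) (hκ : 0 < κ) (hinter : ENNReal.ofReal κ ≤ volume (E ∩ S))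
    (hdiff : ENNReal.ofReal κ ≤ volume (E \ S)) :
    e * ((m - κ) / m) ^ (-(t / N)) ≤ freeEnergy N s t (E ∩ S) + freeEnergy N s t (E \ S) := by
  have hvol_inter := (measure_lt_top_of_subset (s := E) (t := E ∩ S) Set.inter_subset_left
    hE.volume_ne_top).ne
  have hvol_diff := (measure_lt_top_of_subset (s := E) (t := E \ S) Set.sdiff_subset
    hE.volume_ne_top).ne
  rw [ENNReal.ofReal_le_iff_le_toReal hvol_inter, ← Measure.real] at hinter
  rw [ENNReal.ofReal_le_iff_le_toReal hvol_diff, ← Measure.real] at hdiff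
  have hsum := (measureReal_inter_add_sdiff hS hE.volume_ne_top).trans (hE.volumeReal_eq hm.le)
  have hθm : (m - κ) / m * m = m - κ := div_mul_cancel₀ _ hm.ne'
  exact mul_rpow_neg_le_freeEnergy_add_freeEnergy hs hst he₀ he (hκ.trans_le hinter)
    (hκ.trans_le hdiff) hsum (by linarith) (by linarith)
    ⟨hE.measurableSet.inter hS, (ofReal_measureReal hvol_inter).symm, hfin_inter⟩
    ⟨hE.measurableSet.diff hS, (ofReal_measureReal hvol_diff).symm, hfin_diff⟩

lemma exists_volume_diff_ball_le {c κ : ℝ} (hs : 0 < s) (hst : s < t) (ht : t < 1) (hm : 0 < m)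
    (he₀ : 0 < e) (he : ∀ E, IsCompetitor N t m E → e ≤ freeEnergy N s t E) (hc : 0 < c)
    (hκ : 0 < κ) (ρ : ℝ) :
    ∃ R η : ℝ, 0 < η ∧ ∀ E, IsCompetitor N t m E → freeEnergy N s t E < e + η →
      ENNReal.ofReal c ≤ volume (E ∩ Metric.ball 0 ρ) →
        volume (E \ Metric.ball 0 R) ≤ ENNReal.ofReal κ := by
  obtain ⟨κ', hκ', hκ'κ, hκ'c, hκ'm⟩ : ∃ κ' > 0, κ' ≤ κ ∧ κ' ≤ c ∧ κ' < m :=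
    ⟨min (min κ c) (m / 2), by positivity, (min_le_left _ _).trans (min_le_left _ _),
      (min_le_left _ _).trans (min_le_right _ _), (min_le_right _ _).trans_lt (half_lt_self hm)⟩
  obtain ⟨K, hK, hsplit⟩ := exists_freeEnergy_inter_add_freeEnergy_diff_le N hs hst ht
  set θ := (m - κ') / m
  have hθ : 1 < θ ^ (-(t / N)) := Real.one_lt_rpow_of_pos_of_lt_one_of_neg
    (div_pos (by linarith) hm) ((div_lt_one hm).2 (by linarith))
    (neg_neg_of_pos (div_pos (hs.trans hst) (Nat.cast_pos.2 (NeZero.pos N))))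
  set g := e * θ ^ (-(t / N)) - e
  have hg : 0 < g := sub_pos.2 (lt_mul_of_one_lt_right he₀ hθ)
  set L := 2 * (K * m + 1) / g with hL_def
  have hL : 0 < L := by positivity
  have hKL : K * m / L ≤ g / 2 := by
    rw [div_le_iff₀ hL, hL_def]
    field_simp
    linarith
  refine ⟨ρ + L, g / 2, half_pos hg, fun E hE hEη hEc ↦ ?_⟩
  by_contra! hfar
  obtain ⟨R, ⟨hρR, hRL⟩, hfin_inter, hfin_diff, hFR⟩ := hsplit m E hm.le hE ρ L hL
  have hinter : ENNReal.ofReal κ' ≤ volume (E ∩ Metric.ball 0 R) :=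
    (ENNReal.ofReal_le_ofReal hκ'c).trans <| hEc.trans <| measure_mono <|
      Set.inter_subset_inter_right _ (Metric.ball_subset_ball hρR.le)
  have hdiff : ENNReal.ofReal κ' ≤ volume (E \ Metric.ball 0 R) :=
    (ENNReal.ofReal_le_ofReal hκ'κ).trans <| hfar.le.trans <| measure_mono <|
      Set.sdiff_subset_sdiff_right (Metric.ball_subset_ball hRL.le)
  have hsub := mul_rpow_neg_le_freeEnergy_inter_add_diff hs.le hst.le hm he₀.le he hE
    measurableSet_ball hfin_inter hfin_diff hκ' hinter hdiff
  linarith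

end Tightness

section ConvergenceOfSets

variable {α : Type*} {E : ℕ → Set α}

lemma eventually_mem_iff_mem_liminf {x : α} (h : ∀ᶠ n in atTop, x ∉ symmDiff (E n) (E (n + 1))) :
    ∀ᶠ n in atTop, (x ∈ E n ↔ x ∈ liminf E atTop) := by
  obtain ⟨a, ha⟩ := eventually_atTop.1 h
  have hconst : ∀ n ≥ a, (x ∈ E n ↔ x ∈ E a) := fun n hn ↦ by
    induction n, hn using Nat.le_induction with
    | base => rfl
    | succ n hn ih =>
      have := ha n hn
      rw [Set.mem_symmDiff] at this
      tauto
  have hlim : x ∈ liminf E atTop ↔ x ∈ E a := by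
    rw [mem_liminf_iff_eventually_mem]
    refine ⟨fun hx ↦ ?_, fun hx ↦ eventually_atTop.2 ⟨a, fun n hn ↦ (hconst n hn).2 hx⟩⟩
    obtain ⟨n, hn, hxn⟩ := (hx.and (eventually_ge_atTop a)).exists
    exact (hconst n hxn).1 hn
  filter_upwards [eventually_ge_atTop a] with n hn
  rw [hconst n hn, hlim]

variable [MeasurableSpace α] {μ : Measure α} {A F : Set α}

lemma measure_symmDiff_le_liminf (hA : MeasurableSet A) (hE : ∀ n, MeasurableSet (E n))
    (hF : MeasurableSet F) (h : ∀ᵐ x ∂μ, ∀ᶠ n in atTop, (x ∈ E n ↔ x ∈ F)) :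
    μ (symmDiff A F) ≤ liminf (fun n ↦ μ (symmDiff A (E n))) atTop := by
  simp_rw [← lintegral_indicator_one (hA.symmDiff hF),
    ← fun n ↦ lintegral_indicator_one (μ := μ) (hA.symmDiff (hE n))]
  refine (lintegral_mono_ae ?_).trans
    (lintegral_liminf_le fun n ↦ measurable_one.indicator (hA.symmDiff (hE n)))
  filter_upwards [h] with x hx
  refine (Tendsto.liminf_eq (tendsto_const_nhds.congr' ?_)).ge
  filter_upwards [hx] with n hn
  classical
  simp only [Set.indicator_apply, Set.mem_symmDiff, hn]

lemma measure_eq_of_tendsto_measure_symmDiff {c : ℝ≥0∞} (hc : ∀ n, μ (E n) = c)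
    (h : Tendsto (fun n ↦ μ (symmDiff (E n) F)) atTop (𝓝 0)) : μ F = c := by
  have hle (B D : Set α) : μ B ≤ μ D + μ (symmDiff B D) := by
    refine (measure_mono fun x hx ↦ ?_).trans (measure_union_le D (symmDiff B D))
    by_cases hxD : x ∈ D
    exacts [.inl hxD, .inr (.inl ⟨hx, hxD⟩)]
  apply le_antisymm
  · refine ge_of_tendsto' (by simpa using h.const_add c) fun n ↦ ?_
    rw [← hc n, symmDiff_comm]
    exact hle F (E n)
  · refine ge_of_tendsto' (by simpa using h.const_add (μ F)) fun n ↦ ?_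
    rw [← hc n]
    exact hle (E n) F

lemma exists_subseq_ae_eventually_mem_iff (hE : ∀ n, MeasurableSet (E n))
    (h : Tendsto (fun p : ℕ × ℕ ↦ μ (symmDiff (E p.1) (E p.2))) atTop (𝓝 0)) :
    ∃ φ : ℕ → ℕ, StrictMono φ ∧ ∃ F, MeasurableSet F ∧
      (∀ᵐ x ∂μ, ∀ᶠ n in atTop, (x ∈ E (φ n) ↔ x ∈ F)) ∧
      Tendsto (fun n ↦ μ (symmDiff (E (φ n)) F)) atTop (𝓝 0) := by
  have hcauchy (j : ℕ) : ∃ a, ∀ n ≥ a, ∀ k ≥ n, μ (symmDiff (E n) (E k)) ≤ 2⁻¹ ^ j := by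
    obtain ⟨⟨a, b⟩, hab⟩ := eventually_atTop.1 <|
      ENNReal.tendsto_nhds_zero.1 h (2⁻¹ ^ j) (ENNReal.pow_pos (by simp) j)
    exact ⟨max a b, fun n hn k hk ↦ hab (n, k) ⟨(le_max_left a b).trans hn,
      (le_max_right a b).trans (hn.trans hk)⟩⟩
  obtain ⟨φ, hφ, hle⟩ := extraction_forall_of_eventually' hcauchy
  have hsum : ∑' j, μ (symmDiff (E (φ j)) (E (φ (j + 1)))) ≠ ⊤ := by
    refine ne_top_of_le_ne_top ?_ (ENNReal.tsum_le_tsum fun j ↦ hle j _ (hφ j.lt_succ_self).le)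
    rw [ENNReal.tsum_geometric]
    simp
  have hF := MeasurableSet.measurableSet_liminf fun n ↦ hE (φ n)
  have hae : ∀ᵐ x ∂μ, ∀ᶠ n in atTop, (x ∈ E (φ n) ↔ x ∈ liminf (E ∘ φ) atTop) := by
    filter_upwards [ae_eventually_notMem hsum] with x hx using eventually_mem_iff_mem_liminf hx
  refine ⟨φ, hφ, _, hF, hae, ?_⟩
  have hbound (j : ℕ) : μ (symmDiff (E (φ j)) (liminf (E ∘ φ) atTop)) ≤ 2⁻¹ ^ j := by
    refine (measure_symmDiff_le_liminf (hE _) (fun n ↦ hE (φ n)) hF hae).trans ?_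
    refine liminf_le_of_frequently_le' (Eventually.frequently ?_)
    filter_upwards [eventually_ge_atTop j] with n hn using hle j _ (hφ.monotone hn)
  exact tendsto_of_tendsto_of_tendsto_of_le_of_le tendsto_const_nhds
    (ENNReal.tendsto_pow_atTop_nhds_zero_of_lt_one (by simp)) (fun _ ↦ zero_le) hbound

lemma exists_subseq_tendsto_measureReal_inter [IsSeparable μ] {C : ℝ}
    (hE : ∀ n, MeasurableSet (E n)) (hfin : ∀ n, μ (E n) ≠ ⊤) (hC : ∀ n, μ.real (E n) ≤ C) :
    ∃ φ : ℕ → ℕ, StrictMono φ ∧ ∀ B, MeasurableSet B → μ B ≠ ⊤ →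
      ∃ l, Tendsto (fun n ↦ μ.real (E (φ n) ∩ B)) atTop (𝓝 l) := by
  have : Fact ((1 : ℝ≥0∞) ≤ 2) := ⟨one_le_two⟩
  have : Fact ((2 : ℝ≥0∞) ≠ ⊤) := ⟨ENNReal.ofNat_ne_top⟩
  let u (n : ℕ) : Lp ℝ 2 μ := indicatorConstLp 2 (hE n) (hfin n) 1
  have hu (n : ℕ) : StrongDual.toWeakDual (innerSL ℝ (u n)) ∈
      WeakDual.toStrongDual ⁻¹' Metric.closedBall (0 : StrongDual ℝ (Lp ℝ 2 μ)) (√C) := by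
    rw [Set.mem_preimage, mem_closedBall_zero_iff]
    calc ‖innerSL ℝ (u n)‖ = √(μ.real (E n)) := by
          rw [innerSL_apply_norm, norm_indicatorConstLp two_ne_zero ENNReal.ofNat_ne_top,
            Real.sqrt_eq_rpow]
          simp
      _ ≤ √C := Real.sqrt_le_sqrt (hC n)
  obtain ⟨g, -, φ, hφ, hg⟩ := WeakDual.isSeqCompact_closedBall ℝ (Lp ℝ 2 μ) 0 (√C) hu
  refine ⟨φ, hφ, fun B hB hBfin ↦ ⟨g (indicatorConstLp 2 hB hBfin 1), ?_⟩⟩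
  refine ((WeakDual.eval_continuous (indicatorConstLp 2 hB hBfin (1 : ℝ))).continuousAt.tendsto.comp
    hg).congr fun n ↦ ?_
  exact L2.real_inner_indicatorConstLp_one_indicatorConstLp_one (hE _) hB (hfin _) hBfin

end ConvergenceOfSets

section Compactness

variable {V : Type*} [NormedAddCommGroup V]

lemma even_indicator_ball_one (ρ : ℝ) :
    ((Metric.ball (0 : V) ρ).indicator (1 : V → ℝ≥0∞)).Even := fun z ↦ by
  classical
  simp [Set.indicator_apply]

variable [MeasurableSpace V] [BorelSpace V] {μ : Measure V} {ρ t : ℝ} {A B K : Set V}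
  {E : ℕ → Set V}

lemma setLIntegral_indicator_ball_one (ρ : ℝ) (A : Set V) (x : V) :
    ∫⁻ y in A, (Metric.ball 0 ρ).indicator 1 (x - y) ∂μ = μ (A ∩ Metric.ball x ρ) := by
  have hball : (fun y ↦ (Metric.ball 0 ρ).indicator (1 : V → ℝ≥0∞) (x - y)) =
      (Metric.ball x ρ).indicator 1 := by
    classical
    ext y
    simp only [Set.indicator_apply, mem_ball_iff_norm', zero_sub, norm_neg, Pi.one_apply]
  rw [hball, lintegral_indicator_one measurableSet_ball, Measure.restrict_apply measurableSet_ball,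
    Set.inter_comm]

lemma measurable_indicator_ball_one (ρ : ℝ) :
    Measurable ((Metric.ball (0 : V) ρ).indicator (1 : V → ℝ≥0∞)) :=
  measurable_one.indicator measurableSet_ball

variable [NormedSpace ℝ V]

lemma kernelEnergy_indicator_ball_one_le [SFinite μ] [MeasurableSub₂ V] (ht : 0 ≤ t)
    (hA : MeasurableSet A) :
    kernelEnergy μ ((Metric.ball 0 ρ).indicator 1) A Aᶜ ≤
      ENNReal.ofReal (ρ ^ (finrank ℝ V + t)) * kernelEnergy μ (fracKernel t) A Aᶜ := by
  rw [← kernelEnergy_smul (measurable_fracKernel t)]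
  refine setLIntegral_mono' hA fun x hx ↦ setLIntegral_mono' hA.compl fun y hy ↦ ?_
  have hpos : 0 < ‖x - y‖ := norm_sub_pos_iff.2 fun h ↦ hy (h ▸ hx)
  refine Set.indicator_apply_le' (fun hxy ↦ ?_) fun _ ↦ zero_le
  have hlt : ‖x - y‖ < ρ := mem_ball_zero_iff.1 hxy
  have hρ := hpos.trans hlt
  rw [Pi.one_apply, Pi.smul_apply, fracKernel, smul_eq_mul, ← ENNReal.ofReal_mul (by positivity),
    ENNReal.one_le_ofReal, Real.rpow_neg hpos.le, ← div_eq_mul_inv, one_le_div (by positivity)]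
  gcongr

variable [FiniteDimensional ℝ V] [μ.IsAddHaarMeasure]

lemma measure_ball_le_add_add_ofReal_abs_sub (hA : MeasurableSet A) (x : V) :
    μ (Metric.ball 0 ρ) ≤ μ (Aᶜ ∩ Metric.ball x ρ) + μ (B ∩ Metric.ball x ρ) +
      ENNReal.ofReal |μ.real (A ∩ Metric.ball x ρ) - μ.real (B ∩ Metric.ball x ρ)| := by
  have hfin (D : Set V) : μ (D ∩ Metric.ball x ρ) ≠ ⊤ :=
    measure_ne_top_of_subset Set.inter_subset_right measure_ball_lt_top.ne
  have hle : μ (A ∩ Metric.ball x ρ) ≤ μ (B ∩ Metric.ball x ρ) +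
      ENNReal.ofReal |μ.real (A ∩ Metric.ball x ρ) - μ.real (B ∩ Metric.ball x ρ)| := by
    rw [← ofReal_measureReal (hfin A), ← ofReal_measureReal (hfin B),
      ← ENNReal.ofReal_add measureReal_nonneg (abs_nonneg _)]
    refine ENNReal.ofReal_le_ofReal ?_
    linarith [le_abs_self (μ.real (A ∩ Metric.ball x ρ) - μ.real (B ∩ Metric.ball x ρ))]
  calc μ (Metric.ball 0 ρ) = μ (Aᶜ ∩ Metric.ball x ρ) + μ (A ∩ Metric.ball x ρ) := by
        rw [← Measure.addHaar_ball_center μ x, Set.inter_comm, Set.inter_comm A, add_comm,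
          ← Set.sdiff_eq, measure_inter_add_sdiff _ hA]
    _ ≤ _ := by
        rw [add_assoc]
        gcongr

/-- On `A \ B` the densities of `Aᶜ` and `B` at scale `ρ` are controlled by the perimeters, and
they add up to `1` up to the difference of the densities of `A` and `B`. -/
lemma measure_ball_mul_measure_diff_inter_le (hA : MeasurableSet A) (K : Set V) :
    μ (Metric.ball 0 ρ) * μ ((A \ B) ∩ K) ≤
      kernelEnergy μ ((Metric.ball 0 ρ).indicator 1) A Aᶜ +
      kernelEnergy μ ((Metric.ball 0 ρ).indicator 1) B Bᶜ +
      ∫⁻ x in K, ENNReal.ofReal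
        |μ.real (A ∩ Metric.ball x ρ) - μ.real (B ∩ Metric.ball x ρ)| ∂μ := by
  have hk := measurable_indicator_ball_one (V := V) ρ
  rw [← setLIntegral_const, kernelEnergy_comm hk (even_indicator_ball_one ρ) (A := B)]
  grw [lintegral_mono fun x ↦ measure_ball_le_add_add_ofReal_abs_sub (B := B) hA x]
  simp_rw [← fun D ↦ setLIntegral_indicator_ball_one (μ := μ) ρ D]
  have hmeas (D : Set V) := measurable_setLIntegral_kernel (μ := μ) hk D
  rw [lintegral_add_left (by exact (hmeas _).add (hmeas _)), lintegral_add_left (hmeas _)]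
  unfold kernelEnergy
  gcongr
  exacts [fun x hx ↦ hx.1.1, fun x hx ↦ hx.1.2, fun x hx ↦ hx.2]

lemma tendsto_setLIntegral_abs_measureReal_inter_ball_sub (hK : μ K ≠ ⊤)
    (hlim : ∀ x, ∃ l, Tendsto (fun n ↦ μ.real (E n ∩ Metric.ball x ρ)) atTop (𝓝 l)) :
    Tendsto (fun p : ℕ × ℕ ↦ ∫⁻ x in K, ENNReal.ofReal
      |μ.real (E p.1 ∩ Metric.ball x ρ) - μ.real (E p.2 ∩ Metric.ball x ρ)| ∂μ) atTop (𝓝 0) := by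
  have hmeas (n : ℕ) : Measurable fun x ↦ μ.real (E n ∩ Metric.ball x ρ) := by
    simpa only [setLIntegral_indicator_ball_one, ← Measure.real_def] using
      (measurable_setLIntegral_kernel (measurable_indicator_ball_one ρ) (E n)).ennreal_toReal
  have hle (n : ℕ) (x : V) : μ.real (E n ∩ Metric.ball x ρ) ≤ μ.real (Metric.ball 0 ρ) := by
    rw [Measure.real, Measure.real, ← Measure.addHaar_ball_center μ x]
    exact ENNReal.toReal_mono measure_ball_lt_top.ne (measure_mono Set.inter_subset_right)
  rw [← lintegral_zero (μ := μ.restrict K)]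
  refine tendsto_lintegral_filter_of_dominated_convergence
    (fun _ ↦ ENNReal.ofReal (μ.real (Metric.ball 0 ρ)))
    (.of_forall fun p ↦ ((hmeas p.1).sub (hmeas p.2)).abs.ennreal_ofReal)
    (.of_forall fun p ↦ .of_forall fun x ↦ ENNReal.ofReal_le_ofReal ?_) ?_ (.of_forall fun x ↦ ?_)
  · exact abs_sub_le_of_nonneg_of_le measureReal_nonneg (hle p.1 x) measureReal_nonneg (hle p.2 x)
  · rw [setLIntegral_const]
    exact ENNReal.mul_ne_top ENNReal.ofReal_ne_top hK
  · obtain ⟨l, hl⟩ := hlim x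
    rw [← prod_atTop_atTop_eq]
    simpa using ENNReal.tendsto_ofReal ((hl.comp tendsto_fst).sub (hl.comp tendsto_snd)).abs

lemma measure_diff_inter_le_of_kernelEnergy_le (ht : 0 ≤ t) (hρ : 0 < ρ) (hA : MeasurableSet A)
    (hB : MeasurableSet B) {C : ℝ≥0∞} (hAC : kernelEnergy μ (fracKernel t) A Aᶜ ≤ C)
    (hBC : kernelEnergy μ (fracKernel t) B Bᶜ ≤ C) (K : Set V) :
    μ ((A \ B) ∩ K) ≤ ENNReal.ofReal (ρ ^ t) * (2 * C / μ (Metric.ball 0 1)) +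
      (∫⁻ x in K, ENNReal.ofReal
          |μ.real (A ∩ Metric.ball x ρ) - μ.real (B ∩ Metric.ball x ρ)| ∂μ) /
        μ (Metric.ball 0 ρ) := by
  have hball {r : ℝ} (hr : 0 < r) := (Metric.measure_ball_pos μ 0 hr).ne'
  have hmain := measure_ball_mul_measure_diff_inter_le (ρ := ρ) (B := B) (μ := μ) hA K
  grw [kernelEnergy_indicator_ball_one_le ht hA, kernelEnergy_indicator_ball_one_le ht hB,
    hAC, hBC, ← two_mul, mul_comm, ← ENNReal.le_div_iff_mul_le (.inl (hball hρ))
      (.inl measure_ball_lt_top.ne), ENNReal.add_div] at hmain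
  refine hmain.trans_eq (congrArg (· + _) ?_)
  rw [Measure.addHaar_ball_of_pos μ 0 hρ, Real.rpow_add hρ, Real.rpow_natCast,
    ENNReal.ofReal_mul (by positivity), mul_assoc, mul_left_comm, ENNReal.mul_div_mul_left _ _
      (ENNReal.ofReal_pos.2 (by positivity)).ne' ENNReal.ofReal_ne_top,
    mul_left_comm, mul_div_assoc]

lemma tendsto_measure_diff_inter_of_kernelEnergy_le (ht : 0 < t)
    (hE : ∀ n, MeasurableSet (E n)) {C : ℝ≥0∞} (hC : C ≠ ⊤)
    (hEC : ∀ n, kernelEnergy μ (fracKernel t) (E n) (E n)ᶜ ≤ C)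
    (hlim : ∀ x ρ, ∃ l, Tendsto (fun n ↦ μ.real (E n ∩ Metric.ball x ρ)) atTop (𝓝 l))
    (hK : μ K ≠ ⊤) :
    Tendsto (fun p : ℕ × ℕ ↦ μ ((E p.1 \ E p.2) ∩ K)) atTop (𝓝 0) := by
  refine ENNReal.tendsto_nhds_zero.2 fun ε hε ↦ ?_
  have hscale : Tendsto (fun ρ ↦ ENNReal.ofReal (ρ ^ t) * (2 * C / μ (Metric.ball 0 1)))
      (𝓝[>] 0) (𝓝 0) := by
    have hrpow := (Real.continuousAt_rpow_const 0 t (.inr ht.le)).tendsto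
    rw [Real.zero_rpow ht.ne'] at hrpow
    have := ENNReal.Tendsto.mul_const (ENNReal.tendsto_ofReal hrpow)
      (b := 2 * C / μ (Metric.ball 0 1)) (.inr (ENNReal.div_ne_top
        (ENNReal.mul_ne_top ENNReal.ofNat_ne_top hC) (Metric.measure_ball_pos μ 0 one_pos).ne'))
    rw [ENNReal.ofReal_zero, zero_mul] at this
    exact this.mono_left nhdsWithin_le_nhds
  obtain ⟨ρ, hρε, hρ⟩ := ((ENNReal.tendsto_nhds_zero.1 hscale (ε / 2) (ENNReal.half_pos hε.ne')).and
    self_mem_nhdsWithin).exists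
  have hrem := ENNReal.Tendsto.div_const
    (tendsto_setLIntegral_abs_measureReal_inter_ball_sub hK fun x ↦ hlim x ρ)
    (.inr (Metric.measure_ball_pos μ 0 hρ).ne')
  rw [ENNReal.zero_div] at hrem
  filter_upwards [ENNReal.tendsto_nhds_zero.1 hrem (ε / 2) (ENNReal.half_pos hε.ne')] with p hp
  grw [measure_diff_inter_le_of_kernelEnergy_le ht.le hρ (hE _) (hE _) (hEC _) (hEC _), hρε, hp,
    ENNReal.add_halves]

lemma tendsto_measure_symmDiff_of_kernelEnergy_le (ht : 0 < t)
    (hE : ∀ n, MeasurableSet (E n)) {C : ℝ≥0∞} (hC : C ≠ ⊤)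
    (hEC : ∀ n, kernelEnergy μ (fracKernel t) (E n) (E n)ᶜ ≤ C)
    (hlim : ∀ x ρ, ∃ l, Tendsto (fun n ↦ μ.real (E n ∩ Metric.ball x ρ)) atTop (𝓝 l))
    (htight : ∀ κ > 0, ∃ R, ∀ᶠ n in atTop, μ (E n \ Metric.ball 0 R) ≤ κ) :
    Tendsto (fun p : ℕ × ℕ ↦ μ (symmDiff (E p.1) (E p.2))) atTop (𝓝 0) := by
  have hdiff : Tendsto (fun p : ℕ × ℕ ↦ μ (E p.1 \ E p.2)) atTop (𝓝 0) := by
    refine ENNReal.tendsto_nhds_zero.2 fun ε hε ↦ ?_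
    obtain ⟨R, hR⟩ := htight (ε / 2) (ENNReal.half_pos hε.ne')
    have hfar : ∀ᶠ p : ℕ × ℕ in atTop, μ (E p.1 \ Metric.ball 0 R) ≤ ε / 2 := by
      rw [← prod_atTop_atTop_eq]
      exact tendsto_fst.eventually hR
    have hloc := tendsto_measure_diff_inter_of_kernelEnergy_le ht hE hC hEC hlim
      (measure_ball_lt_top (x := 0) (r := R)).ne
    filter_upwards [hfar, ENNReal.tendsto_nhds_zero.1 hloc (ε / 2) (ENNReal.half_pos hε.ne')]
      with p hp hnear
    grw [← measure_inter_add_sdiff (E p.1 \ E p.2) (measurableSet_ball (x := 0) (ε := R)), hnear,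
      Set.sdiff_subset (s := E p.1) (t := E p.2), hp, ENNReal.add_halves]
  have hswap : Tendsto (Prod.swap : ℕ × ℕ → ℕ × ℕ) atTop atTop := by
    rw [← prod_atTop_atTop_eq]
    exact tendsto_snd.prodMk tendsto_fst
  exact tendsto_of_tendsto_of_tendsto_of_le_of_le tendsto_const_nhds
    (by simpa using hdiff.add (hdiff.comp hswap)) (fun _ ↦ zero_le)
    fun p ↦ measure_union_le (E p.1 \ E p.2) (E p.2 \ E p.1)

lemma exists_subseq_ae_eventually_mem_iff_of_kernelEnergy_le (ht : 0 < t)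
    (hE : ∀ n, MeasurableSet (E n)) {m C : ℝ≥0∞} (hm : m ≠ ⊤) (hEm : ∀ n, μ (E n) = m)
    (hC : C ≠ ⊤) (hEC : ∀ n, kernelEnergy μ (fracKernel t) (E n) (E n)ᶜ ≤ C)
    (htight : ∀ κ > 0, ∃ R, ∀ᶠ n in atTop, μ (E n \ Metric.ball 0 R) ≤ κ) :
    ∃ φ : ℕ → ℕ, StrictMono φ ∧ ∃ F, MeasurableSet F ∧ μ F = m ∧
      ∀ᵐ x ∂μ, ∀ᶠ n in atTop, (x ∈ E (φ n) ↔ x ∈ F) := by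
  obtain ⟨φ, hφ, hlim⟩ := exists_subseq_tendsto_measureReal_inter (μ := μ) (C := m.toReal) hE
    (fun n ↦ hEm n ▸ hm) fun n ↦ (congrArg ENNReal.toReal (hEm n)).le
  have hcauchy := tendsto_measure_symmDiff_of_kernelEnergy_le ht (fun n ↦ hE (φ n)) hC
    (fun n ↦ hEC (φ n)) (fun x ρ ↦ hlim _ measurableSet_ball measure_ball_lt_top.ne) fun κ hκ ↦
      (htight κ hκ).imp fun R hR ↦ hφ.tendsto_atTop.eventually hR
  obtain ⟨ψ, hψ, F, hF, hae, hlimF⟩ := exists_subseq_ae_eventually_mem_iff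
    (fun n ↦ hE (φ n)) hcauchy
  exact ⟨φ ∘ ψ, hφ.comp hψ, F, hF,
    measure_eq_of_tendsto_measure_symmDiff (fun n ↦ hEm _) hlimF, hae⟩

end Compactness

section Existence

variable {N : ℕ} {s t m c : ℝ}

lemma exists_le_freeEnergy (N : ℕ) [NeZero N] {δ : ℝ} (hδ : 0 < δ) :
    ∃ m₀ > 0, ∃ c > 0, ∀ s t, 0 < s → t < 1 → δ ≤ t - s → ∀ m ∈ Set.Ioo 0 m₀, ∀ E,
      IsCompetitor N t m E →
        (1 - t) / 2 * (fracPer N t E).toReal ≤ freeEnergy N s t E ∧ c * m ≤ freeEnergy N s t E := by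
  obtain ⟨m₀, hm₀, c, hc, hkey⟩ := exists_mul_kernelEnergy_fracKernel_le_half
    (volume : Measure (EuclideanSpace ℝ (Fin N))) hδ
  refine ⟨m₀, hm₀, c / 2, half_pos hc, fun s t hs ht hst m ⟨hm, hmm₀⟩ E hE ↦ ?_⟩
  have hfin := hE.fracPer_lt_top
  obtain ⟨hhalf, hvol⟩ := hkey s t hs ht.le hst E hE.measurableSet
    (hE.volume_eq ▸ ENNReal.ofReal_le_ofReal hmm₀.le) (fracPer_eq_kernelEnergy t E ▸ hfin)
  rw [← fracPer_eq_kernelEnergy] at hvol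
  rw [← fracPer_eq_kernelEnergy, ← fracPer_eq_kernelEnergy] at hhalf
  have htop := ENNReal.mul_ne_top (ENNReal.ofReal_ne_top (r := 1 - t)) hfin.ne
  have hhalf' := ENNReal.toReal_mono htop hhalf
  have hvol' := ENNReal.toReal_mono htop hvol
  simp only [ENNReal.toReal_mul, ENNReal.toReal_ofNat, ENNReal.toReal_ofReal hs.le,
    ENNReal.toReal_ofReal (sub_nonneg.2 ht.le)] at hhalf'
  simp only [hE.volume_eq, ENNReal.toReal_mul, ENNReal.toReal_ofReal hc.le,
    ENNReal.toReal_ofReal hm.le, ENNReal.toReal_ofReal (sub_nonneg.2 ht.le)] at hvol'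
  unfold freeEnergy
  constructor <;> linarith

lemma exists_le_volume_preimage_add_right_inter_ball [NeZero N] (ht₀ : 0 < t) (ht₁ : t ≤ 1)
    (hm : 0 < m) (C : ℝ) :
    ∃ ρ > 0, ∀ E : Set (EuclideanSpace ℝ (Fin N)), IsCompetitor N t m E →
      fracPer N t E ≤ ENNReal.ofReal C → ∃ v,
        volume (Metric.ball (0 : EuclideanSpace ℝ (Fin N)) ρ) / 2 ≤
          volume ((· + v) ⁻¹' E ∩ Metric.ball 0 ρ) := by
  set ω := volume.real (Metric.ball (0 : EuclideanSpace ℝ (Fin N)) 1) with hω_def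
  have hω : 0 < ω :=
    ENNReal.toReal_pos (Metric.measure_ball_pos _ _ one_pos).ne' measure_ball_lt_top.ne
  obtain ⟨ρ, ⟨hρ, -⟩, hρt⟩ := exists_mem_Ioc_le_rpow_neg ht₀ (8 * ((1 - t) * |C| + 1) / (ω * m))
  refine ⟨ρ, hρ, fun E hE hEC ↦ ?_⟩
  by_contra! hvanish
  have hhalf (x : EuclideanSpace ℝ (Fin N)) :
      volume (E ∩ Metric.ball x ρ) ≤ volume (Metric.ball (0 : EuclideanSpace ℝ (Fin N)) ρ) / 2 := by
    have hpre : (· + x) ⁻¹' E ∩ Metric.ball 0 ρ = (· + x) ⁻¹' (E ∩ Metric.ball x ρ) := by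
      ext y
      simp
    rw [← measure_preimage_add_right volume x, ← hpre]
    exact (hvanish x).le
  have hle := mul_measure_le_mul_kernelEnergy_fracKernel hE.measurableSet ht₀.le ht₁ hρ
    (fracPer_eq_kernelEnergy t E ▸ hE.fracPer_lt_top.ne) hhalf
  rw [← fracPer_eq_kernelEnergy, hE.volume_eq] at hle
  grw [hEC, le_abs_self C, ← ENNReal.ofReal_mul (by positivity),
    ← ENNReal.ofReal_mul (sub_nonneg.2 ht₁),
    ENNReal.ofReal_le_ofReal_iff (mul_nonneg (sub_nonneg.2 ht₁) (abs_nonneg C)), ← hω_def, ← hρt]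
    at hle
  field_simp at hle
  linarith

variable {E : ℕ → Set (EuclideanSpace ℝ (Fin N))} {F : Set (EuclideanSpace ℝ (Fin N))}

lemma isCompetitor_of_ae_eventually_mem_iff (hE : ∀ n, IsCompetitor N t m (E n)) {C : ℝ}
    (hC : ∀ n, fracPer N t (E n) ≤ ENNReal.ofReal C) (hF : MeasurableSet F)
    (hFm : volume F = ENNReal.ofReal m)
    (hae : ∀ᵐ x, ∀ᶠ n in atTop, (x ∈ E n ↔ x ∈ F)) : IsCompetitor N t m F where
  measurableSet := hF
  volume_eq := hFm
  fracPer_lt_top := by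
    simp only [fracPer_eq_kernelEnergy] at hC ⊢
    calc kernelEnergy volume (fracKernel t) F Fᶜ
        ≤ liminf (fun n ↦ kernelEnergy volume (fracKernel t) (E n) (E n)ᶜ) atTop :=
          kernelEnergy_le_liminf (measurable_fracKernel t) hF hF.compl
            (fun n ↦ (hE n).measurableSet) (fun n ↦ (hE n).measurableSet.compl) hae
            (hae.mono fun x hx ↦ hx.mono fun n hn ↦ not_congr hn)
      _ ≤ ENNReal.ofReal C := liminf_le_of_frequently_le' (.of_forall hC)
      _ < ⊤ := ENNReal.ofReal_lt_top

lemma freeEnergy_le_of_tendsto [NeZero N] (hs : 0 < s) (hst : s < t) (ht : t < 1) (hm : 0 ≤ m)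
    (hE : ∀ n, IsCompetitor N t m (E n)) (hF : IsCompetitor N t m F)
    (hae : ∀ᵐ x, ∀ᶠ n in atTop, (x ∈ E n ↔ x ∈ F)) {e : ℝ}
    (he : Tendsto (fun n ↦ freeEnergy N s t (E n)) atTop (𝓝 e)) : freeEnergy N s t F ≤ e := by
  obtain ⟨M, hM⟩ := exists_toReal_renormFreeEnergy_eq N hs hst ht
  have htoReal {A : Set (EuclideanSpace ℝ (Fin N))} (hA : IsCompetitor N t m A) :
      (renormFreeEnergy N s t A).toReal = freeEnergy N s t A + M * m := by
    rw [(hM A hA.measurableSet hA.volume_ne_top hA.fracPer_lt_top).2, hA.volumeReal_eq hm]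
  have hrenorm {A : Set (EuclideanSpace ℝ (Fin N))} (hA : IsCompetitor N t m A) :
      renormFreeEnergy N s t A = ENNReal.ofReal (freeEnergy N s t A + M * m) := by
    rw [← htoReal hA, ENNReal.ofReal_toReal
      (hM A hA.measurableSet hA.volume_ne_top hA.fracPer_lt_top).1]
  have hlim : Tendsto (fun n ↦ renormFreeEnergy N s t (E n)) atTop
      (𝓝 (ENNReal.ofReal (e + M * m))) := by
    simp only [hrenorm (hE _)]
    exact ENNReal.tendsto_ofReal (he.add_const _)
  have hlsc : renormFreeEnergy N s t F ≤ ENNReal.ofReal (e + M * m) := by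
    rw [← hlim.liminf_eq]
    exact renormEnergy_le_liminf ((measurable_fracKernel t).const_smul _)
      ((measurable_fracKernel s).const_smul _) hF.measurableSet (fun n ↦ (hE n).measurableSet) hae
  have hnonneg {A : Set (EuclideanSpace ℝ (Fin N))} (hA : IsCompetitor N t m A) :
      0 ≤ freeEnergy N s t A + M * m := by
    rw [← htoReal hA]
    exact ENNReal.toReal_nonneg
  rw [hrenorm hF, ENNReal.ofReal_le_ofReal_iff
    (ge_of_tendsto' (he.add_const _) fun n ↦ hnonneg (hE n))] at hlsc
  linarith

lemma exists_eventually_volume_diff_ball_le [NeZero N] (hs : 0 < s) (hst : s < t) (ht : t < 1)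
    (hm : 0 < m) {e ρ : ℝ} (he₀ : 0 < e) (he : ∀ E, IsCompetitor N t m E → e ≤ freeEnergy N s t E)
    (hE : ∀ n, IsCompetitor N t m (E n))
    (hlim : Tendsto (fun n ↦ freeEnergy N s t (E n)) atTop (𝓝 e)) {c κ : ℝ≥0∞} (hc : 0 < c)
    (hEc : ∀ n, c ≤ volume (E n ∩ Metric.ball 0 ρ)) (hκ : 0 < κ) :
    ∃ R, ∀ᶠ n in atTop, volume (E n \ Metric.ball 0 R) ≤ κ := by
  obtain ⟨c', -, hc'₀, hc'⟩ := ENNReal.lt_iff_exists_real_btwn.1 hc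
  obtain ⟨κ', -, hκ'₀, hκ'⟩ := ENNReal.lt_iff_exists_real_btwn.1 hκ
  obtain ⟨R, η, hη, hR⟩ := exists_volume_diff_ball_le hs hst ht hm he₀ he
    (ENNReal.ofReal_pos.1 hc'₀) (ENNReal.ofReal_pos.1 hκ'₀) ρ
  refine ⟨R, ?_⟩
  filter_upwards [hlim.eventually_lt_const (lt_add_of_pos_right e hη)] with n hn
  exact (hR (E n) (hE n) hn (hc'.le.trans (hEc n))).trans hκ'.le

lemma exists_tendsto_freeEnergy [NeZero N] (ht₀ : 0 < t) (ht₁ : t < 1) (hm : 0 < m)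
    (hc : ∀ E, IsCompetitor N t m E → c ≤ freeEnergy N s t E) :
    ∃ e ≥ c, (∀ E, IsCompetitor N t m E → e ≤ freeEnergy N s t E) ∧
      ∃ E : ℕ → Set (EuclideanSpace ℝ (Fin N)), (∀ n, IsCompetitor N t m (E n)) ∧
        Tendsto (fun n ↦ freeEnergy N s t (E n)) atTop (𝓝 e) := by
  have hne : (freeEnergy N s t '' {E | IsCompetitor N t m E}).Nonempty :=
    Set.Nonempty.image _ (exists_isCompetitor ht₀ ht₁ hm)
  have hlb : c ∈ lowerBounds (freeEnergy N s t '' {E | IsCompetitor N t m E}) :=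
    Set.forall_mem_image.2 hc
  obtain ⟨u, -, hu, hmem⟩ := exists_seq_tendsto_sInf hne ⟨c, hlb⟩
  choose E hE hEu using hmem
  exact ⟨_, le_csInf hne hlb, fun E hE ↦ csInf_le ⟨c, hlb⟩ (Set.mem_image_of_mem _ hE), E, hE,
    by simpa only [hEu] using hu⟩

lemma exists_isMinimizer [NeZero N] (hs : 0 < s) (hst : s < t) (ht : t < 1) (hm : 0 < m)
    (hper : ∀ E, IsCompetitor N t m E → (1 - t) / 2 * (fracPer N t E).toReal ≤ freeEnergy N s t E)
    (hc₀ : 0 < c) (hc : ∀ E, IsCompetitor N t m E → c ≤ freeEnergy N s t E) :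
    ∃ F, IsMinimizer N s t m F := by
  have ht₀ := hs.trans hst
  obtain ⟨e, hce, he, E, hE, hlim⟩ := exists_tendsto_freeEnergy ht₀ ht hm hc
  obtain ⟨b, hb⟩ := hlim.bddAbove_range
  have hC (n : ℕ) : fracPer N t (E n) ≤ ENNReal.ofReal (b / ((1 - t) / 2)) := by
    rw [← ENNReal.ofReal_toReal (hE n).fracPer_lt_top.ne]
    refine ENNReal.ofReal_le_ofReal ((le_div_iff₀' (by linarith)).2 ?_)
    exact (hper _ (hE n)).trans (hb ⟨n, rfl⟩)
  obtain ⟨ρ, hρ, hcenter⟩ := exists_le_volume_preimage_add_right_inter_ball (N := N) ht₀ ht.le hm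
    (b / ((1 - t) / 2))
  choose v hv using fun n ↦ hcenter _ (hE n) (hC n)
  let E' (n : ℕ) : Set (EuclideanSpace ℝ (Fin N)) := (· + v n) ⁻¹' E n
  have hE' (n : ℕ) : IsCompetitor N t m (E' n) := (hE n).preimage_add_right (v n)
  have hlim' : Tendsto (fun n ↦ freeEnergy N s t (E' n)) atTop (𝓝 e) :=
    hlim.congr fun n ↦ (freeEnergy_preimage_add_right (hE n).measurableSet (v n)).symm
  have hC' (n : ℕ) : fracPer N t (E' n) ≤ ENNReal.ofReal (b / ((1 - t) / 2)) :=
    (fracPer_preimage_add_right t (hE n).measurableSet (v n)).trans_le (hC n)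
  have htight (κ : ℝ≥0∞) (hκ : κ > 0) :=
    exists_eventually_volume_diff_ball_le hs hst ht hm (hc₀.trans_le hce) he hE' hlim'
      (ENNReal.half_pos (Metric.measure_ball_pos volume 0 hρ).ne') hv hκ
  obtain ⟨φ, hφ, F, hF, hFm, hae⟩ := exists_subseq_ae_eventually_mem_iff_of_kernelEnergy_le ht₀
    (fun n ↦ (hE' n).measurableSet) ENNReal.ofReal_ne_top (fun n ↦ (hE' n).volume_eq)
    ENNReal.ofReal_ne_top (fun n ↦ fracPer_eq_kernelEnergy t (E' n) ▸ hC' n) htight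
  have hFcomp := isCompetitor_of_ae_eventually_mem_iff (fun n ↦ hE' (φ n)) (fun n ↦ hC' (φ n))
    hF hFm hae
  have hFe := freeEnergy_le_of_tendsto hs hst ht hm.le (fun n ↦ hE' (φ n)) hFcomp hae
    (hlim'.comp hφ.tendsto_atTop)
  exact ⟨F, hF, hFm, hFcomp.fracPer_lt_top, fun A hA hAm hAfin ↦ hFe.trans (he A ⟨hA, hAm, hAfin⟩)⟩

end Existence

theorem stmt14_general (N : ℕ) [NeZero N] (δ₀ : ℝ) (hδ : 0 < δ₀) :
    ∃ m₀ : ℝ, 0 < m₀ ∧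
      ∀ s t : ℝ, 0 < s → t < 1 → δ₀ ≤ t - s →
        ∀ m : ℝ, m ∈ Set.Ioo 0 m₀ →
          ∃ F : Set (EuclideanSpace ℝ (Fin N)), IsMinimizer N s t m F := by
  obtain ⟨m₀, hm₀, c, hc, hlower⟩ := exists_le_freeEnergy N hδ
  refine ⟨m₀, hm₀, fun s t hs ht hst m hm ↦ ?_⟩
  exact exists_isMinimizer hs (by linarith) ht hm.1
    (fun E hE ↦ (hlower s t hs ht hst m hm E hE).1) (mul_pos hc hm.1)
    fun E hE ↦ (hlower s t hs ht hst m hm E hE).2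

/-- Existence of minimizers for small volumes. -/
theorem stmt14 (N : ℕ) (hN : 2 ≤ N) (δ₀ : ℝ) (hδ : δ₀ ∈ Set.Ioo (0 : ℝ) 1) :
    ∃ m₀ : ℝ, 0 < m₀ ∧
      ∀ s t : ℝ, 0 < s → s < t → t < 1 → δ₀ ≤ t - s →
        ∀ m : ℝ, m ∈ Set.Ioo 0 m₀ →
          ∃ F : Set (EuclideanSpace ℝ (Fin N)), IsMinimizer N s t m F := by
  have : NeZero N := ⟨by omega⟩
  exact (stmt14_general N δ₀ hδ.1).imp fun _ h ↦ ⟨h.1, fun s t hs _ ↦ h.2 s t hs⟩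
end

section
/- Let N ≥ 2 and 0 < s < t < 1. There exists m̄₂ > 0 (depending on N, s, t) such that for every m > m̄₂ the ball B_m of volume m is not a local minimizer of F_{s,t} under the volume constraint: for every δ > 0 there exists a measurable set F ⊆ ℝ^N with |F| = m, P_t(F) < ∞, |F Δ B_m| < δ, and F_{s,t}(F) < F_{s,t}(B_m). -/
open MeasureTheory ENNReal

/-- The radius of the ball in `ℝ^N` of volume `m`. -/
noncomputable def ballRad (N : ℕ) (m : ℝ) : ℝ :=
  (m / (volume (Metric.ball (0 : EuclideanSpace ℝ (Fin N)) 1)).toReal) ^ ((1 : ℝ) / N)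

open Set Metric Module Filter
open scoped Pointwise Topology

/-!
Let `A` be a linear map of determinant `1` and `B` the unit ball of `ℝ^N`. Writing the fractional
perimeter through the covariogram and integrating in polar coordinates gives
`P_α(A B) = P_α(B) · ⨍ J ^ (1 + α / N)`, an average over the unit sphere, where
`J θ = ‖A θ‖ ^ (-N)` is a positive weight of average `1`. If `A` is not an isometry, Jensen's
inequality for `x ^ (1 + s / N)` shows that deforming `B` strictly increases `P_s`. Since
`C x ^ (1 + s / N) - x ^ (1 + t / N)` is convex on bounded intervals for large `C`, Jensen's
inequality also bounds the relative increase of `P_t` by `C` times that of `P_s`, uniformly for `A`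
close to the identity. As `P_α` is homogeneous of degree `N - α` and `s < t`, on balls of large
radius the gain in `P_s` beats the loss in `P_t`, however close `A` is to the identity.
-/

section RealPowers

variable {p q b : ℝ}

theorem convexOn_const_mul_rpow_sub_const_mul_rpow (hp : 1 < p) (hpq : p ≤ q) :
    ConvexOn ℝ (Icc 0 b) fun x ↦ q * (q - 1) * b ^ (q - p) * x ^ p - p * (p - 1) * x ^ q := by
  have hcont (r : ℝ) (hr : 1 < r) : Continuous fun x : ℝ ↦ x ^ r :=
    Real.continuous_rpow_const (by linarith)
  refine convexOn_of_hasDerivWithinAt2_nonneg (convex_Icc 0 b)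
    (f' := fun x ↦ q * (q - 1) * b ^ (q - p) * (p * x ^ (p - 1)) - p * (p - 1) * (q * x ^ (q - 1)))
    (f'' := fun x ↦ q * (q - 1) * b ^ (q - p) * (p * ((p - 1) * x ^ (p - 1 - 1))) -
      p * (p - 1) * (q * ((q - 1) * x ^ (q - 1 - 1)))) ?_ ?_ ?_ ?_
  · exact (((hcont p hp).const_mul _).sub ((hcont q (hp.trans_le hpq)).const_mul _)).continuousOn
  all_goals
    rw [interior_Icc]
    rintro x ⟨hx, hxb⟩
    have hderiv (r : ℝ) : HasDerivAt (fun y : ℝ ↦ y ^ r) (r * x ^ (r - 1)) x :=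
      Real.hasDerivAt_rpow_const (.inl hx.ne')
  · exact (((hderiv p).const_mul _).sub ((hderiv q).const_mul _)).hasDerivWithinAt
  · exact ((((hderiv (p - 1)).const_mul p).const_mul _).sub
      (((hderiv (q - 1)).const_mul q).const_mul _)).hasDerivWithinAt
  · have hsplit : x ^ (q - 1 - 1) = x ^ (q - p) * x ^ (p - 1 - 1) := by
      rw [← Real.rpow_add hx]; ring_nf
    have hmono : x ^ (q - p) ≤ b ^ (q - p) := Real.rpow_le_rpow hx.le hxb.le (by linarith)
    have hfactor : 0 ≤ p * (p - 1) * (q * (q - 1)) * x ^ (p - 1 - 1) := by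
      have : 0 ≤ p * (p - 1) := mul_nonneg (by linarith) (by linarith)
      have : 0 ≤ q * (q - 1) := mul_nonneg (by linarith) (by linarith)
      positivity
    simp only [hsplit]
    linarith [mul_le_mul_of_nonneg_left hmono hfactor]

theorem eventually_const_mul_rpow_lt_const_mul_rpow {a b C D : ℝ} (hab : a < b) (hD : 0 < D) :
    ∀ᶠ x : ℝ in atTop, C * x ^ a < D * x ^ b := by
  have hlim : Tendsto (fun x : ℝ ↦ x ^ (b - a)) atTop atTop :=
    tendsto_rpow_atTop (sub_pos.mpr hab)
  filter_upwards [hlim.eventually_gt_atTop (C / D), eventually_gt_atTop 0] with x hx hx0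
  calc C * x ^ a < x ^ (b - a) * D * x ^ a := by
        gcongr
        exact (div_lt_iff₀ hD).mp hx
    _ = D * x ^ b := by
        rw [mul_comm _ D, mul_assoc, ← Real.rpow_add hx0, sub_add_cancel]

end RealPowers

section Jensen

variable {X : Type*} [MeasurableSpace X] {μ : Measure X} {f : X → ℝ} {p q b : ℝ}

theorem integrable_rpow_of_ae_mem_Icc [IsFiniteMeasure μ] (hf : AEStronglyMeasurable f μ)
    (hfb : ∀ᵐ x ∂μ, f x ∈ Icc 0 b) (hp : 0 ≤ p) : Integrable (fun x ↦ f x ^ p) μ := by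
  refine .of_bound ((Real.continuous_rpow_const hp).comp_aestronglyMeasurable hf) (b ^ p) ?_
  filter_upwards [hfb] with x hx
  rw [Real.norm_of_nonneg (Real.rpow_nonneg hx.1 p)]
  exact Real.rpow_le_rpow hx.1 hx.2 hp

theorem average_rpow_sub_one_le [IsFiniteMeasure μ] [NeZero μ] (hp : 1 < p) (hpq : p ≤ q)
    (hf : AEStronglyMeasurable f μ) (hfb : ∀ᵐ x ∂μ, f x ∈ Icc 0 b) (hf1 : ⨍ x, f x ∂μ = 1) :
    p * (p - 1) * (⨍ x, f x ^ q ∂μ - 1) ≤ q * (q - 1) * b ^ (q - p) * (⨍ x, f x ^ p ∂μ - 1) := by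
  have hint {r : ℝ} (hr : 1 ≤ r) : Integrable (fun x ↦ f x ^ r) μ :=
    integrable_rpow_of_ae_mem_Icc hf hfb (zero_le_one.trans hr)
  have hpi := (hint hp.le).const_mul (q * (q - 1) * b ^ (q - p))
  have hqi := (hint (hp.le.trans hpq)).const_mul (p * (p - 1))
  have hcont : Continuous fun x : ℝ ↦ q * (q - 1) * b ^ (q - p) * x ^ p - p * (p - 1) * x ^ q :=
    ((Real.continuous_rpow_const (by linarith)).const_mul _).sub
      ((Real.continuous_rpow_const (by linarith)).const_mul _)
  have hjensen := (convexOn_const_mul_rpow_sub_const_mul_rpow hp hpq).map_average_le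
    hcont.continuousOn isClosed_Icc hfb (by simpa using hint le_rfl) (hpi.sub hqi)
  rw [hf1, average_eq, integral_sub hpi hqi, integral_const_mul, integral_const_mul] at hjensen
  simp only [Real.one_rpow, smul_eq_mul, average_eq] at hjensen ⊢
  linarith

theorem one_lt_average_rpow [IsFiniteMeasure μ] (hp : 1 < p) (hf0 : ∀ᵐ x ∂μ, 0 ≤ f x)
    (hf : Integrable f μ) (hfp : Integrable (fun x ↦ f x ^ p) μ) (hf1 : ⨍ x, f x ∂μ = 1)
    (hne : ¬ f =ᵐ[μ] fun _ ↦ 1) : 1 < ⨍ x, f x ^ p ∂μ := by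
  have hjensen := (strictConvexOn_rpow hp).ae_eq_const_or_map_average_lt
    (Real.continuous_rpow_const (by linarith)).continuousOn isClosed_Ici hf0 hf hfp
  rw [hf1, Real.one_rpow] at hjensen
  exact hjensen.resolve_left hne

end Jensen
section PolarCoordinates

variable {E : Type*} [NormedAddCommGroup E] [NormedSpace ℝ E] [FiniteDimensional ℝ E]
  [MeasurableSpace E] [BorelSpace E] (μ : Measure E) [μ.IsAddHaarMeasure]

instance neZero_toSphere [Nontrivial E] : NeZero μ.toSphere := ⟨μ.toSphere_ne_zero⟩

theorem lintegral_eq_lintegral_toSphere_volumeIoiPow [Nontrivial E] {f : E → ℝ≥0∞}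
    (hf : Measurable f) :
    ∫⁻ x, f x ∂μ = ∫⁻ θ, ∫⁻ r : Ioi (0 : ℝ), f (r.1 • θ.1) ∂Measure.volumeIoiPow (finrank ℝ E - 1)
      ∂μ.toSphere := by
  calc ∫⁻ x, f x ∂μ
      = ∫⁻ x : ({0}ᶜ : Set E), f x ∂μ.comap (↑) := by
        rw [lintegral_subtype_comap (measurableSet_singleton _).compl, restrict_compl_singleton]
    _ = ∫⁻ p : sphere (0 : E) 1 × Ioi (0 : ℝ), f (p.2.1 • p.1.1)
          ∂μ.toSphere.prod (.volumeIoiPow (finrank ℝ E - 1)) := by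
        rw [← μ.measurePreserving_homeomorphUnitSphereProd.lintegral_comp_emb
          (Homeomorph.measurableEmbedding _)]
        refine lintegral_congr fun x ↦ ?_
        rw [← homeomorphUnitSphereProd_symm_apply_coe, Homeomorph.symm_apply_apply]
    _ = _ := lintegral_prod _ (hf.comp (by fun_prop)).aemeasurable

theorem lintegral_mul_radial [Nontrivial E] {f g : E → ℝ≥0∞} (hf : Measurable f)
    (hg : Measurable g) (hf_homog : ∀ (r : ℝ) (x : E), 0 < r → f (r • x) = f x)
    (hg_radial : ∀ x y, ‖x‖ = ‖y‖ → g x = g y) :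
    ∫⁻ x, f x * g x ∂μ = (⨍⁻ θ, f θ ∂μ.toSphere) * ∫⁻ x, g x ∂μ := by
  obtain ⟨θ₀⟩ : Nonempty (sphere (0 : E) 1) :=
    (NormedSpace.sphere_nonempty.mpr zero_le_one).to_subtype
  set radialMass := ∫⁻ r : Ioi (0 : ℝ), g (r.1 • θ₀.1) ∂Measure.volumeIoiPow (finrank ℝ E - 1)
  have hg_ray (θ : sphere (0 : E) 1) (r : Ioi (0 : ℝ)) : g (r.1 • θ.1) = g (r.1 • θ₀.1) :=
    hg_radial _ _ (by simp [norm_smul])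
  have hf_ray (θ : sphere (0 : E) 1) (r : Ioi (0 : ℝ)) : f (r.1 • θ.1) = f θ := hf_homog r θ r.2
  have hfg : ∫⁻ x, f x * g x ∂μ = (∫⁻ θ : sphere (0 : E) 1, f θ ∂μ.toSphere) * radialMass := by
    rw [lintegral_eq_lintegral_toSphere_volumeIoiPow μ (f := fun x ↦ f x * g x) (hf.mul hg)]
    simp_rw [hf_ray, hg_ray]
    rw [← lintegral_mul_const _ (by fun_prop)]
    exact lintegral_congr fun θ ↦ lintegral_const_mul _ (by fun_prop)
  have hg_total : ∫⁻ x, g x ∂μ = μ.toSphere univ * radialMass := by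
    rw [lintegral_eq_lintegral_toSphere_volumeIoiPow μ hg]
    simp_rw [hg_ray]
    rw [lintegral_const, mul_comm]
  rw [hfg, hg_total, laverage_eq, ← mul_assoc,
    ENNReal.div_mul_cancel (NeZero.ne _) (measure_ne_top _ _)]

end PolarCoordinates

section SphereJacobian

variable {E : Type*} [NormedAddCommGroup E] [NormedSpace ℝ E]

/-- The weight `‖A θ‖ ^ (-n)` on the unit sphere of an `n`-dimensional space. When `|det A| = 1`, it
is the Jacobian of the radial projection `θ ↦ A θ / ‖A θ‖`. -/
noncomputable def sphereJacobian (A : E ≃L[ℝ] E) (θ : sphere (0 : E) 1) : ℝ :=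
  ‖A θ‖⁻¹ ^ finrank ℝ E

theorem norm_map_sphere_pos (A : E ≃L[ℝ] E) (θ : sphere (0 : E) 1) : 0 < ‖A θ‖ :=
  norm_pos_iff.mpr <| A.map_eq_zero_iff.not.mpr <| ne_zero_of_mem_unit_sphere θ

theorem sphereJacobian_pos (A : E ≃L[ℝ] E) (θ : sphere (0 : E) 1) : 0 < sphereJacobian A θ :=
  pow_pos (inv_pos.mpr (norm_map_sphere_pos A θ)) _

theorem continuous_sphereJacobian (A : E ≃L[ℝ] E) : Continuous (sphereJacobian A) :=
  (Continuous.inv₀ (by fun_prop) fun θ ↦ (norm_map_sphere_pos A θ).ne').pow _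

theorem sphereJacobian_le_pow {A : E ≃L[ℝ] E} {l : ℝ} (hl : 0 < l)
    (hA : ∀ x, l⁻¹ * ‖x‖ ≤ ‖A x‖) (θ : sphere (0 : E) 1) :
    sphereJacobian A θ ≤ l ^ finrank ℝ E := by
  have hθ : l⁻¹ ≤ ‖A θ‖ := by simpa using hA θ
  exact pow_le_pow_left₀ (by positivity) (inv_le_of_inv_le₀ hl hθ) _

theorem exists_sphereJacobian_ne_one [Nontrivial E] [FiniteDimensional ℝ E]
    {A : E ≃L[ℝ] E} {x : E} (hx : ‖A x‖ ≠ ‖x‖) :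
    ∃ θ, sphereJacobian A θ ≠ 1 := by
  have hx0 : x ≠ 0 := fun h ↦ by simp [h] at hx
  refine ⟨⟨‖x‖⁻¹ • x, by simp [norm_smul, hx0]⟩, ?_⟩
  have hnorm : ‖A (‖x‖⁻¹ • x)‖ = ‖A x‖ / ‖x‖ := by simp [norm_smul, div_eq_inv_mul]
  rw [sphereJacobian, hnorm, Ne, pow_eq_one_iff_of_nonneg (by positivity) finrank_pos.ne',
    inv_eq_one, div_eq_one_iff_eq (norm_ne_zero_iff.mpr hx0)]
  exact hx

theorem sphereJacobian_rpow [Nontrivial E] [FiniteDimensional ℝ E] (A : E ≃L[ℝ] E) (α : ℝ)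
    (θ : sphere (0 : E) 1) :
    sphereJacobian A θ ^ (1 + α / finrank ℝ E) = ‖A θ‖ ^ (-(finrank ℝ E + α)) := by
  have hn : (finrank ℝ E : ℝ) ≠ 0 := by exact_mod_cast finrank_pos.ne'
  rw [sphereJacobian, ← Real.rpow_natCast, ← Real.rpow_mul (by positivity),
    Real.inv_rpow (norm_nonneg _), ← Real.rpow_neg (norm_nonneg _)]
  congr 2
  field_simp

theorem lintegral_indicator_preimage_ball_ray [Nontrivial E] [FiniteDimensional ℝ E]
    (A : E ≃L[ℝ] E) (θ : sphere (0 : E) 1) :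
    ∫⁻ r : Ioi (0 : ℝ), (A ⁻¹' ball 0 1).indicator 1 (r.1 • θ.1)
      ∂Measure.volumeIoiPow (finrank ℝ E - 1) =
    ENNReal.ofReal (sphereJacobian A θ) / finrank ℝ E := by
  set ρ : Ioi (0 : ℝ) := ⟨‖A θ‖⁻¹, inv_pos.mpr (norm_map_sphere_pos A θ)⟩
  have hmem (r : Ioi (0 : ℝ)) : r.1 • θ.1 ∈ A ⁻¹' ball 0 1 ↔ r ∈ Iio ρ := by
    rw [mem_preimage, mem_ball_zero_iff, map_smul, norm_smul, Real.norm_of_nonneg (le_of_lt r.2),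
      ← lt_div_iff₀ (norm_map_sphere_pos A θ), one_div]
    rfl
  have hind (r : Ioi (0 : ℝ)) : (A ⁻¹' ball 0 1).indicator (1 : E → ℝ≥0∞) (r.1 • θ.1) =
      (Iio ρ).indicator 1 r := by
    classical simp only [indicator_apply, hmem, Pi.one_apply]
  have hdim : finrank ℝ E - 1 + 1 = finrank ℝ E := Nat.sub_add_cancel finrank_pos
  simp_rw [hind]
  rw [lintegral_indicator_one measurableSet_Iio, Measure.volumeIoiPow_apply_Iio, hdim,
    ← Nat.cast_add_one, hdim, ENNReal.ofReal_div_of_pos (by exact_mod_cast finrank_pos),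
    ENNReal.ofReal_natCast, sphereJacobian]

variable [FiniteDimensional ℝ E]
  [MeasurableSpace E] [BorelSpace E] (μ : Measure E) [μ.IsAddHaarMeasure]

theorem lintegral_sphereJacobian [Nontrivial E] (A : E ≃L[ℝ] E) :
    ∫⁻ θ, ENNReal.ofReal (sphereJacobian A θ) ∂μ.toSphere =
      ENNReal.ofReal |(LinearMap.det (A : E →ₗ[ℝ] E))⁻¹| * μ.toSphere univ := by
  have hn : (finrank ℝ E : ℝ≥0∞) ≠ 0 := by exact_mod_cast finrank_pos.ne'
  have hmeas : MeasurableSet (A ⁻¹' ball 0 1) := A.continuous.measurable measurableSet_ball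
  have hvol : μ (A ⁻¹' ball 0 1) =
      (∫⁻ θ, ENNReal.ofReal (sphereJacobian A θ) ∂μ.toSphere) / finrank ℝ E := by
    rw [← lintegral_indicator_one hmeas,
      lintegral_eq_lintegral_toSphere_volumeIoiPow μ (measurable_one.indicator hmeas)]
    simp_rw [lintegral_indicator_preimage_ball_ray, div_eq_mul_inv]
    rw [lintegral_mul_const' _ _ (ENNReal.inv_ne_top.mpr hn)]
  rw [μ.toSphere_apply_univ, mul_left_comm,
    ← μ.addHaar_preimage_linearMap (LinearEquiv.isUnit_det' A.toLinearEquiv).ne_zero]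
  exact ((ENNReal.mul_div_cancel hn (ENNReal.natCast_ne_top _)).symm.trans <|
    congrArg _ hvol.symm)

theorem integrable_sphereJacobian (A : E ≃L[ℝ] E) : Integrable (sphereJacobian A) μ.toSphere :=
  (continuous_sphereJacobian A).integrable_of_hasCompactSupport (.of_compactSpace _)

theorem integrable_sphereJacobian_rpow (A : E ≃L[ℝ] E) (p : ℝ) :
    Integrable (fun θ ↦ sphereJacobian A θ ^ p) μ.toSphere :=
  ((continuous_sphereJacobian A).rpow_const fun θ ↦
    .inl (sphereJacobian_pos A θ).ne').integrable_of_hasCompactSupport (.of_compactSpace _)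

theorem average_sphereJacobian [Nontrivial E] (A : E ≃L[ℝ] E) :
    ⨍ θ, sphereJacobian A θ ∂μ.toSphere = |(LinearMap.det (A : E →ₗ[ℝ] E))⁻¹| := by
  have hnonneg (θ : sphere (0 : E) 1) : 0 ≤ sphereJacobian A θ := (sphereJacobian_pos A θ).le
  have havg : 0 ≤ ⨍ θ, sphereJacobian A θ ∂μ.toSphere := integral_nonneg hnonneg
  rw [← ENNReal.ofReal_eq_ofReal_iff havg (abs_nonneg _),
    ofReal_average (integrable_sphereJacobian μ A) (.of_forall hnonneg),
    lintegral_sphereJacobian, ENNReal.mul_div_cancel_right (NeZero.ne _) (measure_ne_top _ _)]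

theorem laverage_norm_map_rpow [Nontrivial E] (A : E ≃L[ℝ] E) (α : ℝ) :
    ⨍⁻ θ : sphere (0 : E) 1, ENNReal.ofReal (‖A θ‖ ^ (-(finrank ℝ E + α))) ∂μ.toSphere =
      ENNReal.ofReal (⨍ θ, sphereJacobian A θ ^ (1 + α / finrank ℝ E) ∂μ.toSphere) := by
  rw [ofReal_average (integrable_sphereJacobian_rpow μ A _)
    (.of_forall fun θ ↦ Real.rpow_nonneg (sphereJacobian_pos A θ).le _), laverage_eq]
  simp_rw [sphereJacobian_rpow]

end SphereJacobian

section VolumePreserving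

variable {E : Type*} [NormedAddCommGroup E] [NormedSpace ℝ E] [FiniteDimensional ℝ E]
  [Nontrivial E] [MeasurableSpace E] [BorelSpace E] (μ : Measure E) [μ.IsAddHaarMeasure]
  {A : E ≃L[ℝ] E} {p q l : ℝ}

theorem average_sphereJacobian_eq_one (hdet : LinearMap.det (A : E →ₗ[ℝ] E) = 1) :
    ⨍ θ, sphereJacobian A θ ∂μ.toSphere = 1 := by
  simp [average_sphereJacobian, hdet]

theorem one_lt_average_sphereJacobian_rpow (hp : 1 < p)
    (hdet : LinearMap.det (A : E →ₗ[ℝ] E) = 1) (hA : ∃ x, ‖A x‖ ≠ ‖x‖) :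
    1 < ⨍ θ, sphereJacobian A θ ^ p ∂μ.toSphere := by
  refine one_lt_average_rpow hp (.of_forall fun θ ↦ (sphereJacobian_pos A θ).le)
    (integrable_sphereJacobian μ A) (integrable_sphereJacobian_rpow μ A p)
    (average_sphereJacobian_eq_one μ hdet) fun hone ↦ ?_
  obtain ⟨x, hx⟩ := hA
  obtain ⟨θ, hθ⟩ := exists_sphereJacobian_ne_one hx
  have heq := (continuous_sphereJacobian A).ae_eq_iff_eq μ.toSphere continuous_const |>.mp hone
  exact hθ (congrFun heq θ)

theorem average_sphereJacobian_rpow_sub_one_le (hp : 1 < p) (hpq : p ≤ q) (hl : 0 < l)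
    (hdet : LinearMap.det (A : E →ₗ[ℝ] E) = 1) (hA : ∀ x, l⁻¹ * ‖x‖ ≤ ‖A x‖) :
    p * (p - 1) * (⨍ θ, sphereJacobian A θ ^ q ∂μ.toSphere - 1) ≤
      q * (q - 1) * (l ^ finrank ℝ E) ^ (q - p) *
        (⨍ θ, sphereJacobian A θ ^ p ∂μ.toSphere - 1) :=
  average_rpow_sub_one_le hp hpq (continuous_sphereJacobian A).aestronglyMeasurable
    (.of_forall fun θ ↦ ⟨(sphereJacobian_pos A θ).le, sphereJacobian_le_pow hl hA θ⟩)
    (average_sphereJacobian_eq_one μ hdet)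

end VolumePreserving

section Covariogram

variable {G : Type*} [AddCommGroup G] [MeasurableSpace G]

/-- The volume of the part of `S` that does not lie in the translate `z + S`; the difference between
the volume of `S` and its covariogram `z ↦ |S ∩ (z + S)|`. -/
noncomputable def covariogramDeficit (μ : Measure G) (S : Set G) (z : G) : ℝ≥0∞ :=
  μ (S \ (z +ᵥ S))

variable (μ : Measure G) {S : Set G}

theorem covariogramDeficit_eq_lintegral [MeasurableAdd G] (hS : MeasurableSet S) (z : G) :
    covariogramDeficit μ S z = ∫⁻ x, S.indicator 1 x * Sᶜ.indicator 1 (x - z) ∂μ := by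
  rw [covariogramDeficit, ← lintegral_indicator_one (hS.diff (hS.const_vadd z))]
  refine lintegral_congr fun x ↦ ?_
  have hmem : x ∈ z +ᵥ S ↔ x - z ∈ S := by
    rw [mem_vadd_set_iff_neg_vadd_mem, vadd_eq_add, neg_add_eq_sub]
  by_cases hx : x ∈ S <;> by_cases hxz : x - z ∈ S <;> simp [indicator, hmem, hx, hxz]

theorem measurable_covariogramDeficit [MeasurableAdd G] [MeasurableSub₂ G] [SFinite μ]
    (hS : MeasurableSet S) : Measurable (covariogramDeficit μ S) := by
  simp_rw [funext (covariogramDeficit_eq_lintegral μ hS)]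
  have hS_ind : Measurable (S.indicator (1 : G → ℝ≥0∞)) := measurable_one.indicator hS
  have hSc_ind : Measurable (Sᶜ.indicator (1 : G → ℝ≥0∞)) := measurable_one.indicator hS.compl
  exact ((hS_ind.comp measurable_snd).mul
    (hSc_ind.comp (measurable_snd.sub measurable_fst))).lintegral_prod_right'

theorem lintegral_lintegral_compl_sub [MeasurableAdd₂ G] [MeasurableNeg G] [SFinite μ]
    [μ.IsAddLeftInvariant] [μ.IsNegInvariant] (hS : MeasurableSet S) {k : G → ℝ≥0∞}
    (hk : Measurable k) :
    ∫⁻ x in S, ∫⁻ y in Sᶜ, k (x - y) ∂μ ∂μ = ∫⁻ z, covariogramDeficit μ S z * k z ∂μ := by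
  have hSc_ind : Measurable (Sᶜ.indicator (1 : G → ℝ≥0∞)) := measurable_one.indicator hS.compl
  calc ∫⁻ x in S, ∫⁻ y in Sᶜ, k (x - y) ∂μ ∂μ
      = ∫⁻ x, S.indicator 1 x * ∫⁻ y, Sᶜ.indicator 1 y * k (x - y) ∂μ ∂μ := by
        simp_rw [← lintegral_indicator hS, ← lintegral_indicator hS.compl]
        classical simp [indicator_apply]
    _ = ∫⁻ x, ∫⁻ z, S.indicator 1 x * (Sᶜ.indicator 1 (x - z) * k z) ∂μ ∂μ := by
        refine lintegral_congr fun x ↦ ?_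
        rw [← lintegral_sub_left_eq_self _ x, ← lintegral_const_mul _ (by fun_prop)]
        simp_rw [_root_.sub_sub_cancel]
    _ = ∫⁻ z, ∫⁻ x, S.indicator 1 x * (Sᶜ.indicator 1 (x - z) * k z) ∂μ ∂μ :=
        lintegral_lintegral_swap (by fun_prop)
    _ = ∫⁻ z, covariogramDeficit μ S z * k z ∂μ := by
        refine lintegral_congr fun z ↦ ?_
        rw [covariogramDeficit_eq_lintegral μ hS, ← lintegral_mul_const _ (by fun_prop)]
        simp_rw [mul_assoc]

end Covariogram

section CovariogramBall

variable {E : Type*} [NormedAddCommGroup E] [MeasurableSpace E] (μ : Measure E)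

theorem covariogramDeficit_ball_zero (r : ℝ) (z : E) :
    covariogramDeficit μ (ball 0 r) z = μ (ball 0 r \ ball z r) := by
  rw [covariogramDeficit, vadd_ball, vadd_eq_add, add_zero]

theorem covariogramDeficit_ball_le_measure_ball (r : ℝ) (z : E) :
    covariogramDeficit μ (ball 0 r) z ≤ μ (ball 0 r) :=
  measure_mono sdiff_subset

variable [BorelSpace E]

theorem covariogramDeficit_ball_eq_of_norm_eq [InnerProductSpace ℝ E] [FiniteDimensional ℝ E]
    (r : ℝ) {z w : E} (hzw : ‖z‖ = ‖w‖) :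
    covariogramDeficit volume (ball 0 r) z = covariogramDeficit volume (ball 0 r) w := by
  set ρ := (ℝ ∙ (w - z))ᗮ.reflection
  have hρw : ρ w = z := Submodule.reflection_sub hzw.symm
  rw [covariogramDeficit_ball_zero, covariogramDeficit_ball_zero,
    ← ρ.measurePreserving.measure_preimage
      (measurableSet_ball.diff measurableSet_ball).nullMeasurableSet,
    preimage_sdiff, ← hρw, ← map_zero ρ, ρ.preimage_ball, ρ.preimage_ball]
  simp

theorem covariogramDeficit_unitBall_le_mul_norm [NormedSpace ℝ E] [FiniteDimensional ℝ E]
    [Nontrivial E] [μ.IsAddHaarMeasure] {z : E} (hz : ‖z‖ ≤ 1) :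
    covariogramDeficit μ (ball 0 1) z ≤ ENNReal.ofReal (finrank ℝ E * ‖z‖) * μ (ball 0 1) := by
  have hsub : ball (0 : E) (1 - ‖z‖) ⊆ ball z 1 := ball_subset_ball' (by simp)
  have hbernoulli : 1 ≤ finrank ℝ E * ‖z‖ + (1 - ‖z‖) ^ finrank ℝ E := by
    have := one_add_mul_le_pow (a := -‖z‖) (by linarith) (finrank ℝ E)
    rw [← sub_eq_add_neg] at this
    linarith
  calc covariogramDeficit μ (ball 0 1) z
      ≤ μ (ball 0 1 \ ball 0 (1 - ‖z‖)) := by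
        rw [covariogramDeficit_ball_zero]
        exact measure_mono (sdiff_subset_sdiff_right hsub)
    _ = μ (ball 0 1) - ENNReal.ofReal ((1 - ‖z‖) ^ finrank ℝ E) * μ (ball 0 1) := by
        rw [measure_sdiff (ball_subset_ball (by simp)) measurableSet_ball.nullMeasurableSet
          measure_ball_lt_top.ne, μ.addHaar_ball _ (sub_nonneg.mpr hz)]
    _ ≤ ENNReal.ofReal (finrank ℝ E * ‖z‖) * μ (ball 0 1) := by
        rw [tsub_le_iff_right, ← add_mul, ← ENNReal.ofReal_add (by positivity)
          (pow_nonneg (sub_nonneg.mpr hz) _)]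
        exact le_mul_of_one_le_left' (by simpa using hbernoulli)

end CovariogramBall

section ChangeOfVariables

variable {E : Type*} [NormedAddCommGroup E] [NormedSpace ℝ E] [FiniteDimensional ℝ E]
  [MeasurableSpace E] [BorelSpace E] (μ : Measure E) [μ.IsAddHaarMeasure]

theorem setLIntegral_image_continuousLinearEquiv (A : E ≃L[ℝ] E) {S : Set E}
    (hS : MeasurableSet S) (g : E → ℝ≥0∞) :
    ∫⁻ x in A '' S, g x ∂μ =
      ENNReal.ofReal |LinearMap.det (A : E →ₗ[ℝ] E)| * ∫⁻ x in S, g (A x) ∂μ := by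
  rw [lintegral_image_eq_lintegral_abs_det_fderiv_mul μ hS
    (fun x _ ↦ A.hasFDerivAt.hasFDerivWithinAt) A.injective.injOn,
    lintegral_const_mul' _ _ ENNReal.ofReal_ne_top]
  rfl

end ChangeOfVariables

section NormPower

theorem integrableOn_Ioi_ite_rpow {a b : ℝ} (ha : -1 < a) (hb : b < -1) :
    IntegrableOn (fun r : ℝ ↦ if r ≤ 1 then r ^ a else r ^ b) (Ioi 0) := by
  rw [← Ioc_union_Ioi_eq_Ioi zero_le_one]
  refine .union ?_ ?_
  · have hinterval := intervalIntegral.intervalIntegrable_rpow' (a := 0) (b := 1) ha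
    rw [intervalIntegrable_iff_integrableOn_Ioc_of_le zero_le_one] at hinterval
    exact hinterval.congr_fun (fun r hr ↦ (if_pos hr.2).symm) measurableSet_Ioc
  · exact (integrableOn_Ioi_rpow_of_lt hb one_pos).congr_fun
      (fun r hr ↦ (if_neg (not_le.mpr hr)).symm) measurableSet_Ioi

variable {E : Type*} [NormedAddCommGroup E] [NormedSpace ℝ E] [FiniteDimensional ℝ E]
  [Nontrivial E] [MeasurableSpace E] [BorelSpace E] (μ : Measure E) [μ.IsAddHaarMeasure]

theorem integrable_ite_norm_rpow {a b : ℝ} (ha : -finrank ℝ E < a) (hb : b < -finrank ℝ E) :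
    Integrable (fun x : E ↦ if ‖x‖ ≤ 1 then ‖x‖ ^ a else ‖x‖ ^ b) μ := by
  rw [integrable_fun_norm_addHaar μ (f := fun r ↦ if r ≤ 1 then r ^ a else r ^ b)]
  have hdim : ((finrank ℝ E - 1 : ℕ) : ℝ) = finrank ℝ E - 1 := by
    rw [Nat.cast_pred finrank_pos]
  refine (integrableOn_Ioi_ite_rpow (a := finrank ℝ E - 1 + a) (b := finrank ℝ E - 1 + b)
    (by linarith) (by linarith)).congr_fun (fun r hr ↦ ?_) measurableSet_Ioi
  simp only [smul_eq_mul, mul_ite, ← Real.rpow_natCast, hdim, ← Real.rpow_add hr]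

end NormPower

section FractionalPerimeter

variable {N : ℕ} {α : ℝ} {S : Set (EuclideanSpace ℝ (Fin N))}
  (A : EuclideanSpace ℝ (Fin N) ≃L[ℝ] EuclideanSpace ℝ (Fin N))

theorem fracPer_image_continuousLinearEquiv (hS : MeasurableSet S) :
    fracPer N α (A '' S) =
      ENNReal.ofReal |LinearMap.det (A : EuclideanSpace ℝ (Fin N) →ₗ[ℝ] _)| ^ 2 *
        ∫⁻ z, covariogramDeficit volume S z * ENNReal.ofReal (‖A z‖ ^ (-(N + α))) := by
  have hcompl : (A '' S)ᶜ = A '' Sᶜ := (image_compl_eq A.bijective).symm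
  rw [fracPer, interEnergy, hcompl, setLIntegral_image_continuousLinearEquiv _ A hS]
  simp_rw [setLIntegral_image_continuousLinearEquiv _ A hS.compl, ← map_sub]
  rw [lintegral_const_mul' _ _ ENNReal.ofReal_ne_top,
    lintegral_lintegral_compl_sub volume hS (k := fun z ↦ ENNReal.ofReal (‖A z‖ ^ (-(N + α))))
      (by fun_prop), ← mul_assoc, ← sq]

theorem fracPer_eq_lintegral_covariogramDeficit (hS : MeasurableSet S) :
    fracPer N α S =
      ∫⁻ z, covariogramDeficit volume S z * ENNReal.ofReal (‖z‖ ^ (-(N + α))) :=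
  lintegral_lintegral_compl_sub volume hS (k := fun z ↦ ENNReal.ofReal (‖z‖ ^ (-(N + α))))
    (by fun_prop)

theorem fracPer_smul {R : ℝ} (hR : 0 < R) (hS : MeasurableSet S) :
    fracPer N α (R • S) = ENNReal.ofReal (R ^ (N - α)) * fracPer N α S := by
  set A : EuclideanSpace ℝ (Fin N) ≃L[ℝ] EuclideanSpace ℝ (Fin N) :=
    ContinuousLinearEquiv.smulLeft (Units.mk0 R hR.ne')
  have hdet : LinearMap.det (A : EuclideanSpace ℝ (Fin N) →ₗ[ℝ] _) = R ^ N := by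
    have : (A : EuclideanSpace ℝ (Fin N) →ₗ[ℝ] _) = R • LinearMap.id := rfl
    simp [this, LinearMap.det_smul]
  have hkernel (z : EuclideanSpace ℝ (Fin N)) : ENNReal.ofReal (‖A z‖ ^ (-(N + α))) =
      ENNReal.ofReal (R ^ (-(N + α))) * ENNReal.ofReal (‖z‖ ^ (-(N + α))) := by
    have : ‖A z‖ = R * ‖z‖ := norm_smul_of_nonneg hR.le z
    rw [this, Real.mul_rpow hR.le (norm_nonneg z), ENNReal.ofReal_mul (by positivity)]
  have hpow : ENNReal.ofReal (R ^ N) ^ 2 * ENNReal.ofReal (R ^ (-(N + α))) =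
      ENNReal.ofReal (R ^ (N - α)) := by
    rw [← ENNReal.ofReal_pow (by positivity), ← ENNReal.ofReal_mul (by positivity),
      ← Real.rpow_natCast, ← Real.rpow_natCast, ← Real.rpow_mul hR.le, ← Real.rpow_add hR]
    congr 2
    push_cast
    ring
  calc fracPer N α (R • S) = fracPer N α (A '' S) := rfl
    _ = _ := by
      simp_rw [fracPer_image_continuousLinearEquiv A hS, hkernel,
        mul_left_comm (covariogramDeficit _ _ _)]
      rw [lintegral_const_mul' _ _ ENNReal.ofReal_ne_top, ← mul_assoc, hdet,
        abs_of_pos (by positivity), hpow, ← fracPer_eq_lintegral_covariogramDeficit hS]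

theorem fracPer_pos (hS0 : volume S ≠ 0) (hSc0 : volume Sᶜ ≠ 0) :
    0 < fracPer N α S := by
  have hkernel {x y : EuclideanSpace ℝ (Fin N)} (hx : x ∈ S) (hy : y ∈ Sᶜ) :
      0 < ENNReal.ofReal (‖x - y‖ ^ (-(N + α))) := by
    have hxy : x - y ≠ 0 := sub_ne_zero.mpr (ne_of_mem_of_not_mem hx hy)
    exact ENNReal.ofReal_pos.mpr (Real.rpow_pos_of_pos (norm_pos_iff.mpr hxy) _)
  have hinner {x : EuclideanSpace ℝ (Fin N)} (hx : x ∈ S) :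
      0 < ∫⁻ y in Sᶜ, ENNReal.ofReal (‖x - y‖ ^ (-(N + α))) := by
    rw [setLIntegral_pos_iff (by fun_prop)]
    exact hSc0.pos.trans_le (measure_mono fun y hy ↦ ⟨(hkernel hx hy).ne', hy⟩)
  rw [fracPer, interEnergy, setLIntegral_pos_iff (Measurable.lintegral_prod_right' (f := fun p :
    EuclideanSpace ℝ (Fin N) × EuclideanSpace ℝ (Fin N) ↦
      ENNReal.ofReal (‖p.1 - p.2‖ ^ (-(N + α)))) (by fun_prop))]
  exact hS0.pos.trans_le (measure_mono fun x hx ↦ ⟨(hinner hx).ne', hx⟩)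

theorem fracPer_image_unitBall [NeZero N] :
    fracPer N α (A '' ball 0 1) =
      ENNReal.ofReal |LinearMap.det (A : EuclideanSpace ℝ (Fin N) →ₗ[ℝ] _)| ^ 2 *
        ENNReal.ofReal (⨍ θ, sphereJacobian A θ ^ (1 + α / N) ∂volume.toSphere) *
          fracPer N α (ball 0 1) := by
  set distortion : EuclideanSpace ℝ (Fin N) → ℝ≥0∞ :=
    fun z ↦ ENNReal.ofReal ((‖A z‖ / ‖z‖) ^ (-(N + α)))
  set radial : EuclideanSpace ℝ (Fin N) → ℝ≥0∞ :=
    fun z ↦ covariogramDeficit volume (ball 0 1) z * ENNReal.ofReal (‖z‖ ^ (-(N + α)))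
  have hfactor (z : EuclideanSpace ℝ (Fin N)) :
      covariogramDeficit volume (ball 0 1) z * ENNReal.ofReal (‖A z‖ ^ (-(N + α))) =
        distortion z * radial z := by
    obtain rfl | hz := eq_or_ne z 0
    · simp [radial, covariogramDeficit_ball_zero]
    · have hz' : 0 < ‖z‖ := norm_pos_iff.mpr hz
      rw [mul_left_comm, ← ENNReal.ofReal_mul (by positivity),
        ← Real.mul_rpow (by positivity) hz'.le, div_mul_cancel₀ _ hz'.ne']
  have hhomog (r : ℝ) (z : EuclideanSpace ℝ (Fin N)) (hr : 0 < r) :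
      distortion (r • z) = distortion z := by
    simp only [distortion, map_smul, norm_smul, mul_div_mul_left _ _ (norm_pos_iff.mpr hr.ne').ne']
  have hradial (z w : EuclideanSpace ℝ (Fin N)) (hzw : ‖z‖ = ‖w‖) : radial z = radial w := by
    simp only [radial, covariogramDeficit_ball_eq_of_norm_eq 1 hzw, hzw]
  have hmeas : Measurable radial :=
    (measurable_covariogramDeficit volume measurableSet_ball).mul (by fun_prop)
  have haverage : ⨍⁻ θ : sphere (0 : EuclideanSpace ℝ (Fin N)) 1, distortion θ ∂volume.toSphere =
      ENNReal.ofReal (⨍ θ, sphereJacobian A θ ^ (1 + α / N) ∂volume.toSphere) := by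
    simpa [distortion] using laverage_norm_map_rpow volume A α
  rw [fracPer_image_continuousLinearEquiv A measurableSet_ball]
  simp_rw [hfactor]
  rw [lintegral_mul_radial volume (by fun_prop) hmeas hhomog hradial, haverage, ← mul_assoc,
    fracPer_eq_lintegral_covariogramDeficit measurableSet_ball]

theorem covariogramDeficit_unitBall_mul_kernel_le [NeZero N] (hα : 0 < α)
    (z : EuclideanSpace ℝ (Fin N)) :
    covariogramDeficit volume (ball 0 1) z * ENNReal.ofReal (‖z‖ ^ (-(N + α))) ≤
      N * volume (ball (0 : EuclideanSpace ℝ (Fin N)) 1) *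
        ENNReal.ofReal (if ‖z‖ ≤ 1 then ‖z‖ ^ (1 + -(N + α)) else ‖z‖ ^ (-(N + α))) := by
  have hN : (1 : ℝ) ≤ N := by exact_mod_cast NeZero.one_le
  split_ifs with hz
  · have hdeficit : covariogramDeficit volume (ball 0 1) z ≤
        N * volume (ball (0 : EuclideanSpace ℝ (Fin N)) 1) * ENNReal.ofReal ‖z‖ := by
      simpa [ENNReal.ofReal_mul, mul_right_comm]
        using covariogramDeficit_unitBall_le_mul_norm volume hz
    rw [Real.rpow_one_add' (norm_nonneg z) (by linarith), ENNReal.ofReal_mul (norm_nonneg z),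
      ← mul_assoc]
    gcongr
  · gcongr
    exact (covariogramDeficit_ball_le_measure_ball volume 1 z).trans
      (le_mul_of_one_le_left' (by exact_mod_cast hN))

theorem fracPer_unitBall_lt_top [NeZero N] (hα0 : 0 < α) (hα1 : α < 1) :
    fracPer N α (ball 0 1) < ⊤ := by
  have hmajorant := integrable_ite_norm_rpow (E := EuclideanSpace ℝ (Fin N)) volume
    (a := 1 + -(N + α)) (b := -(N + α)) (by simp; linarith) (by simp; linarith)
  rw [fracPer_eq_lintegral_covariogramDeficit measurableSet_ball]
  refine (lintegral_mono (covariogramDeficit_unitBall_mul_kernel_le hα0)).trans_lt ?_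
  have hconst : N * volume (ball (0 : EuclideanSpace ℝ (Fin N)) 1) < ⊤ :=
    ENNReal.mul_lt_top (ENNReal.natCast_lt_top N) measure_ball_lt_top
  rw [lintegral_const_mul' _ _ hconst.ne]
  exact ENNReal.mul_lt_top hconst hmajorant.lintegral_lt_top

end FractionalPerimeter

section NearIsometry

variable {E : Type*} [NormedAddCommGroup E] [NormedSpace ℝ E] {A : E ≃L[ℝ] E} {l : ℝ}

theorem symmDiff_image_ball_subset (hl : 1 ≤ l) (hlower : ∀ x, l⁻¹ * ‖x‖ ≤ ‖A x‖)
    (hupper : ∀ x, ‖A x‖ ≤ l * ‖x‖) {R : ℝ} (hR : 0 ≤ R) :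
    symmDiff (A '' ball 0 R) (ball 0 R) ⊆ ball 0 (l * R) \ ball 0 (l⁻¹ * R) := by
  have hl0 : 0 < l := one_pos.trans_le hl
  have hR_le : R ≤ l * R := le_mul_of_one_le_left hR hl
  have hle_R : l⁻¹ * R ≤ R := mul_le_of_le_one_left hR (inv_le_one_of_one_le₀ hl)
  rintro _ (⟨⟨x, hx, rfl⟩, hAx⟩ | ⟨hy, hAy⟩)
  · rw [mem_ball_zero_iff] at hx hAx
    refine ⟨?_, fun h ↦ hAx ((mem_ball_zero_iff.mp h).trans_le hle_R)⟩
    exact mem_ball_zero_iff.mpr ((hupper x).trans_lt (mul_lt_mul_of_pos_left hx hl0))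
  · obtain ⟨x, rfl⟩ := A.surjective ‹E›
    refine ⟨ball_subset_ball hR_le hy, fun h ↦ hAy ⟨x, ?_, rfl⟩⟩
    exact mem_ball_zero_iff.mpr (lt_of_mul_lt_mul_left
      ((hlower x).trans_lt (mem_ball_zero_iff.mp h)) (inv_pos.mpr hl0).le)

theorem tendsto_measure_ball_sdiff_ball [Nontrivial E] [FiniteDimensional ℝ E] [MeasurableSpace E]
    [BorelSpace E] (μ : Measure E) [μ.IsAddHaarMeasure] {R : ℝ} (hR : 0 ≤ R) :
    Tendsto (fun l ↦ μ (ball 0 (l * R) \ ball 0 (l⁻¹ * R))) (𝓝[>] 1) (𝓝 0) := by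
  set gap : ℝ → ℝ := fun l ↦ (l * R) ^ finrank ℝ E - (l⁻¹ * R) ^ finrank ℝ E
  have hgap : Tendsto gap (𝓝[>] 1) (𝓝 0) := by
    have hcont : ContinuousAt gap 1 := by fun_prop (disch := norm_num)
    simpa [gap] using hcont.tendsto.mono_left nhdsWithin_le_nhds
  have hannulus {l : ℝ} (hl : 1 < l) : μ (ball 0 (l * R) \ ball 0 (l⁻¹ * R)) =
      ENNReal.ofReal (gap l) * μ (ball 0 1) := by
    have : 0 < l := one_pos.trans hl
    have hle : l⁻¹ * R ≤ l * R := by gcongr; exact (inv_le_one_of_one_le₀ hl.le).trans hl.le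
    rw [measure_sdiff (ball_subset_ball hle) measurableSet_ball.nullMeasurableSet
      measure_ball_lt_top.ne, μ.addHaar_ball 0 (r := l * R) (by positivity),
      μ.addHaar_ball 0 (r := l⁻¹ * R) (by positivity),
      ENNReal.ofReal_sub _ (by positivity), ENNReal.sub_mul fun _ _ ↦ measure_ball_lt_top.ne]
  refine Tendsto.congr' (eventually_nhdsWithin_of_forall fun l hl ↦ (hannulus hl).symm) ?_
  simpa using ENNReal.Tendsto.mul_const (ENNReal.tendsto_ofReal hgap)
    (.inr (measure_ball_lt_top (μ := μ) (x := 0) (r := 1)).ne)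

end NearIsometry

section DiagonalStretch

variable {ι 𝕜 : Type*} [Fintype ι] [RCLike 𝕜]

theorem norm_le_norm_of_forall_norm_apply_le {x y : EuclideanSpace 𝕜 ι}
    (h : ∀ i, ‖x i‖ ≤ ‖y i‖) : ‖x‖ ≤ ‖y‖ := by
  rw [EuclideanSpace.norm_eq, EuclideanSpace.norm_eq]
  gcongr with i
  exact h i

variable {w : ι → 𝕜} {c : ℝ}

theorem toLpLin_diagonal_apply [DecidableEq ι] (x : EuclideanSpace 𝕜 ι) (i : ι) :
    Matrix.toLpLin 2 2 (Matrix.diagonal w) x i = w i * x i := by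
  simp [Matrix.toLpLin_apply, Matrix.mulVec_diagonal]

theorem norm_toLpLin_diagonal_le [DecidableEq ι] (hc : 0 ≤ c) (hw : ∀ i, ‖w i‖ ≤ c)
    (x : EuclideanSpace 𝕜 ι) :
    ‖Matrix.toLpLin 2 2 (Matrix.diagonal w) x‖ ≤ c * ‖x‖ := by
  rw [← RCLike.norm_of_nonneg (K := 𝕜) hc, ← norm_smul]
  refine norm_le_norm_of_forall_norm_apply_le fun i ↦ ?_
  rw [toLpLin_diagonal_apply, PiLp.smul_apply, norm_smul, norm_mul, RCLike.norm_of_nonneg hc]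
  gcongr
  exact hw i

theorem mul_norm_le_norm_toLpLin_diagonal [DecidableEq ι] (hc : 0 ≤ c) (hw : ∀ i, c ≤ ‖w i‖)
    (x : EuclideanSpace 𝕜 ι) : c * ‖x‖ ≤ ‖Matrix.toLpLin 2 2 (Matrix.diagonal w) x‖ := by
  rw [← RCLike.norm_of_nonneg (K := 𝕜) hc, ← norm_smul]
  refine norm_le_norm_of_forall_norm_apply_le fun i ↦ ?_
  rw [toLpLin_diagonal_apply, PiLp.smul_apply, norm_smul, norm_mul, RCLike.norm_of_nonneg hc]
  gcongr
  exact hw i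

theorem exists_det_eq_one_and_norm_bounds [Nontrivial ι] {l : ℝ} (hl : 1 < l) :
    ∃ A : EuclideanSpace ℝ ι ≃L[ℝ] EuclideanSpace ℝ ι,
      LinearMap.det (A : EuclideanSpace ℝ ι →ₗ[ℝ] EuclideanSpace ℝ ι) = 1 ∧
      (∀ x, l⁻¹ * ‖x‖ ≤ ‖A x‖) ∧ (∀ x, ‖A x‖ ≤ l * ‖x‖) ∧ ∃ x, ‖A x‖ ≠ ‖x‖ := by
  classical
  obtain ⟨i, j, hij⟩ := exists_pair_ne ι
  have hl0 : 0 < l := one_pos.trans hl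
  have hl_inv : l⁻¹ ≤ 1 := inv_le_one_of_one_le₀ hl.le
  set w : ι → ℝ := Pi.mulSingle i l * Pi.mulSingle j l⁻¹
  have hwi : w i = l := by simp [w, hij]
  have hwj : w j = l⁻¹ := by simp [w, hij.symm]
  have hwk {k : ι} (hki : k ≠ i) (hkj : k ≠ j) : w k = 1 := by simp [w, hki, hkj]
  have hw (k : ι) : l⁻¹ ≤ ‖w k‖ ∧ ‖w k‖ ≤ l := by
    obtain rfl | hki := eq_or_ne k i
    · rw [hwi, Real.norm_of_nonneg hl0.le]
      exact ⟨hl_inv.trans hl.le, le_rfl⟩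
    obtain rfl | hkj := eq_or_ne k j
    · rw [hwj, Real.norm_of_nonneg (inv_pos.mpr hl0).le]
      exact ⟨le_rfl, hl_inv.trans hl.le⟩
    · rw [hwk hki hkj, norm_one]
      exact ⟨hl_inv, hl.le⟩
  set D := Matrix.toLpLin 2 2 (Matrix.diagonal w)
  have hdet : LinearMap.det D = 1 := by
    simp [D, w, LinearMap.det_toLpLin, Finset.prod_mul_distrib, hl0.ne']
  have hDi : D (EuclideanSpace.single i 1) = EuclideanSpace.single i l := by
    ext k
    obtain rfl | hki := eq_or_ne k i <;> simp [D, toLpLin_diagonal_apply, *]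
  refine ⟨(LinearMap.equivOfDetNeZero D (by simp [hdet])).toContinuousLinearEquiv, hdet,
    mul_norm_le_norm_toLpLin_diagonal (inv_pos.mpr hl0).le fun k ↦ (hw k).1,
    norm_toLpLin_diagonal_le hl0.le fun k ↦ (hw k).2, EuclideanSpace.single i 1, ?_⟩
  change ‖D (EuclideanSpace.single i 1)‖ ≠ _
  simpa [hDi, abs_of_pos hl0] using hl.ne'

end DiagonalStretch

section BallRadius

variable {N : ℕ} {m : ℝ}

theorem toReal_volume_unitBall_pos :
    0 < (volume (ball (0 : EuclideanSpace ℝ (Fin N)) 1)).toReal :=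
  ENNReal.toReal_pos (measure_ball_pos _ _ one_pos).ne' measure_ball_lt_top.ne

theorem ballRad_pos (hm : 0 < m) : 0 < ballRad N m :=
  Real.rpow_pos_of_pos (div_pos hm toReal_volume_unitBall_pos) _

theorem volume_ball_ballRad [NeZero N] (hm : 0 < m) :
    volume (ball (0 : EuclideanSpace ℝ (Fin N)) (ballRad N m)) = ENNReal.ofReal m := by
  have hV : volume (ball (0 : EuclideanSpace ℝ (Fin N)) 1) ≠ ⊤ := measure_ball_lt_top.ne
  have hpow : ballRad N m ^ N = m / (volume (ball (0 : EuclideanSpace ℝ (Fin N)) 1)).toReal := by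
    rw [ballRad, one_div, Real.rpow_inv_natCast_pow (by positivity) (NeZero.ne N)]
  rw [Measure.addHaar_ball _ _ (ballRad_pos hm).le, finrank_euclideanSpace_fin, hpow,
    ENNReal.ofReal_div_of_pos toReal_volume_unitBall_pos, ENNReal.ofReal_toReal hV,
    ENNReal.div_mul_cancel (measure_ball_pos _ _ one_pos).ne' hV]

theorem tendsto_ballRad_atTop [NeZero N] : Tendsto (ballRad N) atTop atTop :=
  (tendsto_rpow_atTop (one_div_pos.mpr (by exact_mod_cast NeZero.pos N))).comp
    (tendsto_id.atTop_div_const toReal_volume_unitBall_pos)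

end BallRadius

section EnergyComparison

variable {N : ℕ} {s t α R l : ℝ} {A : EuclideanSpace ℝ (Fin N) ≃L[ℝ] EuclideanSpace ℝ (Fin N)}

theorem fracPer_ball (hR : 0 < R) :
    fracPer N α (ball 0 R) = ENNReal.ofReal (R ^ (N - α)) * fracPer N α (ball 0 1) := by
  rw [← smul_unitBall_of_pos hR, fracPer_smul hR measurableSet_ball]

theorem fracPer_image_ball [NeZero N] (hR : 0 < R)
    (hdet : LinearMap.det (A : EuclideanSpace ℝ (Fin N) →ₗ[ℝ] _) = 1) :
    fracPer N α (A '' ball 0 R) =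
      ENNReal.ofReal (⨍ θ, sphereJacobian A θ ^ (1 + α / N) ∂volume.toSphere) *
        fracPer N α (ball 0 R) := by
  have hmeas : MeasurableSet (A '' ball 0 1) := (A.isOpenMap _ isOpen_ball).measurableSet
  rw [← smul_unitBall_of_pos hR, image_smul_set, fracPer_smul hR hmeas,
    fracPer_smul hR measurableSet_ball, fracPer_image_unitBall, hdet, mul_left_comm]
  simp

theorem fracPer_image_ball_lt_top [NeZero N] (hα0 : 0 < α) (hα1 : α < 1) (hR : 0 < R)
    (hdet : LinearMap.det (A : EuclideanSpace ℝ (Fin N) →ₗ[ℝ] _) = 1) :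
    fracPer N α (A '' ball 0 R) < ⊤ := by
  rw [fracPer_image_ball hR hdet, fracPer_ball hR]
  exact ENNReal.mul_lt_top ENNReal.ofReal_lt_top
    (ENNReal.mul_lt_top ENNReal.ofReal_lt_top (fracPer_unitBall_lt_top hα0 hα1))

theorem freeEnergy_ball (hR : 0 < R) :
    freeEnergy N s t (ball 0 R) =
      (1 - t) * (R ^ (N - t) * (fracPer N t (ball 0 1)).toReal) -
        s * (R ^ (N - s) * (fracPer N s (ball 0 1)).toReal) := by
  rw [freeEnergy, fracPer_ball hR, fracPer_ball hR, ENNReal.toReal_mul, ENNReal.toReal_mul,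
    ENNReal.toReal_ofReal (by positivity), ENNReal.toReal_ofReal (by positivity)]

theorem freeEnergy_image_ball [NeZero N] (hR : 0 < R)
    (hdet : LinearMap.det (A : EuclideanSpace ℝ (Fin N) →ₗ[ℝ] _) = 1) :
    freeEnergy N s t (A '' ball 0 R) = freeEnergy N s t (ball 0 R) +
      ((1 - t) * (R ^ (N - t) * (fracPer N t (ball 0 1)).toReal) *
          (⨍ θ, sphereJacobian A θ ^ (1 + t / N) ∂volume.toSphere - 1) -
        s * (R ^ (N - s) * (fracPer N s (ball 0 1)).toReal) *
          (⨍ θ, sphereJacobian A θ ^ (1 + s / N) ∂volume.toSphere - 1)) := by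
  have havg (p : ℝ) : 0 ≤ ⨍ θ, sphereJacobian A θ ^ p ∂volume.toSphere :=
    integral_nonneg fun θ ↦ Real.rpow_nonneg (sphereJacobian_pos A θ).le p
  rw [freeEnergy_ball hR, freeEnergy, fracPer_image_ball hR hdet, fracPer_image_ball hR hdet,
    fracPer_ball hR, fracPer_ball hR]
  simp only [ENNReal.toReal_mul, ENNReal.toReal_ofReal (havg _),
    ENNReal.toReal_ofReal (Real.rpow_nonneg hR.le _)]
  ring

theorem toReal_fracPer_unitBall_pos [NeZero N] (hα0 : 0 < α) (hα1 : α < 1) :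
    0 < (fracPer N α (ball 0 1)).toReal := by
  have hcompl : volume (ball (0 : EuclideanSpace ℝ (Fin N)) 1)ᶜ = ⊤ := by
    rw [measure_compl measurableSet_ball measure_ball_lt_top.ne,
      measure_univ_of_isAddLeftInvariant, ENNReal.top_sub measure_ball_lt_top.ne]
  have hpos : 0 < fracPer N α (ball 0 1) :=
    fracPer_pos (measure_ball_pos _ _ one_pos).ne' (by simp [hcompl])
  exact ENNReal.toReal_pos hpos.ne' (fracPer_unitBall_lt_top hα0 hα1).ne

theorem eventually_forall_freeEnergy_image_ball_lt [NeZero N] (hs : 0 < s) (hst : s < t)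
    (ht : t < 1) (hl : 0 < l) :
    ∀ᶠ R in atTop, ∀ A : EuclideanSpace ℝ (Fin N) ≃L[ℝ] EuclideanSpace ℝ (Fin N),
      LinearMap.det (A : EuclideanSpace ℝ (Fin N) →ₗ[ℝ] _) = 1 →
      (∀ x, l⁻¹ * ‖x‖ ≤ ‖A x‖) → (∃ x, ‖A x‖ ≠ ‖x‖) →
        freeEnergy N s t (A '' ball 0 R) < freeEnergy N s t (ball 0 R) := by
  have hN : (0 : ℝ) < N := by exact_mod_cast NeZero.pos N
  have hPs : 0 < (fracPer N s (ball 0 1)).toReal := toReal_fracPer_unitBall_pos hs (hst.trans ht)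
  have hPt : 0 < (fracPer N t (ball 0 1)).toReal := toReal_fracPer_unitBall_pos (hs.trans hst) ht
  set Ps := (fracPer N s (ball 0 1)).toReal
  set Pt := (fracPer N t (ball 0 1)).toReal
  set p := 1 + s / N
  set q := 1 + t / N
  have hp : 1 < p := lt_add_of_pos_right 1 (by positivity)
  have hpq : p ≤ q := by simp only [p, q]; gcongr
  have hpp : 0 < p * (p - 1) := mul_pos (by linarith) (by linarith)
  set κ := q * (q - 1) * (l ^ finrank ℝ (EuclideanSpace ℝ (Fin N))) ^ (q - p)
  filter_upwards [eventually_const_mul_rpow_lt_const_mul_rpow (C := (1 - t) * Pt * κ)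
    (D := s * Ps * (p * (p - 1))) (sub_lt_sub_left hst (N : ℝ)) (by positivity),
    eventually_gt_atTop 0] with R hgain hR A hdet hlower hA
  have hJs := one_lt_average_sphereJacobian_rpow volume hp hdet hA
  have hJt := average_sphereJacobian_rpow_sub_one_le volume hp hpq hl hdet hlower
  rw [freeEnergy_image_ball hR hdet, add_lt_iff_neg_left, sub_neg]
  set Js := ⨍ θ, sphereJacobian A θ ^ p ∂volume.toSphere
  set Jt := ⨍ θ, sphereJacobian A θ ^ q ∂volume.toSphere
  refine lt_of_mul_lt_mul_left ?_ hpp.le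
  have : 0 < 1 - t := sub_pos.mpr ht
  calc p * (p - 1) * ((1 - t) * (R ^ (N - t) * Pt) * (Jt - 1))
      = (1 - t) * (R ^ (N - t) * Pt) * (p * (p - 1) * (Jt - 1)) := by ring
    _ ≤ (1 - t) * (R ^ (N - t) * Pt) * (κ * (Js - 1)) := by gcongr
    _ = (1 - t) * Pt * κ * R ^ (N - t) * (Js - 1) := by ring
    _ < s * Ps * (p * (p - 1)) * R ^ (N - s) * (Js - 1) := by
        have : 0 < Js - 1 := sub_pos.mpr hJs
        gcongr
    _ = p * (p - 1) * (s * (R ^ (N - s) * Ps) * (Js - 1)) := by ring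

end EnergyComparison

/-- For large volumes the ball is not a local minimizer. -/
theorem stmt16 (N : ℕ) (hN : 2 ≤ N) (s t : ℝ) (hs : 0 < s) (hst : s < t) (ht : t < 1) :
    ∃ m₂ : ℝ, 0 < m₂ ∧ ∀ m : ℝ, m₂ < m → ∀ δ : ℝ, 0 < δ →
      ∃ F : Set (EuclideanSpace ℝ (Fin N)), MeasurableSet F ∧
        volume F = ENNReal.ofReal m ∧ fracPer N t F < ⊤ ∧
        volume (symmDiff F (Metric.ball (0 : EuclideanSpace ℝ (Fin N)) (ballRad N m))) <
          ENNReal.ofReal δ ∧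
        freeEnergy N s t F <
          freeEnergy N s t (Metric.ball (0 : EuclideanSpace ℝ (Fin N)) (ballRad N m)) := by
  have : NeZero N := ⟨by lia⟩
  have : Nontrivial (Fin N) := Fin.nontrivial_iff_two_le.mpr hN
  have hlarge := (tendsto_ballRad_atTop (N := N)).eventually
    (eventually_forall_freeEnergy_image_ball_lt (N := N) hs hst ht two_pos)
  obtain ⟨m₂, hm₂, henergy⟩ := (atTop_basis_Ioi' 0).eventually_iff.mp hlarge
  refine ⟨m₂, hm₂, fun m hm δ hδ ↦ ?_⟩
  have hm0 : 0 < m := hm₂.trans hm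
  have hR : 0 < ballRad N m := ballRad_pos hm0
  have hannulus := (tendsto_measure_ball_sdiff_ball (E := EuclideanSpace ℝ (Fin N)) volume
    hR.le).eventually_lt_const (ENNReal.ofReal_pos.mpr hδ)
  obtain ⟨l, hvol, hl1, hl2⟩ := (hannulus.and (Ioo_mem_nhdsGT one_lt_two)).exists
  obtain ⟨A, hdet, hlower, hupper, hA⟩ := exists_det_eq_one_and_norm_bounds (ι := Fin N) hl1
  have hlower_two (x : EuclideanSpace ℝ (Fin N)) : 2⁻¹ * ‖x‖ ≤ ‖A x‖ :=
    (by gcongr : 2⁻¹ * ‖x‖ ≤ l⁻¹ * ‖x‖).trans (hlower x)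
  refine ⟨A '' ball 0 (ballRad N m), (A.isOpenMap _ isOpen_ball).measurableSet, ?_,
    fracPer_image_ball_lt_top (hs.trans hst) ht hR hdet,
    (measure_mono (symmDiff_image_ball_subset hl1.le hlower hupper hR.le)).trans_lt hvol,
    henergy hm A hdet hlower_two hA⟩
  rw [Measure.addHaar_image_continuousLinearEquiv, volume_ball_ballRad hm0]
  simp [hdet]
end
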